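/- arXiv:2502.04124 — 4 statements merged into one kernel-verified Lean document; each statement's English description precedes it below -/
import Mathlib

section
/- Let G be a finite group in which every element of prime power order has conjugacy class of size at most m. Then every element of G has conjugacy class of size at most m^m. -/
theorem aux_card_conj {G : Type*} [Group G] (g : G) :
    Nat.card {h : G // IsConj g h} = (Subgroup.centralizer {g}).index := by
  have h1 := MulAction.index_stabilizer (ConjAct G) g
  have h2 : Nat.card {h : G // IsConj g h} = (MulAction.orbit (ConjAct G) g).ncard := by
    rw [← Nat.card_coe_set_eq]
    apply Nat.card_congr
    apply Equiv.subtypeEquivRight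
    intro a
    rw [ConjAct.mem_orbit_conjAct, isConj_comm]
  rw [h2, ← h1, ConjAct.stabilizer_eq_centralizer]
  rfl

theorem aux_split {G : Type*} [Group G] (a b : ℕ) (hab : Nat.Coprime a b) (g : G)
    (hg : g ^ (a * b) = 1) : ∃ x y : G, x ^ a = 1 ∧ y ^ b = 1 ∧ g = x * y := by
  refine ⟨g ^ ((b : ℤ) * a.gcdB b), g ^ ((a : ℤ) * a.gcdA b), ?_, ?_, ?_⟩
  · rw [← zpow_natCast, ← zpow_mul,
      show (b : ℤ) * a.gcdB b * a = ((a * b : ℕ) : ℤ) * a.gcdB b by push_cast; ring,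
      zpow_mul, zpow_natCast, hg, one_zpow]
  · rw [← zpow_natCast, ← zpow_mul,
      show (a : ℤ) * a.gcdA b * b = ((a * b : ℕ) : ℤ) * a.gcdA b by push_cast; ring,
      zpow_mul, zpow_natCast, hg, one_zpow]
  · rw [← zpow_add]
    have := Nat.gcd_eq_gcd_ab a b
    rw [Nat.Coprime.gcd_eq_one hab] at this
    rw [add_comm, ← this]; simp

theorem aux_primePow {G : Type*} [Group G] (p n : ℕ) (hp : p.Prime) (x : G)
    (hx : x ^ (p ^ n) = 1) : x = 1 ∨ IsPrimePow (orderOf x) := by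
  obtain ⟨k, -, hk⟩ := (Nat.dvd_prime_pow hp).1 (orderOf_dvd_of_pow_eq_one hx)
  rcases Nat.eq_zero_or_pos k with rfl | h0
  · left; simpa using hk
  · right; rw [hk]; exact hp.isPrimePow.pow h0.ne'

theorem aux_induct {G : Type*} [Group G] [Finite G] (S : Subgroup G)
    (hS : ∀ y : G, IsPrimePow (orderOf y) → y ∈ S) (g : G) : g ∈ S := by
  have key : ∀ n : ℕ, n ≠ 0 → ∀ g : G, g ^ n = 1 → g ∈ S := by
    intro n
    induction n using Nat.recOnPosPrimePosCoprime with
    | prime_pow p n hp hn =>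
      intro _ g hg
      rcases aux_primePow p n hp g hg with rfl | h
      · exact S.one_mem
      · exact hS g h
    | zero => intro h; exact absurd rfl h
    | one => intro _ g hg; simp at hg; subst hg; exact S.one_mem
    | coprime a b ha hb hab iha ihb =>
      intro _ g hg
      obtain ⟨x, y, hx, hy, rfl⟩ := aux_split a b hab g hg
      exact S.mul_mem (iha (by omega) x hx) (ihb (by omega) y hy)
  exact key (orderOf g) (orderOf_pos g).ne' g (pow_orderOf_eq_one g)

theorem aux_central {G : Type*} [Group G] [Finite G] (m : ℕ)
    (h : ∀ x : G, IsPrimePow (orderOf x) → (Subgroup.centralizer {x}).index ≤ m)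
    (p n : ℕ) (hp : p.Prime) (hpm : m < p) (x : G) (hx : x ^ (p ^ n) = 1) :
    (Subgroup.centralizer {x}).index = 1 := by
  rw [Subgroup.index_eq_one, Subgroup.eq_top_iff']
  apply aux_induct
  intro y hy
  have h1 : (Subgroup.centralizer {y}).relIndex (Subgroup.zpowers x) ≤ m := by
    refine le_trans ?_ (h y hy)
    rw [← Subgroup.relIndex_top_right (Subgroup.centralizer {y})]
    apply Subgroup.relIndex_le_of_le_right le_top
    rw [Subgroup.relIndex_top_right]
    exact Subgroup.index_ne_zero_of_finite
  have h2 : (Subgroup.centralizer {y}).relIndex (Subgroup.zpowers x) ∣ p ^ n := by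
    refine (Subgroup.relIndex_dvd_card _ _).trans ?_
    rw [Nat.card_zpowers]
    exact orderOf_dvd_of_pow_eq_one hx
  obtain ⟨k, -, hk⟩ := (Nat.dvd_prime_pow hp).1 h2
  have hk0 : k = 0 := by
    by_contra h0
    have := Nat.le_self_pow h0 p
    omega
  rw [hk0, pow_zero, Subgroup.relIndex_eq_one] at hk
  have := hk (Subgroup.mem_zpowers x)
  rw [Subgroup.mem_centralizer_singleton_iff] at this ⊢
  exact this.symm

theorem aux_bound {G : Type*} [Group G] [Finite G] (m : ℕ)
    (h : ∀ x : G, IsPrimePow (orderOf x) → (Subgroup.centralizer {x}).index ≤ m) (hm : 0 < m)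
    (n : ℕ) : n ≠ 0 → ∀ g : G, g ^ n = 1 →
      (Subgroup.centralizer {g}).index ≤ m ^ (n.primeFactors.filter (· ≤ m)).card := by
  have h1 : (Subgroup.centralizer {(1 : G)}).index = 1 := by
    rw [Subgroup.index_eq_one, Subgroup.eq_top_iff']
    intro x; simp [Subgroup.mem_centralizer_singleton_iff]
  induction n using Nat.recOnPosPrimePosCoprime with
  | prime_pow p n hp hn =>
    intro _ g hg
    by_cases hpm : p ≤ m
    · rw [Nat.primeFactors_prime_pow hn.ne' hp, Finset.filter_singleton, if_pos hpm]
      rcases aux_primePow p n hp g hg with rfl | h'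
      · rw [h1]; exact Nat.one_le_pow _ _ hm
      · simpa using h g h'
    · rw [aux_central m h p n hp (by omega) g hg]
      exact Nat.one_le_pow _ _ hm
  | zero => intro h; exact absurd rfl h
  | one => intro _ g hg; simp at hg; subst hg; rw [h1]; simp
  | coprime a b ha hb hab iha ihb =>
    intro _ g hg
    obtain ⟨x, y, hx, hy, rfl⟩ := aux_split a b hab g hg
    rw [hab.primeFactors_mul, Finset.filter_union, Finset.card_union_of_disjoint
      (Finset.disjoint_filter_filter hab.disjoint_primeFactors), pow_add]
    refine le_trans ?_ (Nat.mul_le_mul (iha (by omega) x hx) (ihb (by omega) y hy))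
    refine le_trans ?_ (Subgroup.index_inf_le)
    apply Nat.le_of_dvd (Nat.pos_of_ne_zero Subgroup.index_ne_zero_of_finite)
    apply Subgroup.index_dvd_of_le
    intro z hz
    rw [Subgroup.mem_inf] at hz
    simp only [Subgroup.mem_centralizer_singleton_iff] at hz ⊢
    exact Commute.mul_right hz.1 hz.2

/-- If every element of prime power order of a finite group `G` has conjugacy class of
size at most `m`, then every element of `G` has conjugacy class of size at most `m^m`. -/
theorem classes_bounded_of_primePower_classes (G : Type*) [Group G] [Finite G]
    (m : ℕ) (hm : 0 < m)
    (h : ∀ x : G, IsPrimePow (orderOf x) → Nat.card {h : G // IsConj x h} ≤ m) :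
    ∀ g : G, Nat.card {h : G // IsConj g h} ≤ m ^ m := by
  intro g
  simp only [aux_card_conj] at h ⊢
  refine (aux_bound m h hm (orderOf g) (orderOf_pos g).ne' g (pow_orderOf_eq_one g)).trans ?_
  apply Nat.pow_le_pow_right hm
  have : (orderOf g).primeFactors.filter (· ≤ m) ⊆ Finset.Icc 1 m := by
    intro p hp
    rw [Finset.mem_filter] at hp
    exact Finset.mem_Icc.2 ⟨(Nat.prime_of_mem_primeFactors hp.1).one_le, hp.2⟩
  simpa using Finset.card_le_card this
end

section
/- Let m be a positive integer and G a finite soluble group such that |x^G| ≤ m for every x ∈ X(G). Then the second derived subgroup G'' has order bounded by a function of m only. -/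
/-- `Xset G` is the set of commutators `[x,y] = x⁻¹y⁻¹xy` such that `x` and `[x,y]`
both lie in some Sylow subgroup `P` of `G`, `y` arbitrary. -/
def Xset (G : Type*) [Group G] : Set G :=
  {z | ∃ (p : ℕ) (_ : Fact p.Prime) (P : Sylow p G) (x y : G),
    z = x⁻¹ * y⁻¹ * x * y ∧ x ∈ (P : Subgroup G) ∧ z ∈ (P : Subgroup G)}

namespace SD

open Subgroup
open scoped Pointwise commutatorElement

theorem schur_bound : ∃ f : ℕ → ℕ, ∀ (G : Type) [Group G] [Finite G] (n : ℕ),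
    Nat.card (commutatorSet G) ≤ n → Nat.card (commutator G) ≤ f n := by
  refine ⟨fun n => ∑ i ∈ Finset.range (n + 1), cardCommutatorBound i, ?_⟩
  intro G _ _ n hn
  refine (card_commutator_le_of_finite_commutatorSet G).trans ?_
  exact Finset.single_le_sum (f := fun i => cardCommutatorBound i) (fun _ _ => Nat.zero_le _)
    (Finset.mem_range.2 (Nat.lt_succ_of_le hn))

/-- Schur: bounded index of the center gives bounded derived subgroup. -/
theorem schur_center : ∃ f : ℕ → ℕ, ∀ (G : Type) [Group G] [Finite G] (n : ℕ),
    (center G).index ≤ n → Nat.card (commutator G) ≤ f n := by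
  obtain ⟨f, hf⟩ := schur_bound
  refine ⟨fun n => f (n * n), ?_⟩
  intro G _ _ n hn
  apply hf
  have key : commutatorSet G ⊆ Set.range (fun q : (G ⧸ center G) × (G ⧸ center G) =>
      ⁅q.1.out, q.2.out⁆) := by
    rintro _ ⟨a, b, rfl⟩
    refine ⟨(QuotientGroup.mk a, QuotientGroup.mk b), ?_⟩
    obtain ⟨z, hz⟩ := QuotientGroup.mk_out_eq_mul (center G) a
    obtain ⟨w, hw⟩ := QuotientGroup.mk_out_eq_mul (center G) b
    simp only [hz, hw]
    have h1 := fun g => (mem_center_iff.1 z.2 g)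
    have h2 := fun g => (mem_center_iff.1 w.2 g)
    simp only [commutatorElement_def, mul_inv_rev]
    have : a * ↑z * (b * ↑w) * ((↑z)⁻¹ * a⁻¹) * ((↑w)⁻¹ * b⁻¹) =
      a * (b * ↑z) * ↑w * ((↑z)⁻¹ * a⁻¹) * ((↑w)⁻¹ * b⁻¹) := by rw [h1 b]; group
    rw [this]
    have : a * (b * ↑z) * ↑w * ((↑z)⁻¹ * a⁻¹) * ((↑w)⁻¹ * b⁻¹) =
      a * b * (↑z * ↑w) * (z:G)⁻¹ * a⁻¹ * (w:G)⁻¹ * b⁻¹ := by group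
    rw [this, h2 z]
    have : a * b * (↑w * ↑z) * (z:G)⁻¹ * a⁻¹ * (w:G)⁻¹ * b⁻¹ =
      a * b * (↑w * a⁻¹) * (w:G)⁻¹ * b⁻¹ := by group
    rw [this, ← h2 a⁻¹]
    group
  calc Nat.card (commutatorSet G) ≤ Nat.card (Set.range (fun q : (G ⧸ center G) × (G ⧸ center G) =>
      ⁅q.1.out, q.2.out⁆)) := Nat.card_mono (Set.toFinite _) key
    _ ≤ Nat.card ((G ⧸ center G) × (G ⧸ center G)) := Finite.card_range_le _
    _ = (center G).index * (center G).index := by rw [Nat.card_prod]; rfl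
    _ ≤ n * n := Nat.mul_le_mul hn hn

/-- conjugates of `a` under `H` -/
def cs {G : Type} [Group G] (H : Subgroup G) (a : G) : Set G := (fun h => h * a * h⁻¹) '' (H : Set G)

theorem cs_ncard {G : Type} [Group G] (H : Subgroup G) (a : G) :
    (cs H a).ncard = (centralizer {a}).relIndex H := by
  have hrel : ∀ x y : H, QuotientGroup.leftRel ((centralizer {a}).subgroupOf H) x y ↔
      (x : G) * a * (x : G)⁻¹ = y * a * (y : G)⁻¹ := by
    intro x y
    rw [QuotientGroup.leftRel_apply, mem_subgroupOf, mem_centralizer_singleton_iff]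
    push_cast
    constructor
    · intro h
      have : (x : G) * ((x : G)⁻¹ * y * a) * (y : G)⁻¹ = x * (a * ((x : G)⁻¹ * y)) * (y : G)⁻¹ := by rw [h]
      simpa [mul_assoc] using this.symm
    · intro h
      have : (x : G)⁻¹ * (x * a * (x : G)⁻¹) * y = (x : G)⁻¹ * (y * a * (y : G)⁻¹) * y := by rw [h]
      simpa [mul_assoc] using this.symm
  let f : (H ⧸ (centralizer {a}).subgroupOf H) → cs H a :=
    Quotient.lift (fun x : H => ⟨(x : G) * a * (x : G)⁻¹, ⟨x, x.2, rfl⟩⟩) (by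
      intro x y h
      exact Subtype.ext ((hrel x y).1 h))
  have hf : Function.Bijective f := by
    constructor
    · intro p q
      induction p using Quotient.inductionOn
      induction q using Quotient.inductionOn
      intro h
      exact Quotient.sound ((hrel _ _).2 (congrArg Subtype.val h))
    · rintro ⟨_, ⟨x, hx, rfl⟩⟩
      exact ⟨Quotient.mk _ ⟨x, hx⟩, rfl⟩
  rw [← Nat.card_coe_set_eq, ← Nat.card_eq_of_bijective f hf]
  rfl

theorem word_lemma {G : Type} [Group G] [Finite G] (X : Set G) (hX : ∀ x ∈ X, x⁻¹ ∈ X)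
    (K : Subgroup G) (r : ℕ) (hr : K.relIndex (closure X) ≤ r) (h : G) (hh : h ∈ closure X) :
    ∃ l : List G, (∀ x ∈ l, x ∈ X) ∧ l.length ≤ r ∧ h⁻¹ * l.prod ∈ K := by
  let P : ℕ → Set (G ⧸ K) := fun j =>
    {q | ∃ l : List G, (∀ x ∈ l, x ∈ X) ∧ l.length ≤ j ∧ q = (l.prod : G ⧸ K)}
  have hmono : ∀ j, P j ⊆ P (j + 1) := by
    rintro j q ⟨l, h1, h2, h3⟩
    exact ⟨l, h1, by omega, h3⟩
  have hmono' : ∀ i j, i ≤ j → P i ⊆ P j := by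
    rintro i j hij q ⟨l, h1, h2, h3⟩
    exact ⟨l, h1, by omega, h3⟩
  have hbd : ∀ j, (P j).ncard ≤ r := by
    intro j
    let f : (closure X) ⧸ K.subgroupOf (closure X) → G ⧸ K :=
      Quotient.lift (fun x : closure X => ((x : G) : G ⧸ K)) (by
        intro x y hxy
        have := QuotientGroup.leftRel_apply.1 hxy
        exact QuotientGroup.eq.2 (by simpa [mem_subgroupOf] using this))
    have hsub : P j ⊆ Set.range f := by
      rintro q ⟨l, h1, h2, rfl⟩
      have hl : l.prod ∈ closure X := list_prod_mem fun x hx => subset_closure (h1 x hx)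
      exact ⟨Quotient.mk _ ⟨l.prod, hl⟩, rfl⟩
    refine le_trans ?_ hr
    refine (Set.ncard_le_ncard hsub (Set.toFinite _)).trans ?_
    rw [← Nat.card_coe_set_eq]
    exact Finite.card_range_le _
  have hst : ∃ j ≤ r, P j = P (j + 1) := by
    by_contra hcon
    push Not at hcon
    have : ∀ j, j ≤ r → j + 1 ≤ (P j).ncard := by
      intro j
      induction j with
      | zero =>
        intro _
        have : (P 0).Nonempty := ⟨((1 : G) : G ⧸ K), [], by simp, by simp, by simp⟩
        exact (Set.ncard_pos (Set.toFinite _)).2 this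
      | succ j ih =>
        intro hj
        have h1 := ih (by omega)
        have h2 := Set.ncard_lt_ncard ((hmono j).ssubset_of_ne (hcon j (by omega))) (Set.toFinite _)
        omega
    have h1 := this r le_rfl
    have h2 := hbd r
    omega
  obtain ⟨j, hj, hje⟩ := hst
  have hclosed : ∀ x ∈ X, ∀ g : G, (g : G ⧸ K) ∈ P j → ((x * g : G) : G ⧸ K) ∈ P j := by
    rintro x hx g ⟨l, h1, h2, h3⟩
    rw [hje]
    refine ⟨x :: l, ?_, ?_, ?_⟩
    · intro y hy
      rcases List.mem_cons.1 hy with rfl | hy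
      · exact hx
      · exact h1 y hy
    · simpa using h2
    · rw [QuotientGroup.eq] at h3 ⊢
      simpa [mul_assoc] using h3
  have hall : ∀ y ∈ closure X, ∀ g : G, (g : G ⧸ K) ∈ P j → ((y * g : G) : G ⧸ K) ∈ P j := by
    intro y hy
    induction hy using closure_induction'' with
    | mem x hx => exact hclosed x hx
    | inv_mem x hx => exact hclosed _ (hX x hx)
    | one => simp
    | mul x y _ _ ihx ihy => intro g hg; rw [mul_assoc]; exact ihx _ (ihy _ hg)
  have h1 : ((1 : G) : G ⧸ K) ∈ P j := ⟨[], by simp, by simp, by simp⟩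
  obtain ⟨l, h2, h3, h4⟩ := hall h hh 1 h1
  refine ⟨l, h2, by omega, ?_⟩
  rw [QuotientGroup.eq] at h4
  simpa using h4

theorem cs_conj {G : Type} [Group G] (a g v : G) (hv : v ∈ cs ⊤ a) : g * v * g⁻¹ ∈ cs ⊤ a := by
  obtain ⟨h, -, rfl⟩ := hv
  exact ⟨g * h, trivial, by simp [mul_assoc]⟩

/-- The BFC theorem of Neumann. -/
theorem bfc : ∃ f : ℕ → ℕ, ∀ (G : Type) [Group G] [Finite G] (n : ℕ),
    (∀ a : G, (cs ⊤ a).ncard ≤ n) → Nat.card (commutator G) ≤ f n := by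
  obtain ⟨f, hf⟩ := schur_bound
  refine ⟨fun n => f ((n * n) * (n ^ n * n)), ?_⟩
  intro G _ _ n hn
  apply hf
  obtain ⟨a, ha⟩ := Finite.exists_max (fun a : G => (cs ⊤ a).ncard)
  have hidx : ∀ b : G, (centralizer {b}).index ≤ n := by
    intro b
    have := hn b
    rwa [cs_ncard, relIndex_top_right] at this
  have hβ : ∀ v : cs ⊤ a, ∃ b : G, b * a * b⁻¹ = v := by
    rintro ⟨_, ⟨b, -, rfl⟩⟩
    exact ⟨b, rfl⟩
  choose β hβ using hβ
  have : Fintype (cs ⊤ a) := Fintype.ofFinite _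
  let U : Subgroup G := ⨅ v, centralizer {β v}
  have hn1 : 1 ≤ n := by
    refine le_trans ?_ (hn 1)
    exact (Set.ncard_pos (Set.toFinite _)).2 ⟨_, 1, trivial, rfl⟩
  have hU : U.index ≤ n ^ n := by
    refine (index_iInf_le _).trans ?_
    refine (Finset.prod_le_pow_card _ _ n fun v _ => hidx _).trans ?_
    refine Nat.pow_le_pow_right hn1 ?_
    rw [Finset.card_univ, ← Nat.card_eq_fintype_card, Nat.card_coe_set_eq]
    exact hn a
  have hUc : ∀ u ∈ U, ∀ v, β v * u = u * β v := by
    intro u hu v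
    exact (mem_centralizer_singleton_iff.1 ((mem_iInf.1 hu) v)).symm
  let S : Set G := cs ⊤ a * (cs ⊤ a)⁻¹
  have hS : ∀ u ∈ U, ∀ h : G, ⁅u, h⁆ ∈ S := by
    intro u hu h
    have hu' := inv_mem hu
    have hsub : (fun v => u⁻¹ * v) '' (cs ⊤ a) ⊆ cs ⊤ (u⁻¹ * a) := by
      rintro _ ⟨v, hv, rfl⟩
      refine ⟨β ⟨v, hv⟩, trivial, ?_⟩
      have h1 := hβ ⟨v, hv⟩
      have h2 := hUc _ hu' ⟨v, hv⟩
      simp only at h1 ⊢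
      rw [← mul_assoc, h2, mul_assoc, mul_assoc, ← mul_assoc _ a, h1]
    have heq := Set.eq_of_subset_of_ncard_le hsub (by
      rw [Set.ncard_image_of_injective _ (mul_right_injective _)]
      exact ha _) (Set.toFinite _)
    have hmem : h * (u⁻¹ * a) * h⁻¹ ∈ cs ⊤ (u⁻¹ * a) := ⟨h, trivial, rfl⟩
    rw [← heq] at hmem
    obtain ⟨v, hv, hv2⟩ := hmem
    refine ⟨v, hv, (h * a * h⁻¹)⁻¹, Set.inv_mem_inv.2 ⟨h, trivial, rfl⟩, ?_⟩
    simp only at hv2 ⊢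
    have : v = u * (h * (u⁻¹ * a) * h⁻¹) := by rw [← hv2]; group
    rw [this, commutatorElement_def]
    group
  have hSc : ∀ s ∈ S, ∀ g : G, g * s * g⁻¹ ∈ S := by
    rintro _ ⟨v, hv, w, hw, rfl⟩ g
    refine ⟨g * v * g⁻¹, cs_conj _ _ _ hv, g * w * g⁻¹, ?_, by simp⟩
    have := cs_conj _ g _ (Set.mem_inv.1 hw)
    rw [Set.mem_inv]
    simpa [mul_assoc] using this
  have : Fintype (G ⧸ U) := Fintype.ofFinite _
  let T : Set G := ⋃ q ∈ (Finset.univ : Finset (G ⧸ U)), (fun v => q.out * v) '' cs ⊤ (q.out)⁻¹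
  have hT : T.ncard ≤ n ^ n * n := by
    refine (Finset.set_ncard_biUnion_le _ _).trans ?_
    refine (Finset.sum_le_card_nsmul _ _ n ?_).trans ?_
    · intro q _
      exact (Set.ncard_image_le (Set.toFinite _)).trans (hn _)
    · rw [smul_eq_mul, Finset.card_univ, ← Nat.card_eq_fintype_card]
      exact Nat.mul_le_mul_right _ hU
  have hsub : commutatorSet G ⊆ S * T := by
    rintro _ ⟨g, h, rfl⟩
    obtain ⟨u, hu⟩ := QuotientGroup.mk_out_eq_mul U g
    set t := (QuotientGroup.mk g : G ⧸ U).out with ht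
    have hg : g = t * (u : G)⁻¹ := by rw [hu]; group
    refine ⟨t * ⁅(u : G)⁻¹, h⁆ * t⁻¹, hSc _ (hS _ (inv_mem u.2) h) t, t * (h * t⁻¹ * h⁻¹), ?_, ?_⟩
    · refine Set.mem_biUnion (Finset.mem_coe.2 (Finset.mem_univ (QuotientGroup.mk g : G ⧸ U))) ?_
      exact ⟨_, ⟨h, trivial, rfl⟩, rfl⟩
    · rw [hg]
      simp only [commutatorElement_def]
      group
  refine (Nat.card_mono (Set.toFinite _) hsub).trans ?_
  refine Set.natCard_mul_le.trans ?_
  refine Nat.mul_le_mul (Set.natCard_mul_le.trans ?_) ?_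
  · rw [Set.natCard_inv, Nat.card_coe_set_eq]
    exact Nat.mul_le_mul (hn a) (hn a)
  · rw [Nat.card_coe_set_eq]; exact hT


section width
open scoped IsMulCommutative

theorem commutator_abelian_width {Q : Type} [Group Q] [Finite Q] (A : Subgroup Q) [A.Normal]
    [IsMulCommutative A] (x : Q) (hx : x ∈ ⁅A, (⊤ : Subgroup Q)⁆) :
    ∃ l : List Q, (∀ y ∈ l, y ∈ commutatorSet Q) ∧ l.length ≤ A.index ∧ l.prod = x := by
  have : Fintype (Q ⧸ A) := Fintype.ofFinite _
  let φ : Q → (A →* A) := fun t => MonoidHom.id A / (MulAut.conjNormal t).toMonoidHom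
  have hφ : ∀ t (a : A), ((φ t a : A) : Q) = ⁅(a : Q), t⁆ := by
    intro t a
    simp [φ, div_eq_mul_inv, commutatorElement_def, mul_assoc]
  let Ψ : ((Q ⧸ A) → A) →* A := ∏ q : Q ⧸ A, (φ q.out).comp (Pi.evalMonoidHom (fun _ => A) q)
  have hΨ : ∀ f, Ψ f = ∏ q : Q ⧸ A, φ q.out (f q) := by
    intro f
    simp [Ψ]
  have hle : ⁅A, (⊤ : Subgroup Q)⁆ ≤ Ψ.range.map A.subtype := by
    rw [commutator_le]
    rintro a ha g -
    classical
    obtain ⟨u, hu⟩ := QuotientGroup.mk_out_eq_mul A g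
    refine ⟨φ (QuotientGroup.mk g : Q ⧸ A).out ⟨a, ha⟩,
      ⟨Pi.mulSingle (QuotientGroup.mk g : Q ⧸ A) ⟨a, ha⟩, ?_⟩, ?_⟩
    · rw [hΨ, Finset.prod_eq_single (QuotientGroup.mk g : Q ⧸ A)]
      · simp
      · intro b _ hb
        rw [Pi.mulSingle_eq_of_ne hb, map_one]
      · simp
    · rw [coe_subtype, hφ, hu]
      have hcomm : (u : Q) * a⁻¹ = a⁻¹ * u := by
        have := mul_comm u (⟨a⁻¹, inv_mem ha⟩ : A)
        exact congrArg Subtype.val this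
      simp only [commutatorElement_def]
      calc a * (g * ↑u) * a⁻¹ * (g * ↑u)⁻¹ = a * g * (↑u * a⁻¹) * (u : Q)⁻¹ * g⁻¹ := by group
        _ = _ := by rw [hcomm]; group
  obtain ⟨_, ⟨f, rfl⟩, rfl⟩ := hle hx
  refine ⟨((Finset.univ : Finset (Q ⧸ A)).toList.map fun q => ((φ q.out (f q) : A) : Q)), ?_, ?_, ?_⟩
  · intro y hy
    obtain ⟨q, -, rfl⟩ := List.mem_map.1 hy
    rw [hφ]
    exact ⟨_, _, rfl⟩
  · rw [List.length_map, Finset.length_toList, Finset.card_univ, ← Nat.card_eq_fintype_card]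
    rfl
  · rw [hΨ, coe_subtype, ← Finset.prod_map_toList, ← coe_subtype, map_list_prod, List.map_map]
    rfl

end width

theorem commutatorSet_inv {G : Type} [Group G] (x : G) (hx : x ∈ commutatorSet G) :
    x⁻¹ ∈ commutatorSet G := by
  obtain ⟨a, b, rfl⟩ := hx
  exact ⟨b, a, by simp⟩

theorem width : ∃ f : ℕ → ℕ, ∀ (Q : Type) [Group Q] [Finite Q] (A : Subgroup Q) [A.Normal]
    [IsMulCommutative A] (s : ℕ), A.index ≤ s → ∀ x ∈ commutator Q,
    ∃ l : List Q, (∀ y ∈ l, y ∈ commutatorSet Q) ∧ l.length ≤ f s ∧ l.prod = x := by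
  obtain ⟨f, hf⟩ := schur_center
  refine ⟨fun s => f s + s, ?_⟩
  intro Q _ _ A _ _ s hs x hx
  let K : Subgroup Q := ⁅A, (⊤ : Subgroup Q)⁆
  have hcen : A ≤ (center (Q ⧸ K)).comap (QuotientGroup.mk' K) := by
    intro a ha
    rw [mem_comap, mem_center_iff]
    intro g
    induction g using QuotientGroup.induction_on with
    | H g =>
      rw [QuotientGroup.mk'_apply, ← QuotientGroup.mk_mul, ← QuotientGroup.mk_mul, QuotientGroup.eq]
      have : ⁅a⁻¹, g⁻¹⁆ ∈ K := commutator_mem_commutator (inv_mem ha) trivial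
      simpa [commutatorElement_def, mul_assoc] using this
  have h1 : (center (Q ⧸ K)).index ≤ s := by
    rw [← index_comap_of_surjective _ (QuotientGroup.mk'_surjective K)]
    refine le_trans (Nat.le_of_dvd ?_ (index_dvd_of_le hcen)) hs
    exact Nat.pos_of_ne_zero index_ne_zero_of_finite
  have h2 := hf (Q ⧸ K) s h1
  have h3 : K.relIndex (closure (commutatorSet Q)) ≤ f s := by
    rw [← commutator_eq_closure]
    have h4 : K.relIndex (commutator Q) = Nat.card ((commutator Q).map (QuotientGroup.mk' K)) := by
      rw [← relIndex_ker, QuotientGroup.ker_mk']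
    rw [h4]
    refine le_trans ?_ h2
    have : (commutator Q).map (QuotientGroup.mk' K) ≤ commutator (Q ⧸ K) := by
      rw [commutator_def, commutator_def, map_commutator]
      exact commutator_mono le_top le_top
    exact card_le_of_le this
  rw [commutator_eq_closure] at hx
  obtain ⟨l, hl1, hl2, hl3⟩ := word_lemma _ commutatorSet_inv K _ h3 x hx
  obtain ⟨l', hl1', hl2', hl3'⟩ := commutator_abelian_width A _ (inv_mem hl3)
  refine ⟨l ++ l', ?_, ?_, ?_⟩
  · intro y hy
    rcases List.mem_append.1 hy with h | h
    · exact hl1 y h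
    · exact hl1' y h
  · rw [List.length_append]; change _ ≤ f s + s; omega
  · rw [List.prod_append, hl3']; group


/-- `a` is, up to the centralizer of the derived subgroup, an element of the derived subgroup
with at most `n` conjugates. -/
def Good {G : Type} [Group G] (n : ℕ) (a : G) : Prop :=
  ∃ w ∈ commutator G, ∃ c ∈ centralizer (commutator G : Set G),
    a = w * c ∧ (centralizer {w}).index ≤ n

section good
set_option linter.unusedSectionVars false
variable {G : Type} [Group G] [Finite G]

theorem good_of_centralizer {c : G} (hc : c ∈ centralizer (commutator G : Set G)) : Good 1 c := by
  refine ⟨1, one_mem _, c, hc, by simp, ?_⟩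
  have : centralizer {(1 : G)} = ⊤ := by
    rw [eq_top_iff]; intro x _; rw [mem_centralizer_singleton_iff]; simp
  rw [this, index_top]

theorem index_le_of_le {H K : Subgroup G} (h : H ≤ K) : K.index ≤ H.index :=
  Nat.le_of_dvd (Nat.pos_of_ne_zero index_ne_zero_of_finite) (index_dvd_of_le h)

theorem good_mul {n k : ℕ} {a b : G} (ha : Good n a) (hb : Good k b) : Good (n * k) (a * b) := by
  obtain ⟨w, hw, c, hc, rfl, hi⟩ := ha
  obtain ⟨w', hw', c', hc', rfl, hi'⟩ := hb
  refine ⟨w * w', mul_mem hw hw', c * c', mul_mem hc hc', ?_, ?_⟩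
  · have := mem_centralizer_iff.1 hc w' hw'
    calc w * c * (w' * c') = w * (c * w') * c' := by group
      _ = _ := by rw [← this]; group
  · refine le_trans ?_ (Nat.mul_le_mul hi hi')
    refine le_trans (index_le_of_le ?_) index_inf_le
    rintro x ⟨h1, h2⟩
    have h1 := mem_centralizer_singleton_iff.1 h1
    have h2 := mem_centralizer_singleton_iff.1 h2
    rw [mem_centralizer_singleton_iff, ← mul_assoc, h1, mul_assoc, h2, mul_assoc]

theorem good_mono {n k : ℕ} {a : G} (h : n ≤ k) (ha : Good n a) : Good k a := by
  obtain ⟨w, hw, c, hc, rfl, hi⟩ := ha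
  exact ⟨w, hw, c, hc, rfl, hi.trans h⟩

theorem index_centralizer_conj (g w : G) :
    (centralizer {g * w * g⁻¹}).index = (centralizer {w}).index := by
  have h : ∀ x, (centralizer {x} : Subgroup G).index = (cs ⊤ x).ncard := by
    intro x; rw [cs_ncard, relIndex_top_right]
  rw [h, h]
  congr 1
  ext z
  constructor
  · rintro ⟨k, -, rfl⟩
    exact ⟨k * g, trivial, by simp [mul_assoc]⟩
  · rintro ⟨k, -, rfl⟩
    exact ⟨k * g⁻¹, trivial, by simp [mul_assoc]⟩

theorem good_conj {n : ℕ} {a : G} (g : G) (ha : Good n a) : Good n (g * a * g⁻¹) := by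
  obtain ⟨w, hw, c, hc, rfl, hi⟩ := ha
  refine ⟨g * w * g⁻¹, Normal.conj_mem inferInstance _ hw g, g * c * g⁻¹,
    Normal.conj_mem inferInstance _ hc g, by group, ?_⟩
  rwa [index_centralizer_conj]

theorem good_inv {n : ℕ} {a : G} (ha : Good n a) : Good n a⁻¹ := by
  obtain ⟨w, hw, c, hc, rfl, hi⟩ := ha
  refine ⟨w⁻¹, inv_mem hw, c⁻¹, inv_mem hc, ?_, ?_⟩
  · have := mem_centralizer_iff.1 hc w hw
    rw [this]; group
  · refine le_trans (index_le_of_le ?_) hi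
    intro x hx
    have := mem_centralizer_singleton_iff.1 hx
    rw [mem_centralizer_singleton_iff]
    calc x * w⁻¹ = w⁻¹ * (w * x) * w⁻¹ := by group
      _ = _ := by rw [← this]; group

theorem good_list {n : ℕ} (l : List G) (hl : ∀ x ∈ l, Good n x) : Good (n ^ l.length) l.prod := by
  induction l with
  | nil => simpa using good_of_centralizer (one_mem _)
  | cons a l ih =>
    rw [List.prod_cons, List.length_cons, pow_succ, mul_comm]
    exact good_mul (hl a (by simp)) (ih fun x hx => hl x (by simp [hx]))

theorem good_pos {n : ℕ} {a : G} (ha : Good n a) : 1 ≤ n := by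
  obtain ⟨w, hw, c, hc, rfl, hi⟩ := ha
  exact le_trans (Nat.pos_of_ne_zero index_ne_zero_of_finite) hi

theorem good_relIndex {n : ℕ} {a : G} (ha : Good n a) :
    (centralizer {a}).relIndex (commutator G) ≤ n := by
  obtain ⟨w, hw, c, hc, rfl, hi⟩ := ha
  have h1 : (centralizer {w}).relIndex (commutator G) ≤ (centralizer {w}).index := by
    rw [← relIndex_top_right]
    exact relIndex_le_of_le_right le_top index_ne_zero_of_finite
  have h2 : (centralizer {w * c}).relIndex (commutator G) ≤
      (centralizer {w} ⊓ commutator G).relIndex (commutator G) := by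
    refine relIndex_le_of_le_left ?_ ?_
    · rintro x ⟨hx, hx'⟩
      have h1 := mem_centralizer_singleton_iff.1 hx
      have h2 := mem_centralizer_iff.1 hc x hx'
      rw [mem_centralizer_singleton_iff, ← mul_assoc, h1, mul_assoc, h2, mul_assoc]
    · exact index_ne_zero_of_finite
  rw [inf_relIndex_right] at h2
  omega

end good


theorem index_normalCore_le {G : Type} [Group G] [Finite G] (D : Subgroup G) :
    D.normalCore.index ≤ (D.index).factorial := by
  rw [normalCore_eq_ker, index_ker]
  refine (Finite.card_subtype_le _).trans ?_
  rw [Nat.card_perm]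
  rfl

theorem mem_relCentralizer {G : Type} [Group G] (H R : Subgroup G) [R.Normal] (z : G) :
    z ∈ (centralizer ((H.map (QuotientGroup.mk' R) : Subgroup (G ⧸ R)) : Set (G ⧸ R))).comap
      (QuotientGroup.mk' R) ↔ ∀ h ∈ H, ⁅h, z⁆ ∈ R := by
  rw [mem_comap, mem_centralizer_iff]
  have key : ∀ h : G, (QuotientGroup.mk' R h * QuotientGroup.mk' R z =
      QuotientGroup.mk' R z * QuotientGroup.mk' R h) ↔ ⁅h, z⁆ ∈ R := by
    intro h
    rw [← commutatorElement_eq_one_iff_mul_comm, ← map_commutatorElement, QuotientGroup.mk'_apply, QuotientGroup.eq_one_iff]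
  constructor
  · intro hz h hh
    exact (key h).1 (hz _ ⟨h, hh, rfl⟩)
  · rintro hz _ ⟨h, hh, rfl⟩
    exact (key h).2 (hz h hh)

theorem structure_step : ∃ F1 F2 : ℕ → ℕ, ∀ (G : Type) [Group G] [Finite G] (n : ℕ),
    (∀ a b : G, Good n ⁅a, b⁆) → ∃ (M R : Subgroup G) (_ : M.Normal) (_ : R.Normal),
      M.index ≤ F1 n ∧ Nat.card R ≤ F2 n ∧
      ∀ h ∈ commutator G, ∀ z ∈ ⁅M, M⁆, ⁅h, z⁆ ∈ R := by
  obtain ⟨f, hf⟩ := schur_center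
  refine ⟨fun n => (n * (n ^ n) ^ n).factorial, fun n => f ((n * (n ^ n) ^ n).factorial), ?_⟩
  intro G _ _ n hgood
  have hn1 : 1 ≤ n := good_pos (hgood 1 1)
  obtain ⟨⟨d, e⟩, hmax⟩ := Finite.exists_max
    (fun p : G × G => (cs (commutator G) ⁅p.1, p.2⁆).ncard)
  simp only [Prod.forall] at hmax
  have hyH : ⁅d, e⁆ ∈ commutator G := commutator_mem_commutator trivial trivial
  have hr : (cs (commutator G) ⁅d, e⁆).ncard ≤ n := by
    rw [cs_ncard]; exact good_relIndex (hgood d e)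
  obtain ⟨w, hw, c, hc, hyc, hwi⟩ := hgood d e
  set y := ⁅d, e⁆ with hy
  have hcH : ∀ h ∈ commutator G, h * c = c * h := fun h hh => mem_centralizer_iff.1 hc h hh
  have hβ : ∀ v : cs (commutator G) y, ∃ b ∈ commutator G, b * y * b⁻¹ = v ∧
      (centralizer {b}).index ≤ n ^ n := by
    rintro ⟨_, ⟨h, hh, rfl⟩⟩
    have hh' : h ∈ closure (commutatorSet G) := by rwa [← commutator_eq_closure]
    have hrel : (centralizer {y}).relIndex (closure (commutatorSet G)) ≤ n := by
      rw [← commutator_eq_closure, ← cs_ncard]; exact hr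
    obtain ⟨l, hl1, hl2, hl3⟩ := word_lemma _ commutatorSet_inv _ n hrel h hh'
    have hg : Good (n ^ n) l.prod := by
      refine good_mono (Nat.pow_le_pow_right hn1 hl2) (good_list l ?_)
      intro x hx
      obtain ⟨a, b, rfl⟩ := hl1 x hx
      exact hgood a b
    obtain ⟨b, hb, c', hc', hlb, hbi⟩ := hg
    refine ⟨b, hb, ?_, hbi⟩
    have h1 := mem_centralizer_singleton_iff.1 hl3
    have h2 := mem_centralizer_iff.1 hc' y hyH
    have hb' : b = l.prod * c'⁻¹ := by rw [hlb]; group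
    simp only
    have h3 : c'⁻¹ * y * c' = y := by
      rw [mul_assoc, h2]; group
    calc b * y * b⁻¹ = l.prod * (c'⁻¹ * y * c') * l.prod⁻¹ := by rw [hb']; group
      _ = h * (h⁻¹ * l.prod * y) * l.prod⁻¹ := by rw [h3]; group
      _ = h * y * h⁻¹ := by rw [h1]; group
  choose β hβH hβy hβi using hβ
  have : Fintype (cs (commutator G) y) := Fintype.ofFinite _
  let D : Subgroup G := centralizer {w} ⊓ ⨅ v, centralizer {β v}
  have hD : D.index ≤ n * (n ^ n) ^ n := by
    refine index_inf_le.trans (Nat.mul_le_mul hwi ?_)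
    refine (index_iInf_le _).trans ?_
    refine (Finset.prod_le_pow_card _ _ (n ^ n) fun v _ => hβi _).trans ?_
    refine Nat.pow_le_pow_right (Nat.one_le_pow _ _ hn1) ?_
    rw [Finset.card_univ, ← Nat.card_eq_fintype_card, Nat.card_coe_set_eq]
    exact hr
  let M : Subgroup G := D.normalCore
  have hMi : M.index ≤ (n * (n ^ n) ^ n).factorial :=
    (index_normalCore_le D).trans (Nat.factorial_le hD)
  have hMD : M ≤ D := normalCore_le D
  have hMw : ∀ u ∈ M, u * w = w * u := fun u hu =>
    mem_centralizer_singleton_iff.1 (hMD hu).1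
  have hMβ : ∀ u ∈ M, ∀ v, u * β v = β v * u := fun u hu v =>
    mem_centralizer_singleton_iff.1 ((mem_iInf.1 (hMD hu).2) v)
  let L : Subgroup G := normalClosure ({w} ∪ Set.range β)
  have hLM : L ≤ centralizer (M : Set G) := by
    refine normalClosure_le_normal ?_
    rintro x (rfl | ⟨v, rfl⟩)
    · exact mem_centralizer_iff.2 fun u hu => hMw u hu
    · exact mem_centralizer_iff.2 fun u hu => hMβ u hu v
  have hwL : w ∈ L := subset_normalClosure (Or.inl rfl)
  have hβL : ∀ v, β v ∈ L := fun v => subset_normalClosure (Or.inr ⟨v, rfl⟩)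
  let R : Subgroup G := ⁅L, L⁆
  have hRc : Nat.card R ≤ f ((n * (n ^ n) ^ n).factorial) := by
    have h1 : Nat.card R = Nat.card (commutator L) := by
      change Nat.card (⁅L, L⁆ : Subgroup G) = _
      rw [← map_subtype_commutator]
      exact card_map_of_injective L.subtype_injective
    rw [h1]
    apply hf
    have h2 : M.subgroupOf L ≤ center L := by
      intro x hx
      rw [mem_center_iff]
      intro g
      apply Subtype.ext
      exact ((mem_centralizer_iff.1 (hLM g.2)) x hx).symm
    refine (index_le_of_le h2).trans ?_
    refine le_trans ?_ hMi
    change M.relIndex L ≤ M.index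
    rw [← relIndex_top_right]
    exact relIndex_le_of_le_right le_top index_ne_zero_of_finite
  refine ⟨M, R, inferInstance, inferInstance, hMi, hRc, ?_⟩
  have hclass : ∀ x ∈ M, x ∈ commutator G → y * x ∈ commutatorSet G → ∀ h ∈ commutator G,
      ∃ v, h * (y * x) * h⁻¹ = (v : cs (commutator G) y) * x := by
    rintro x hx hxH ⟨a, b, hab⟩ h hh
    have hsub : (fun v => v * x) '' (cs (commutator G) y) ⊆ cs (commutator G) (y * x) := by
      rintro _ ⟨v, hv, rfl⟩
      refine ⟨β ⟨v, hv⟩, hβH _, ?_⟩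
      have h1 := hβy ⟨v, hv⟩
      have h2 := hMβ _ hx ⟨v, hv⟩
      simp only at h1 ⊢
      calc β ⟨v, hv⟩ * (y * x) * (β ⟨v, hv⟩)⁻¹
          = (β ⟨v, hv⟩ * y * (β ⟨v, hv⟩)⁻¹) * (β ⟨v, hv⟩ * x) * (β ⟨v, hv⟩)⁻¹ := by group
        _ = v * x := by rw [h1, ← h2]; group
    have heq := Set.eq_of_subset_of_ncard_le hsub (by
      rw [Set.ncard_image_of_injective _ (mul_left_injective _), ← hab]
      exact hmax _ _) (Set.toFinite _)
    have hmem : h * (y * x) * h⁻¹ ∈ cs (commutator G) (y * x) := ⟨h, hh, rfl⟩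
    rw [← heq] at hmem
    obtain ⟨v, hv, hv2⟩ := hmem
    exact ⟨⟨v, hv⟩, hv2.symm⟩
  have hquot : ∀ v1 v2 : cs (commutator G) y, (v1 : G)⁻¹ * v2 ∈ R := by
    intro v1 v2
    have h1 : ∀ v : cs (commutator G) y, (v : G) = β v * w * (β v)⁻¹ * c := by
      intro v
      have := hcH _ (inv_mem (hβH v))
      rw [← hβy v, hyc]
      calc β v * (w * c) * (β v)⁻¹ = β v * w * (c * (β v)⁻¹) := by group
        _ = _ := by rw [← this]; group
    have h2 : (v1 : G)⁻¹ * v2 = c⁻¹ * (⁅β v1, w⁻¹⁆ * ⁅w⁻¹, β v2⁆) * c⁻¹⁻¹ := by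
      rw [h1 v1, h1 v2]
      simp only [commutatorElement_def]
      group
    rw [h2]
    refine Normal.conj_mem inferInstance _ (mul_mem ?_ ?_) _
    · exact commutator_mem_commutator (hβL _) (inv_mem hwL)
    · exact commutator_mem_commutator (inv_mem hwL) (hβL _)
  have hmain : ∀ x ∈ M, x ∈ commutator G → y * x ∈ commutatorSet G →
      ∀ x2 ∈ M, x2 ∈ commutator G → y * x * x2 ∈ commutatorSet G →
      ∀ h ∈ commutator G, ⁅h, x2⁆ ∈ R := by
    intro x hx hxH hyx x2 hx2 hx2H hyx2 h hh
    obtain ⟨v1, hv1⟩ := hclass x hx hxH hyx h hh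
    obtain ⟨v2, hv2⟩ := hclass (x * x2) (mul_mem hx hx2) (mul_mem hxH hx2H)
      (by rwa [← mul_assoc]) h hh
    have : ⁅h, x2⁆ = x⁻¹ * ((v1 : G)⁻¹ * v2) * x⁻¹⁻¹ := by
      calc ⁅h, x2⁆ = (h * (y * x) * h⁻¹)⁻¹ * (h * (y * (x * x2)) * h⁻¹) * x2⁻¹ := by
            rw [commutatorElement_def]; group
        _ = _ := by rw [hv1, hv2]; group
    rw [this]
    exact Normal.conj_mem inferInstance _ (hquot v1 v2) _
  set N : Subgroup G := (centralizer (((commutator G).map (QuotientGroup.mk' R) :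
      Subgroup (G ⧸ R)) : Set (G ⧸ R))).comap (QuotientGroup.mk' R) with hN
  have : ((commutator G).map (QuotientGroup.mk' R)).Normal :=
    Normal.map inferInstance _ (QuotientGroup.mk'_surjective R)
  have hNn : N.Normal := inferInstance
  have hcomM : ∀ u ∈ M, ∀ g, ⁅u, g⁆ ∈ M := fun u hu g =>
    commutator_le_left M ⊤ (commutator_mem_commutator hu trivial)
  have hcomM' : ∀ u ∈ M, ∀ g, ⁅g, u⁆ ∈ M := fun u hu g =>
    commutator_le_right ⊤ M (commutator_mem_commutator trivial hu)
  have hcomH : ∀ a b : G, ⁅a, b⁆ ∈ commutator G := fun a b =>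
    commutator_mem_commutator trivial trivial
  have hdu : ∀ u' ∈ M, ∀ u ∈ M, ⁅d * u', u⁆ ∈ N := by
    intro u' hu' u hu
    have h1 : e * ⁅d * u', u⁆ * e⁻¹ ∈ N := by
      rw [hN, mem_relCentralizer]
      have hx : y * (y⁻¹ * (d * ⁅u', e⁆ * d⁻¹) * y⁻¹⁻¹) = ⁅d * u', e⁆ := by
        rw [hy]; simp only [commutatorElement_def]; group
      refine hmain (y⁻¹ * (d * ⁅u', e⁆ * d⁻¹) * y⁻¹⁻¹) ?_ ?_ ?_ _ ?_ ?_ ?_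
      · exact Normal.conj_mem inferInstance _ (Normal.conj_mem inferInstance _ (hcomM _ hu' _) _) _
      · exact Normal.conj_mem inferInstance _ (Normal.conj_mem inferInstance _ (hcomH _ _) _) _
      · rw [hx]; exact ⟨_, _, rfl⟩
      · exact Normal.conj_mem inferInstance _ (hcomM' _ hu _) _
      · exact Normal.conj_mem inferInstance _ (hcomH _ _) _
      · rw [hx]
        refine ⟨d * u', e * u, ?_⟩
        simp only [commutatorElement_def]; group
    have h2 := hNn.conj_mem _ h1 e⁻¹
    simpa [mul_assoc] using h2
  have hMN : ⁅M, M⁆ ≤ N := by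
    rw [commutator_le]
    intro u' hu' u hu
    have h1 := hdu u' hu' u hu
    have h2 := hdu 1 (one_mem _) u hu
    rw [mul_one] at h2
    have h3 := hNn.conj_mem _ (mul_mem h1 (inv_mem h2)) d⁻¹
    convert h3 using 1
    simp only [commutatorElement_def]; group
  intro h hh z hz
  exact (mem_relCentralizer _ R z).1 (hMN hz) h hh

theorem second_derived_of_good : ∃ f : ℕ → ℕ, ∀ (G : Type) [Group G] [Finite G] (n : ℕ),
    (∀ a b : G, Good n ⁅a, b⁆) → Nat.card (⁅commutator G, commutator G⁆ : Subgroup G) ≤ f n := by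
  obtain ⟨F1, F2, hF⟩ := structure_step
  obtain ⟨wd, hwd⟩ := width
  obtain ⟨g, hg⟩ := bfc
  refine ⟨fun n => g (n ^ (wd (F1 n)) * F2 n), ?_⟩
  intro G _ _ n hgood
  have hn1 : 1 ≤ n := good_pos (hgood 1 1)
  obtain ⟨M, R, _, _, hMi, hRc, hMR⟩ := hF G n hgood
  rw [← map_subtype_commutator, card_map_of_injective (commutator G).subtype_injective]
  apply hg
  have hbound : ∀ a ∈ commutator G, (cs (commutator G) a).ncard ≤ n ^ (wd (F1 n)) * F2 n := by
    intro a ha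
    let P : Subgroup G := ⁅M, M⁆
    let A : Subgroup (G ⧸ P) := M.map (QuotientGroup.mk' P)
    have hAn : A.Normal := Normal.map inferInstance _ (QuotientGroup.mk'_surjective P)
    have hAc : IsMulCommutative A := by
      rw [← le_centralizer_iff_isMulCommutative]
      rintro _ ⟨x, hx, rfl⟩
      rw [mem_centralizer_iff]
      rintro _ ⟨z, hz, rfl⟩
      rw [← commutatorElement_eq_one_iff_mul_comm, ← map_commutatorElement,
        QuotientGroup.mk'_apply, QuotientGroup.eq_one_iff]
      exact commutator_mem_commutator hz hx
    have hAi : A.index ≤ F1 n := by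
      refine le_trans ?_ hMi
      rw [← index_comap_of_surjective _ (QuotientGroup.mk'_surjective P)]
      exact index_le_of_le (le_comap_map _ _)
    have ha' : QuotientGroup.mk' P a ∈ commutator (G ⧸ P) := by
      have : (commutator G).map (QuotientGroup.mk' P) ≤ commutator (G ⧸ P) := by
        rw [commutator_def, commutator_def, map_commutator]
        exact commutator_mono le_top le_top
      exact this ⟨a, ha, rfl⟩
    obtain ⟨l, hl1, hl2, hl3⟩ := hwd (G ⧸ P) A (F1 n) hAi _ ha'
    have hlift : ∀ l : List (G ⧸ P), (∀ y ∈ l, y ∈ commutatorSet (G ⧸ P)) →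
        ∃ l' : List G, (∀ y ∈ l', y ∈ commutatorSet G) ∧ l'.length = l.length ∧
          QuotientGroup.mk' P l'.prod = l.prod := by
      intro l
      induction l with
      | nil => intro _; exact ⟨[], by simp, rfl, by simp⟩
      | cons q l ih =>
        intro hl
        obtain ⟨l', h1, h2, h3⟩ := ih fun y hy => hl y (by simp [hy])
        obtain ⟨u, v, rfl⟩ := hl q (by simp)
        obtain ⟨u, rfl⟩ := QuotientGroup.mk'_surjective P u
        obtain ⟨v, rfl⟩ := QuotientGroup.mk'_surjective P v
        refine ⟨⁅u, v⁆ :: l', ?_, by simp [h2], ?_⟩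
        · intro y hy
          rcases List.mem_cons.1 hy with rfl | hy
          · exact ⟨_, _, rfl⟩
          · exact h1 y hy
        · rw [List.prod_cons, List.prod_cons, map_mul, h3, map_commutatorElement]
    obtain ⟨l', h1, h2, h3⟩ := hlift l hl1
    have hg1 : Good (n ^ (wd (F1 n))) l'.prod := by
      refine good_mono (Nat.pow_le_pow_right hn1 (h2.le.trans hl2)) (good_list l' ?_)
      intro x hx
      obtain ⟨u, v, rfl⟩ := h1 x hx
      exact hgood u v
    have hz : l'.prod⁻¹ * a ∈ P := by
      rw [← QuotientGroup.eq]
      exact h3.trans hl3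
    set z := l'.prod⁻¹ * a with hzdef
    have hza : a = l'.prod * z := by rw [hzdef]; group
    clear_value z
    have hzc : (centralizer {z}).relIndex (commutator G) ≤ F2 n := by
      rw [← cs_ncard]
      refine le_trans ?_ hRc
      have hsub : cs (commutator G) z ⊆ (fun r => r * z) '' (R : Set G) := by
        rintro _ ⟨h, hh, rfl⟩
        exact ⟨⁅h, z⁆, hMR h hh z hz, by simp [commutatorElement_def]⟩
      refine (Set.ncard_le_ncard hsub (Set.toFinite _)).trans ?_
      refine (Set.ncard_image_le (Set.toFinite _)).trans ?_
      rw [← Nat.card_coe_set_eq]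
      exact le_rfl
    rw [cs_ncard]
    refine le_trans ?_ (Nat.mul_le_mul (good_relIndex hg1) hzc)
    refine le_trans ?_ relIndex_inf_le
    refine relIndex_le_of_le_left ?_ index_ne_zero_of_finite
    rintro x ⟨h1, h2⟩
    have h1 := mem_centralizer_singleton_iff.1 h1
    have h2 := mem_centralizer_singleton_iff.1 h2
    rw [mem_centralizer_singleton_iff, hza, ← mul_assoc, h1, mul_assoc, h2, ← mul_assoc]
  intro a
  refine le_trans ?_ (hbound a a.2)
  rw [← Set.ncard_image_of_injective (cs ⊤ a) (commutator G).subtype_injective]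
  refine Set.ncard_le_ncard ?_ (Set.toFinite _)
  rintro _ ⟨_, ⟨h, -, rfl⟩, rfl⟩
  exact ⟨h, h.2, by simp⟩


/-- the subgroup generated by `p`-th powers of elements of `S` -/
def pw {G : Type} [Group G] (p : ℕ) (S : Subgroup G) : Subgroup G :=
  closure ((fun x => x ^ p) '' (S : Set G))

theorem map_pw {G G' : Type} [Group G] [Group G'] (f : G →* G') (p : ℕ) (S : Subgroup G) :
    (pw p S).map f = pw p (S.map f) := by
  rw [pw, pw, MonoidHom.map_closure]
  congr 1
  ext z
  constructor
  · rintro ⟨_, ⟨x, hx, rfl⟩, rfl⟩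
    exact ⟨f x, ⟨x, hx, rfl⟩, by simp⟩
  · rintro ⟨_, ⟨x, hx, rfl⟩, rfl⟩
    exact ⟨x ^ p, ⟨x, hx, rfl⟩, by simp⟩

theorem pw_mono {G : Type} [Group G] (p : ℕ) {S T : Subgroup G} (h : S ≤ T) : pw p S ≤ pw p T :=
  closure_mono (Set.image_mono h)

theorem pw_le {G : Type} [Group G] (p : ℕ) (S : Subgroup G) : pw p S ≤ S := by
  rw [pw, closure_le]
  rintro _ ⟨x, hx, rfl⟩
  exact pow_mem hx p

theorem pow_mem_pw {G : Type} [Group G] (p : ℕ) {S : Subgroup G} {x : G} (hx : x ∈ S) :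
    x ^ p ∈ pw p S := subset_closure ⟨x, hx, rfl⟩

theorem pw_normal {G : Type} [Group G] (p : ℕ) {S : Subgroup G} (hS : S.Normal) :
    (pw p S).Normal := by
  constructor
  intro x hx g
  have h1 : MulAut.conj g x ∈ (pw p S).map (MulAut.conj g).toMonoidHom := ⟨x, hx, rfl⟩
  rw [map_pw] at h1
  refine pw_mono p ?_ h1
  rintro _ ⟨y, hy, rfl⟩
  exact hS.conj_mem y hy g

/-- the sequence of primes used for the chain -/
def qs (N k : ℕ) : ℕ := if (k % (N + 1)).Prime then k % (N + 1) else 2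

theorem qs_prime (N k : ℕ) : (qs N k).Prime := by
  unfold qs
  split_ifs with h
  · exact h
  · exact Nat.prime_two

/-- iterated power subgroups -/
def pc (N : ℕ) (G : Type) [Group G] : ℕ → Subgroup G
  | 0 => ⊤
  | k + 1 => pw (qs N k) (pc N G k)

theorem pc_normal (N : ℕ) (G : Type) [Group G] (k : ℕ) : (pc N G k).Normal := by
  induction k with
  | zero => exact inferInstanceAs (⊤ : Subgroup G).Normal
  | succ k ih => exact pw_normal _ ih

theorem exists_pw_lt {Q : Type} [Group Q] [Finite Q] [Group.IsSolvable Q] (S : Subgroup Q) (hS : S ≠ ⊥) :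
    ∃ p, p.Prime ∧ p ≤ Nat.card S ∧ pw p S < S := by
  have : Nontrivial S := (nontrivial_iff_ne_bot S).2 hS
  have hlt : commutator S < ⊤ := Group.IsSolvable.commutator_lt_top_of_nontrivial S
  have hne : Nat.card (Abelianization S) ≠ 1 := by
    intro h
    have : (commutator S).index = 1 := h
    exact hlt.ne (index_eq_one.1 this)
  let p := (Nat.card (Abelianization S)).minFac
  have hp : p.Prime := Nat.minFac_prime hne
  have : Fact p.Prime := ⟨hp⟩
  have hdvd : p ∣ Nat.card (Abelianization S) := Nat.minFac_dvd _
  refine ⟨p, hp, ?_, lt_of_le_of_ne (pw_le p S) ?_⟩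
  · refine (Nat.le_of_dvd Nat.card_pos hdvd).trans ?_
    exact Nat.card_le_card_of_surjective _ (QuotientGroup.mk'_surjective (commutator S))
  · intro heq
    have hsurj : Function.Surjective (powMonoidHom p : Abelianization S →* Abelianization S) := by
      have hS' : ∀ x : S, Abelianization.of x ∈
          (powMonoidHom p : Abelianization S →* Abelianization S).range := by
        have hle : pw p S ≤ ((powMonoidHom p : Abelianization S →* Abelianization S).range.comap
            Abelianization.of).map S.subtype := by
          rw [pw, closure_le]
          rintro _ ⟨x, hx, rfl⟩
          exact ⟨⟨x, hx⟩ ^ p, ⟨Abelianization.of ⟨x, hx⟩, (map_pow Abelianization.of _ p).symm⟩, by simp⟩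
        intro x
        have hx : (x : Q) ∈ pw p S := by rw [heq]; exact x.2
        obtain ⟨z, hz, hzx⟩ := hle hx
        have : z = x := Subtype.ext hzx
        rw [← this]
        exact hz
      intro a
      obtain ⟨x, rfl⟩ := QuotientGroup.mk'_surjective (commutator S) a
      exact hS' x
    have hinj := Finite.injective_iff_surjective.2 hsurj
    obtain ⟨x, hx⟩ := exists_prime_orderOf_dvd_card' p hdvd
    have h1 : x = 1 := by
      apply hinj
      simp only [powMonoidHom_apply, one_pow]
      rw [← hx]
      exact pow_orderOf_eq_one x
    rw [h1, orderOf_one] at hx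
    exact hp.one_lt.ne hx

theorem chain_bot {Q : Type} [Group Q] [Finite Q] [Group.IsSolvable Q] (N : ℕ) (hN : Nat.card Q ≤ N)
    (T : ℕ → Subgroup Q) (hT : ∀ k, T (k + 1) = pw (qs N k) (T k)) : T (N * (N + 1)) = ⊥ := by
  have hanti : Antitone T := antitone_nat_of_succ_le fun k => by rw [hT]; exact pw_le _ _
  have key : ∀ j, T (j * (N + 1)) = ⊥ ∨ Nat.card (T (j * (N + 1))) + j ≤ N := by
    intro j
    induction j with
    | zero => exact Or.inr ((Finite.card_subtype_le _).trans hN)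
    | succ j ih =>
      by_cases hb : T (j * (N + 1)) = ⊥
      · left
        rw [eq_bot_iff, ← hb]
        exact hanti (Nat.mul_le_mul_right _ (Nat.le_succ j))
      · right
        have hc := ih.resolve_left hb
        obtain ⟨p, hp, hpc, hlt⟩ := exists_pw_lt _ hb
        have hpN : p ≤ N := by omega
        have hq : qs N (j * (N + 1) + p) = p := by
          have : (j * (N + 1) + p) % (N + 1) = p := by
            rw [mul_comm, Nat.mul_add_mod, Nat.mod_eq_of_lt (by omega)]
          unfold qs
          rw [this, if_pos hp]
        have h1 : T ((j + 1) * (N + 1)) ≤ T (j * (N + 1) + p + 1) :=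
          hanti (by rw [add_mul]; omega)
        have h2 : T (j * (N + 1) + p + 1) ≤ pw p (T (j * (N + 1))) := by
          rw [hT, hq]
          exact pw_mono _ (hanti (Nat.le_add_right _ _))
        have h3 : Nat.card (T ((j + 1) * (N + 1))) < Nat.card (T (j * (N + 1))) := by
          have := lt_of_le_of_lt (h1.trans h2) hlt
          exact Set.ncard_lt_ncard (s := (T ((j + 1) * (N + 1)) : Set Q)) this (Set.toFinite _)
        omega
  rcases key N with h | h
  · exact h
  · have : 0 < Nat.card (T (N * (N + 1))) := Nat.card_pos
    omega

theorem pc_le_ker {G Q : Type} [Group G] [Group Q] [Finite Q] [Group.IsSolvable Q] (φ : G →* Q)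
    (N : ℕ) (hN : Nat.card Q ≤ N) : pc N G (N * (N + 1)) ≤ φ.ker := by
  have := chain_bot N hN (fun k => (pc N G k).map φ) (fun k => map_pw _ _ _)
  exact (Subgroup.map_eq_bot_iff _).1 this

theorem tower {G : Type} [Group G] [Finite G] (c : ℕ → Subgroup G) (hcn : ∀ k, (c k).Normal)
    (hc0 : c 0 = ⊤) (hcp : ∀ k, ∃ p, p.Prime ∧ ∀ x ∈ c k, x ^ p ∈ c (k + 1)) (k : ℕ) :
    ∀ L : Subgroup G, ∃ Bs : List (Subgroup G), Bs.length = k ∧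
      (∀ B ∈ Bs, B ≤ L ∧ ∃ p, p.Prime ∧ IsPGroup p B) ∧
      Bs.Pairwise (fun (B B' : Subgroup G) => B ≤ normalizer (B' : Set G)) ∧
      ∀ g ∈ L, ∃ bs : List G, List.Forall₂ (fun (b : G) (B : Subgroup G) => b ∈ B) bs Bs ∧ bs.prod⁻¹ * g ∈ c k := by
  induction k with
  | zero =>
    intro L
    exact ⟨[], rfl, by simp, by simp, fun g hg => ⟨[], by simp, by simp [hc0]⟩⟩
  | succ k ih =>
    intro L
    obtain ⟨p, hp, hpow⟩ := hcp k
    have : Fact p.Prime := ⟨hp⟩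
    have := hcn k
    have := hcn (k + 1)
    let N1 : Subgroup L := (c k).subgroupOf L
    obtain ⟨P⟩ : Nonempty (Sylow p N1) := inferInstance
    let BL : Subgroup L := (P : Subgroup N1).map N1.subtype
    let B : Subgroup G := BL.map L.subtype
    have hBL : B ≤ L := map_subtype_le _
    have hBp : IsPGroup p B := (P.2.map _).map _
    have hfr : normalizer (BL : Set L) ⊔ N1 = ⊤ := Sylow.normalizer_sup_eq_top P
    have hnorm : ∀ n : L, n ∈ normalizer (BL : Set L) → (n : G) ∈ normalizer (B : Set G) := by
      intro n hn
      have := mem_map_of_mem L.subtype hn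
      exact (le_normalizer_map L.subtype) this
    have hcov : ∀ z ∈ L, z ∈ c k → ∃ b ∈ B, b⁻¹ * z ∈ c (k + 1) := by
      intro z hzL hzc
      let K : Subgroup N1 := ((c (k + 1)).subgroupOf L).subgroupOf N1
      have hpg : IsPGroup p (N1 ⧸ K) := by
        intro q
        induction q using QuotientGroup.induction_on with
        | H x =>
          refine ⟨1, ?_⟩
          rw [pow_one, ← QuotientGroup.mk_pow, QuotientGroup.eq_one_iff]
          exact hpow _ x.2
      obtain ⟨n, hn⟩ := (IsPGroup.iff_card).1 hpg
      have h1 : ((P : Subgroup N1) ⊔ K).index ∣ p ^ n := by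
        have : K.index = p ^ n := hn
        rw [← this]
        exact index_dvd_of_le le_sup_right
      have h2 : ¬ p ∣ ((P : Subgroup N1) ⊔ K).index := fun h =>
        P.not_dvd_index (h.trans (index_dvd_of_le le_sup_left))
      have h3 : ((P : Subgroup N1) ⊔ K) = ⊤ := by
        rw [← index_eq_one]
        obtain ⟨i, hi, hi2⟩ := (Nat.dvd_prime_pow hp).1 h1
        rcases Nat.eq_zero_or_pos i with rfl | hi0
        · simpa using hi2
        · exact absurd (hi2 ▸ dvd_pow_self p hi0.ne') h2
      have hz : (⟨⟨z, hzL⟩, hzc⟩ : N1) ∈ (P : Subgroup N1) ⊔ K := by rw [h3]; trivial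
      obtain ⟨b, hb, x, hx, hbx⟩ := mem_sup_of_normal_right.1 hz
      refine ⟨b, ⟨b, ⟨b, hb, rfl⟩, rfl⟩, ?_⟩
      have hbx' : ((b : L) : G) * ((x : L) : G) = z := congrArg (fun t : N1 => ((t : L) : G)) hbx
      rw [← hbx', inv_mul_cancel_left]
      exact hx
    obtain ⟨Bs, hlen, hBs, hpw, hprod⟩ := ih (L ⊓ normalizer (B : Set G))
    refine ⟨Bs ++ [B], by simp [hlen], ?_, ?_, ?_⟩
    · intro B' hB'
      rcases List.mem_append.1 hB' with h | h
      · exact ⟨(hBs B' h).1.trans inf_le_left, (hBs B' h).2⟩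
      · rw [List.mem_singleton.1 h]
        exact ⟨hBL, p, hp, hBp⟩
    · rw [List.pairwise_append]
      refine ⟨hpw, by simp, ?_⟩
      intro B1 hB1 B2 hB2
      rw [List.mem_singleton.1 hB2]
      exact (hBs B1 hB1).1.trans inf_le_right
    · intro g hg
      have hg' : (⟨g, hg⟩ : L) ∈ normalizer (BL : Set L) ⊔ N1 := by rw [hfr]; trivial
      obtain ⟨n, hn, x, hx, hnx⟩ := mem_sup_of_normal_right.1 hg'
      have hnx' : (n : G) * (x : G) = g := congrArg (fun t : L => (t : G)) hnx
      obtain ⟨bs, hbs, hbsn⟩ := hprod n ⟨n.2, hnorm n hn⟩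
      have hbsL : bs.prod ∈ L := by
        refine list_prod_mem fun b hb => ?_
        obtain ⟨B', hB', hbB'⟩ : ∃ B' ∈ Bs, b ∈ B' := by
          clear hbsn hprod hBs hpw hlen
          induction hbs with
          | nil => simp at hb
          | cons h _ ih =>
            rcases List.mem_cons.1 hb with rfl | hb
            · exact ⟨_, by simp, h⟩
            · obtain ⟨B', h1, h2⟩ := ih hb
              exact ⟨B', by simp [h1], h2⟩
        exact ((hBs B' hB').1 hbB').1
      obtain ⟨b, hb, hbz⟩ := hcov (bs.prod⁻¹ * g) (mul_mem (inv_mem hbsL) hg) (by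
        rw [← hnx', ← mul_assoc]
        exact mul_mem hbsn hx)
      refine ⟨bs ++ [b], ?_, ?_⟩
      · exact List.rel_append (R := fun (b : G) (B : Subgroup G) => b ∈ B) hbs (by simpa using hb)
      · simpa [mul_assoc] using hbz


theorem xs_mem {G : Type} [Group G] {p : ℕ} (hp : p.Prime) {B B' : Subgroup G}
    (hB : B ≤ normalizer (B' : Set G)) (hB' : IsPGroup p B') {b b' : G} (hb : b ∈ B)
    (hb' : b' ∈ B') : b'⁻¹ * ⁅b, b'⁆ * b' ∈ Xset G := by
  have : Fact p.Prime := ⟨hp⟩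
  obtain ⟨P, hP⟩ := hB'.exists_le_sylow
  have h1 : b * b' * b⁻¹ ∈ B' := (mem_normalizer_iff.1 (hB hb) b').1 hb'
  have h2 : b'⁻¹ * ⁅b, b'⁆ * b' = b'⁻¹ * (b * b' * b⁻¹) := by
    rw [commutatorElement_def]; group
  refine ⟨p, this, P, b', b⁻¹, ?_, hP hb', ?_⟩
  · rw [h2]; group
  · rw [h2]
    exact hP (mul_mem (inv_mem hb') h1)

theorem xs_conj {G : Type} [Group G] {z : G} (hz : z ∈ Xset G) (g : G) :
    g * z * g⁻¹ ∈ Xset G := by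
  obtain ⟨p, hp, P, x, y, rfl, hx, hz⟩ := hz
  have hmem : ∀ t ∈ (P : Subgroup G), g * t * g⁻¹ ∈ ((g • P : Sylow p G) : Subgroup G) := by
    intro t ht
    rw [Sylow.coe_subgroup_smul]
    exact Subgroup.smul_mem_pointwise_smul t (MulAut.conj g) _ ht
  refine ⟨p, hp, g • P, g * x * g⁻¹, g * y * g⁻¹, by group, hmem _ hx, hmem _ hz⟩

theorem xs_comm {G : Type} [Group G] {z : G} (hz : z ∈ Xset G) : z ∈ commutator G := by
  obtain ⟨p, hp, P, x, y, rfl, hx, hz⟩ := hz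
  have : x⁻¹ * y⁻¹ * x * y = ⁅x⁻¹, y⁻¹⁆ := by rw [commutatorElement_def]; group
  rw [this]
  exact commutator_mem_commutator (mem_top _) (mem_top _)

/-- commutators of elements of the tower subgroups are conjugates of elements of `Xset` up to
inversion -/
theorem xs_pair {G : Type} [Group G] (Bs : List (Subgroup G))
    (hBs : ∀ B ∈ Bs, ∃ p, p.Prime ∧ IsPGroup p B)
    (hpw : Bs.Pairwise (fun (B B' : Subgroup G) => B ≤ normalizer (B' : Set G)))
    {B B' : Subgroup G} (hB : B ∈ Bs) (hB' : B' ∈ Bs) {b b' : G} (hb : b ∈ B) (hb' : b' ∈ B') :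
    ⁅b, b'⁆ ∈ Xset G ∨ ⁅b, b'⁆⁻¹ ∈ Xset G := by
  have aux : ∀ {B B' : Subgroup G} {b b' : G}, B' ∈ Bs → B ≤ normalizer (B' : Set G) → b ∈ B →
      b' ∈ B' → ⁅b, b'⁆ ∈ Xset G := by
    intro B B' b b' hB' hle hb hb'
    obtain ⟨p, hp, hpg⟩ := hBs B' hB'
    have := xs_conj (xs_mem hp hle hpg hb hb') b'
    have h : b' * (b'⁻¹ * ⁅b, b'⁆ * b') * b'⁻¹ = ⁅b, b'⁆ := by group
    rwa [h] at this
  have hor : B ≤ normalizer (B' : Set G) ∨ B' ≤ normalizer (B : Set G) := by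
    have hp2 : Bs.Pairwise (fun (B B' : Subgroup G) =>
        B ≤ normalizer (B' : Set G) ∨ B' ≤ normalizer (B : Set G)) := hpw.imp Or.inl
    have : Std.Symm (fun (B B' : Subgroup G) =>
        B ≤ normalizer (B' : Set G) ∨ B' ≤ normalizer (B : Set G)) := ⟨fun _ _ h => Or.symm h⟩
    exact List.Pairwise.forall_of_forall (R := fun (B B' : Subgroup G) =>
        B ≤ normalizer (B' : Set G) ∨ B' ≤ normalizer (B : Set G)) (fun C _ => Or.inl le_normalizer) hp2 hB hB'
  rcases hor with h | h
  · exact Or.inl (aux hB' h hb hb')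
  · right
    rw [commutatorElement_inv]
    exact aux hB h hb' hb

theorem forall2_mem {G : Type} [Group G] {bs : List G} {Bs : List (Subgroup G)}
    (h : List.Forall₂ (fun (b : G) (B : Subgroup G) => b ∈ B) bs Bs) :
    ∀ b ∈ bs, ∃ B ∈ Bs, b ∈ B := by
  intro b hb
  induction h with
  | nil => simp at hb
  | cons h _ ih =>
    rcases List.mem_cons.1 hb with rfl | hb
    · exact ⟨_, by simp, h⟩
    · obtain ⟨B', h1, h2⟩ := ih hb
      exact ⟨B', by simp [h1], h2⟩

theorem tower_pc {G : Type} [Group G] [Finite G] (N k : ℕ) :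
    ∃ Bs : List (Subgroup G), Bs.length = k ∧
      (∀ B ∈ Bs, ∃ p, p.Prime ∧ IsPGroup p B) ∧
      Bs.Pairwise (fun (B B' : Subgroup G) => B ≤ normalizer (B' : Set G)) ∧
      ∀ g : G, ∃ bs : List G, bs.length = k ∧ (∀ b ∈ bs, ∃ B ∈ Bs, b ∈ B) ∧
        bs.prod⁻¹ * g ∈ pc N G k := by
  obtain ⟨Bs, h1, h2, h3, h4⟩ := tower (pc N G) (pc_normal N G) rfl
    (fun k => ⟨qs N k, qs_prime N k, fun x hx => pow_mem_pw _ hx⟩) k ⊤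
  refine ⟨Bs, h1, fun B hB => (h2 B hB).2, h3, fun g => ?_⟩
  obtain ⟨bs, hb1, hb2⟩ := h4 g (mem_top g)
  exact ⟨bs, hb1.length_eq.trans h1, forall2_mem hb1, hb2⟩

theorem comm_le_xs (G : Type) [Group G] [Finite G] [Group.IsSolvable G] :
    commutator G ≤ closure (Xset G) := by
  obtain ⟨Bs, h1, h2, h3, h4⟩ := tower_pc (G := G) (Nat.card G) (Nat.card G * (Nat.card G + 1))
  have hbot := pc_le_ker (MonoidHom.id G) (Nat.card G) le_rfl
  have hn : (closure (Xset G)).Normal := by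
    constructor
    intro x hx g
    induction hx using closure_induction with
    | mem x hx => exact subset_closure (xs_conj hx g)
    | one => simp
    | mul x y _ _ hx hy =>
      have : g * (x * y) * g⁻¹ = (g * x * g⁻¹) * (g * y * g⁻¹) := by group
      rw [this]; exact mul_mem hx hy
    | inv x _ hx =>
      have : g * x⁻¹ * g⁻¹ = (g * x * g⁻¹)⁻¹ := by group
      rw [this]; exact inv_mem hx
  have hgen : ∀ g : G, ∃ bs : List G, (∀ b ∈ bs, ∃ B ∈ Bs, b ∈ B) ∧ bs.prod = g := by
    intro g
    obtain ⟨bs, _, hb1, hb2⟩ := h4 g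
    have hg : bs.prod⁻¹ * g = 1 := hbot hb2
    exact ⟨bs, hb1, inv_mul_eq_one.1 hg⟩
  have hleft : ∀ (h : G) (l : List G), (∀ x ∈ l, ⁅x, h⁆ ∈ closure (Xset G)) →
      ⁅l.prod, h⁆ ∈ closure (Xset G) := by
    intro h l hl
    induction l with
    | nil => simp
    | cons a l ih =>
      have : ⁅(a :: l).prod, h⁆ = a * ⁅l.prod, h⁆ * a⁻¹ * ⁅a, h⁆ := by
        rw [List.prod_cons]; simp only [commutatorElement_def]; group
      rw [this]
      exact mul_mem (hn.conj_mem _ (ih fun x hx => hl x (by simp [hx])) a) (hl a (by simp))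
  rw [commutator_def, commutator_le]
  intro g _ h _
  obtain ⟨l, hl, rfl⟩ := hgen g
  obtain ⟨l', hl', rfl⟩ := hgen h
  refine hleft _ _ fun x hx => ?_
  rw [← commutatorElement_inv]
  refine inv_mem (hleft _ _ fun y hy => ?_)
  obtain ⟨B, hB, hxB⟩ := hl x hx
  obtain ⟨B', hB', hyB'⟩ := hl' y hy
  rcases xs_pair Bs h2 h3 hB' hB hyB' hxB with h | h
  · exact subset_closure h
  · rw [← inv_mem_iff]
    exact subset_closure h

theorem good_prod_left {G : Type} [Group G] [Finite G] {n : ℕ} (h : G) (l : List G)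
    (hl : ∀ x ∈ l, Good n ⁅x, h⁆) : Good (n ^ l.length) ⁅l.prod, h⁆ := by
  induction l with
  | nil => simpa using good_of_centralizer (one_mem (centralizer (commutator G : Set G)))
  | cons a l ih =>
    have h1 := good_mul (good_conj a (ih fun x hx => hl x (by simp [hx]))) (hl a (by simp))
    have : ⁅(a :: l).prod, h⁆ = a * ⁅l.prod, h⁆ * a⁻¹ * ⁅a, h⁆ := by
      rw [List.prod_cons]; simp only [commutatorElement_def]; group
    rw [this, List.length_cons, pow_succ]
    exact h1

theorem good_prod_right {G : Type} [Group G] [Finite G] {n : ℕ} (h : G) (l : List G)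
    (hl : ∀ x ∈ l, Good n ⁅h, x⁆) : Good (n ^ l.length) ⁅h, l.prod⁆ := by
  have := good_inv (good_prod_left h l (n := n) fun x hx => by
    rw [← commutatorElement_inv]; exact good_inv (hl x hx))
  rwa [commutatorElement_inv] at this

theorem good_of_xs {G : Type} [Group G] [Finite G] {m : ℕ}
    (hm : ∀ x ∈ Xset G, (centralizer {x}).index ≤ m) {x : G} (hx : x ∈ Xset G) : Good m x :=
  ⟨x, xs_comm hx, 1, one_mem _, by simp, hm x hx⟩

theorem good_all {G : Type} [Group G] [Finite G] [Group.IsSolvable G] {m : ℕ} (hm0 : 0 < m)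
    (hm : ∀ x ∈ Xset G, (centralizer {x}).index ≤ m) (g h : G) :
    Good ((m ^ (m.factorial * (m.factorial + 1) + 1)) ^ (m.factorial * (m.factorial + 1) + 1))
      ⁅g, h⁆ := by
  let N := m.factorial
  let k := N * (N + 1)
  let C : Subgroup G := centralizer (commutator G : Set G)
  have hCn : C.Normal := inferInstance
  have hck : pc N G k ≤ C := by
    have h1 : ∀ x ∈ Xset G, pc N G k ≤ centralizer {x} := by
      intro x hx
      have h2 := pc_le_ker (QuotientGroup.mk' (centralizer {x}).normalCore) N
        ((index_normalCore_le (centralizer {x})).trans (Nat.factorial_le (hm x hx)))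
      rw [QuotientGroup.ker_mk'] at h2
      exact h2.trans (normalCore_le _)
    have h3 : pc N G k ≤ centralizer (Xset G) := by
      intro c hc
      rw [mem_centralizer_iff]
      intro x hx
      exact mem_centralizer_iff.1 (h1 x hx hc) x rfl
    refine h3.trans ?_
    rw [← centralizer_closure]
    exact centralizer_le (comm_le_xs G)
  obtain ⟨Bs, -, h2, h3, h4⟩ := tower_pc (G := G) N k
  let V : Set G := {v | v ∈ C ∨ ∃ B ∈ Bs, v ∈ B}
  have hV : ∀ g : G, ∃ l : List G, l.length = k + 1 ∧ (∀ v ∈ l, v ∈ V) ∧ l.prod = g := by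
    intro g
    obtain ⟨bs, hlen, hb1, hb2⟩ := h4 g
    refine ⟨bs ++ [bs.prod⁻¹ * g], by simp [hlen], ?_, by simp⟩
    intro v hv
    rcases List.mem_append.1 hv with hv | hv
    · exact Or.inr (hb1 v hv)
    · rw [List.mem_singleton.1 hv]
      exact Or.inl (hck hb2)
  have hVV : ∀ v ∈ V, ∀ v' ∈ V, Good m ⁅v, v'⁆ := by
    intro v hv v' hv'
    rcases hv with hv | ⟨B, hB, hvB⟩
    · refine good_mono hm0 (good_of_centralizer ?_)
      have : ⁅v, v'⁆ = v * (v' * v⁻¹ * v'⁻¹) := by rw [commutatorElement_def]; group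
      rw [this]
      exact mul_mem hv (hCn.conj_mem _ (inv_mem hv) v')
    · rcases hv' with hv' | ⟨B', hB', hvB'⟩
      · refine good_mono hm0 (good_of_centralizer ?_)
        rw [commutatorElement_def]
        exact mul_mem (hCn.conj_mem _ hv' v) (inv_mem hv')
      · rcases xs_pair Bs h2 h3 hB hB' hvB hvB' with h | h
        · exact good_of_xs hm h
        · rw [← inv_inv ⁅v, v'⁆]
          exact good_inv (good_of_xs hm h)
  obtain ⟨l, hl, hlV, rfl⟩ := hV g
  obtain ⟨l', hl', hlV', rfl⟩ := hV h
  have key := good_prod_left l'.prod l (n := m ^ (k + 1)) fun v hv => by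
    have := good_prod_right v l' (n := m) fun v' hv' => hVV v (hlV v hv) v' (hlV' v' hv')
    rwa [hl'] at this
  rwa [hl] at key

theorem conj_card {G : Type} [Group G] (x : G) :
    Nat.card {h : G // IsConj x h} = (centralizer {x}).index := by
  rw [← relIndex_top_right, ← cs_ncard]
  have : cs ⊤ x = {h : G | IsConj x h} := by
    ext h
    simp only [cs, Set.mem_image, Set.mem_setOf_eq, isConj_iff, coe_top, Set.mem_univ, true_and]
  rw [this]
  rfl


end SD

/-- If `G` is a finite soluble group with `|x^G| ≤ m` for all `x ∈ Xset G`, then the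
second derived subgroup `G''` has `m`-bounded order. -/
theorem second_derived_bounded_soluble :
    ∃ f : ℕ → ℕ, ∀ (G : Type) (_ : Group G) (_ : Finite G), IsSolvable G →
      ∀ m : ℕ, 0 < m →
      (∀ x ∈ Xset G, Nat.card {h : G // IsConj x h} ≤ m) →
      Nat.card (derivedSeries G 2) ≤ f m := by
  obtain ⟨F, hF⟩ := SD.second_derived_of_good
  refine ⟨fun m => F ((m ^ (m.factorial * (m.factorial + 1) + 1)) ^
    (m.factorial * (m.factorial + 1) + 1)), ?_⟩
  intro G _ _ hs m hm0 hm
  have : Group.IsSolvable G := hs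
  exact hF G _ (SD.good_all hm0 fun x hx => by
    rw [← SD.conj_card]; exact hm x hx)
end

section
/- Let m be a positive integer and G a finite group such that |x^G| ≤ m for every x ∈ X(G). Let R be the soluble radical of G. Then the order of G/R is bounded by a function of m only. -/
/-- Local version of `Xset`, for a fixed prime and inside a subgroup `N`. -/
def XP {G : Type*} [Group G] (p : ℕ) (N : Subgroup G) : Set G :=
  {z | ∃ (Q : Subgroup G) (a y : G), Q ≤ N ∧ IsPGroup p Q ∧ y ∈ N ∧ a ∈ Q ∧
    y⁻¹ * a * y ∈ Q ∧ z = a⁻¹ * y⁻¹ * a * y}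

theorem XP_subset_Xset {G : Type*} [Group G] [Finite G] {p : ℕ} (hp : Fact p.Prime)
    {N : Subgroup G} {z : G} (hz : z ∈ XP p N) : z ∈ Xset G := by
  obtain ⟨Q, a, y, hQN, hQ, hy, ha, hay, rfl⟩ := hz
  obtain ⟨P, hP⟩ := hQ.exists_le_sylow
  refine ⟨p, hp, P, a, y, rfl, hP ha, ?_⟩
  have := P.mul_mem (P.inv_mem (hP ha)) (hP hay)
  simpa [mul_assoc] using this

theorem XP_mem {G : Type*} [Group G] {p : ℕ}
    {N : Subgroup G} {z : G} (hz : z ∈ XP p N) : z ∈ N := by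
  obtain ⟨Q, a, y, hQN, hQ, hy, ha, hay, rfl⟩ := hz
  exact N.mul_mem (N.mul_mem (N.mul_mem (N.inv_mem (hQN ha)) (N.inv_mem hy)) (hQN ha)) hy

theorem index_centralizer_normalClosure_le {G : Type*} [Group G] [Finite G] (z : G) (m : ℕ)
    (h : Nat.card {h : G // IsConj z h} ≤ m) :
    (Subgroup.centralizer (Subgroup.normalClosure {z} : Set G)).index ≤ m.factorial := by
  set H := Subgroup.centralizer ({z} : Set G) with hH
  have h1 : H.index ≤ m := by
    refine le_trans ?_ h
    let φ : {h : G // IsConj z h} → G ⧸ H := fun w =>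
      (QuotientGroup.mk (isConj_iff.1 w.2).choose : G ⧸ H)
    refine Nat.card_le_card_of_surjective φ ?_
    intro q
    obtain ⟨g, rfl⟩ := QuotientGroup.mk_surjective q
    have hc : IsConj z (g * z * g⁻¹) := isConj_iff.2 ⟨g, rfl⟩
    refine ⟨⟨g * z * g⁻¹, hc⟩, ?_⟩
    have hs := (isConj_iff.1 hc).choose_spec
    change QuotientGroup.mk (isConj_iff.1 hc).choose = _
    generalize (isConj_iff.1 hc).choose = c at hs
    rw [QuotientGroup.eq, hH, Subgroup.mem_centralizer_singleton_iff]
    calc c⁻¹ * g * z = c⁻¹ * (g * z * g⁻¹) * g := by group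
      _ = z * (c⁻¹ * g) := by rw [← hs]; group
  have h2 : H.normalCore.index ≤ m.factorial := by
    have : H.normalCore.index ∣ H.index.factorial := by
      rw [Subgroup.normalCore_eq_ker, Subgroup.index_ker, Subgroup.index_eq_card, ← Nat.card_perm]
      exact Subgroup.card_subgroup_dvd_card (MulAction.toPermHom G (G ⧸ H)).range
    exact (Nat.le_of_dvd (Nat.factorial_pos _) this).trans (Nat.factorial_le h1)
  have h3 : H.normalCore ≤ Subgroup.centralizer (Subgroup.normalClosure {z} : Set G) := by
    rw [Subgroup.le_centralizer_iff]
    apply Subgroup.normalClosure_le_normal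
    rw [Set.singleton_subset_iff, SetLike.mem_coe, Subgroup.mem_centralizer_iff]
    intro c hc
    have := H.normalCore_le hc
    rwa [hH, Subgroup.mem_centralizer_singleton_iff] at this
  exact (Nat.le_of_dvd (Nat.pos_of_ne_zero Subgroup.index_ne_zero_of_finite)
    (Subgroup.index_dvd_of_le h3)).trans h2

/-- minimal normal subgroup -/
structure MinNormal {G : Type*} [Group G] (M : Subgroup G) : Prop where
  normal : M.Normal
  ne_bot : M ≠ ⊥
  min : ∀ K : Subgroup G, K.Normal → K ≤ M → K ≠ ⊥ → K = M

theorem exists_minNormal {G : Type*} [Group G] [Finite G] (D : Subgroup G) (hD : D.Normal)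
    (h : D ≠ ⊥) : ∃ M, MinNormal M ∧ M ≤ D := by
  obtain ⟨M, hM, hmin⟩ := (Set.toFinite {K : Subgroup G | K.Normal ∧ K ≤ D ∧ K ≠ ⊥}).exists_minimal
    ⟨D, hD, le_rfl, h⟩
  refine ⟨M, ⟨hM.1, hM.2.2, fun K hK hKM hK1 => ?_⟩, hM.2.1⟩
  exact le_antisymm hKM (hmin ⟨hK, hKM.trans hM.2.1, hK1⟩ hKM)

/-- In a group without soluble normal subgroups a minimal normal subgroup contains a nontrivial
`XP` element for each prime dividing its order. -/
theorem exists_XP {G : Type*} [Group G] [Finite G]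
    (hG : ∀ H : Subgroup G, H.Normal → IsSolvable H → H = ⊥)
    {M : Subgroup G} (hM : MinNormal M) {p : ℕ} (hp : Fact p.Prime) (hpM : p ∣ Nat.card M) :
    ∃ z ∈ XP p M, z ≠ 1 := by
  by_contra! hcon
  have hMn := hM.normal
  -- M is perfect
  have hperf : commutator M = ⊤ := by
    have hn : ((commutator M).map M.subtype).Normal := inferInstance
    by_cases hb : (commutator M).map M.subtype = ⊥
    · exfalso
      rw [Subgroup.map_eq_bot_iff_of_injective _ M.subtype_injective] at hb
      apply hM.ne_bot
      refine hG M hMn ⟨⟨1, ?_⟩⟩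
      rw [derivedSeries_one]; exact hb
    · have := hM.min _ hn (Subgroup.map_subtype_le _) hb
      rw [← Subgroup.map_subtype_inj, this, ← MonoidHom.range_eq_map, Subgroup.range_subtype]
  let P : Sylow p M := default
  have hconj : ∀ a ∈ P, ∀ y : M, y⁻¹ * a * y ∈ P → a * y = y * a := by
    intro a ha y hy
    have := hcon ((a : G)⁻¹ * (y : G)⁻¹ * a * y)
      ⟨(P : Subgroup M).map M.subtype, a, y, Subgroup.map_subtype_le _, P.2.map _, y.2,
        ⟨a, ha, rfl⟩, ⟨_, hy, by simp⟩, rfl⟩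
    have h2 : (a⁻¹ * y⁻¹ * a * y : M) = 1 := by
      apply Subtype.ext; simpa using this
    calc a * y = y * a * (a⁻¹ * y⁻¹ * a * y) := by group
      _ = y * a := by rw [h2, mul_one]
  have hP : Subgroup.normalizer P ≤ Subgroup.centralizer (P : Set M) := by
    intro y hy
    rw [Subgroup.mem_centralizer_iff]
    intro a ha
    refine hconj a ha y ?_
    have := (Subgroup.mem_normalizer_iff.1 (Subgroup.inv_mem _ hy) a).1 ha
    rw [inv_inv] at this
    exact this
  have hc : IsMulCommutative P :=
    ⟨⟨fun a b => Subtype.ext (hP (Subgroup.le_normalizer b.2) a a.2)⟩⟩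
  have hk : (MonoidHom.transferSylow P hP).ker = ⊤ := by
    rw [eq_top_iff, ← hperf, commutator_def, Subgroup.commutator_le]
    intro a _ b _
    rw [MonoidHom.mem_ker, map_commutatorElement, commutatorElement_eq_one_iff_mul_comm]
    exact hc.is_comm.comm _ _
  apply MonoidHom.not_dvd_card_ker_transferSylow P hP
  rw [hk, Subgroup.card_top]
  exact hpM

theorem XP_mul {G : Type*} [Group G] {p : ℕ} {M N : Subgroup G}
    (hMN : M ≤ Subgroup.centralizer (N : Set G)) {z x : G} (hz : z ∈ XP p M) (hx : x ∈ XP p N) :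
    z * x ∈ XP p (M ⊔ N) := by
  obtain ⟨Q, a, y, hQN, hQ, hy, ha, hay, rfl⟩ := hz
  obtain ⟨S, b, w, hSN, hS, hw, hb, hbw, rfl⟩ := hx
  have hcom : ∀ u ∈ M, ∀ v ∈ N, v * u = u * v := fun u hu v hv =>
    Subgroup.mem_centralizer_iff.1 (hMN hu) v hv
  refine ⟨Q ⊔ S, a * b, y * w, sup_le_sup hQN hSN, ?_, ?_, ?_, ?_, ?_⟩
  · refine hQ.to_sup_of_normal_right' hS ?_
    intro u hu
    have hu' : u ∈ Subgroup.centralizer (S : Set G) := by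
      rw [Subgroup.mem_centralizer_iff]
      exact fun v hv => hcom u (hQN hu) v (hSN hv)
    exact Subgroup.centralizer_le_normalizer _ hu'
  · exact Subgroup.mul_mem_sup hy hw
  · exact Subgroup.mul_mem_sup ha hb
  · have e : (y * w)⁻¹ * (a * b) * (y * w) = (y⁻¹ * a * y) * (w⁻¹ * b * w) := by
      have h1 := hcom _ (hQN hay) w⁻¹ (N.inv_mem hw)
      have h2 := hcom y hy b (hSN hb)
      calc (y * w)⁻¹ * (a * b) * (y * w) = w⁻¹ * y⁻¹ * a * (b * y) * w := by group
        _ = w⁻¹ * (y⁻¹ * a * y) * b * w := by rw [h2]; group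
        _ = _ := by rw [h1]; group
    rw [e]
    exact Subgroup.mul_mem_sup hay hbw
  · have h1 := hcom _ (M.inv_mem (hQN ha)) _ (N.mul_mem (N.inv_mem (hSN hb)) (N.inv_mem hw))
    have h3 := hcom _ (M.mul_mem (M.mul_mem (M.mul_mem (M.inv_mem (hQN ha)) (M.inv_mem hy))
      (hQN ha)) hy) (b⁻¹ * w⁻¹) (N.mul_mem (N.inv_mem (hSN hb)) (N.inv_mem hw))
    have h4 := hcom _ (M.mul_mem (M.inv_mem (hQN ha)) (M.inv_mem hy)) (w⁻¹) ((N.inv_mem hw))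
    have h5 := hcom y hy b (hSN hb)
    have h6 := hcom _ (M.inv_mem (hQN ha)) b⁻¹ (N.inv_mem (hSN hb))
    calc a⁻¹ * y⁻¹ * a * y * (b⁻¹ * w⁻¹ * b * w)
        = ((a⁻¹ * y⁻¹ * a * y) * (b⁻¹ * w⁻¹)) * b * w := by group
      _ = (b⁻¹ * a⁻¹) * (a * w⁻¹ * a⁻¹) * y⁻¹ * a * (y * b) * w := by rw [← h3]; group
      _ = (b⁻¹ * a⁻¹) * (w⁻¹ * y⁻¹) * a * (b * y) * w := by
        rw [h5, ← hcom a (hQN ha) _ (N.inv_mem hw)]; group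
      _ = _ := by group

/-- The key step for one prime. -/
theorem exists_one_prime {G : Type*} [Group G] [Finite G]
    (hG : ∀ H : Subgroup G, H.Normal → IsSolvable H → H = ⊥) {m : ℕ}
    (hm : ∀ x ∈ Xset G, Nat.card {h : G // IsConj x h} ≤ m) (p : ℕ) (hp : Fact p.Prime) :
    ∃ C : Subgroup G, C.Normal ∧ C.index ≤ m.factorial ∧
      ∀ M, MinNormal M → M ≤ C → ¬ p ∣ Nat.card M := by
  obtain ⟨N, ⟨x, hx, hxN⟩, hmax⟩ := (Set.toFinite {N : Subgroup G | ∃ x ∈ XP p N,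
    Subgroup.normalClosure {x} = N}).exists_maximal
    ⟨⊥, 1, ⟨⊥, 1, 1, le_rfl, IsPGroup.of_bot, one_mem _, one_mem _, by simp, by simp⟩, by
      rw [eq_bot_iff]
      exact Subgroup.normalClosure_le_normal (by simp)⟩
  have hN : N.Normal := by rw [← hxN]; infer_instance
  refine ⟨Subgroup.centralizer (N : Set G), inferInstance, ?_, ?_⟩
  · rw [← hxN]
    exact index_centralizer_normalClosure_le x m (hm x (XP_subset_Xset hp hx))
  intro M hM hMC hpM
  have hMn := hM.normal
  have hZ : ¬ M ≤ Subgroup.centralizer (M : Set G) := by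
    intro h
    have hc : IsMulCommutative M := Subgroup.le_centralizer_iff_isMulCommutative.1 h
    exact hM.ne_bot (hG M hMn (isSolvable_of_comm fun a b => hc.is_comm.comm a b))
  obtain ⟨z, hz, hz1⟩ := exists_XP hG hM hp hpM
  have hzM := XP_mem hz
  have hnc : Subgroup.normalClosure {z} = M := by
    refine hM.min _ inferInstance (Subgroup.normalClosure_le_normal (by simpa using hzM)) ?_
    intro h
    apply hz1
    rw [← Subgroup.mem_bot, ← h]
    exact Subgroup.subset_normalClosure rfl
  obtain ⟨h, hh, hne⟩ : ∃ h ∈ M, z * h ≠ h * z := by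
    by_contra! hcon
    apply hZ
    conv_lhs => rw [← hnc]
    apply Subgroup.normalClosure_le_normal
    rw [Set.singleton_subset_iff, SetLike.mem_coe, Subgroup.mem_centralizer_iff]
    exact fun h hh => (hcon h hh).symm
  set K := Subgroup.normalClosure {z * x} with hK
  have hKn : K.Normal := inferInstance
  have hzxK : z * x ∈ K := Subgroup.subset_normalClosure rfl
  have hxh : x * h = h * x := Subgroup.mem_centralizer_iff.1 (hMC hh) x (XP_mem hx)
  have hMK : M ≤ K := by
    have : K ⊓ M = M := by
      refine hM.min _ inferInstance inf_le_right ?_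
      intro hbot
      have hmem : (z * h * z⁻¹ * h⁻¹) ∈ K ⊓ M := by
        refine ⟨?_, ?_⟩
        · have e : z * h * z⁻¹ * h⁻¹ = (z * x) * (h * (z * x)⁻¹ * h⁻¹) := by
            have : x * h * x⁻¹ = h := by rw [hxh]; group
            calc z * h * z⁻¹ * h⁻¹ = z * (x * h * x⁻¹) * z⁻¹ * h⁻¹ := by rw [this]
              _ = _ := by group
          rw [e]
          exact K.mul_mem hzxK (hKn.conj_mem _ (K.inv_mem hzxK) h)
        · exact M.mul_mem (M.mul_mem (M.mul_mem hzM hh) (M.inv_mem hzM)) (M.inv_mem hh)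
      rw [hbot, Subgroup.mem_bot] at hmem
      apply hne
      calc z * h = (z * h * z⁻¹ * h⁻¹) * (h * z) := by group
        _ = h * z := by rw [hmem, one_mul]
    rw [← this]; exact inf_le_left
  have hNK : N ≤ K := by
    rw [← hxN]
    apply Subgroup.normalClosure_le_normal
    rw [Set.singleton_subset_iff, SetLike.mem_coe]
    simpa using K.mul_mem (K.inv_mem (hMK hzM)) hzxK
  have hKe : K = M ⊔ N := by
    refine le_antisymm (Subgroup.normalClosure_le_normal ?_) (sup_le hMK hNK)
    rw [Set.singleton_subset_iff, SetLike.mem_coe]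
    exact Subgroup.mul_mem_sup hzM (XP_mem hx)
  have hle := hmax (y := M ⊔ N) ⟨z * x, XP_mul hMC hz hx, hKe⟩ le_sup_right
  have hMN : M ≤ N := le_sup_left.trans hle
  exact hZ (hMC.trans (Subgroup.centralizer_le hMN))

theorem card_minNormal_le {G : Type*} [Group G] [Finite G]
    (hG : ∀ H : Subgroup G, H.Normal → IsSolvable H → H = ⊥) {m : ℕ}
    (hm : ∀ x ∈ Xset G, Nat.card {h : G // IsConj x h} ≤ m) {M : Subgroup G} (hM : MinNormal M) :
    Nat.card M ≤ m.factorial := by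
  have hMn := hM.normal
  have h1 : Nat.card M ≠ 1 := fun h => hM.ne_bot (Subgroup.card_eq_one.1 h)
  have hp : Fact (Nat.card M).minFac.Prime := ⟨Nat.minFac_prime h1⟩
  obtain ⟨z, hz, hz1⟩ := exists_XP hG hM hp (Nat.minFac_dvd _)
  have hnc : Subgroup.normalClosure {z} = M := by
    refine hM.min _ inferInstance (Subgroup.normalClosure_le_normal (by simpa using XP_mem hz)) ?_
    intro h
    apply hz1
    rw [← Subgroup.mem_bot, ← h]
    exact Subgroup.subset_normalClosure rfl
  have hi := index_centralizer_normalClosure_le z m (hm z (XP_subset_Xset hp hz))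
  rw [hnc] at hi
  refine le_trans ?_ hi
  have hdis : M ⊓ Subgroup.centralizer (M : Set G) = ⊥ := by
    refine hG _ inferInstance (isSolvable_of_comm ?_)
    rintro ⟨a, ha, ha'⟩ ⟨b, hb, hb'⟩
    exact Subtype.ext (Subgroup.mem_centralizer_iff.1 hb' a ha)
  let φ : M → G ⧸ Subgroup.centralizer (M : Set G) := fun a => QuotientGroup.mk (a : G)
  refine Nat.card_le_card_of_injective φ ?_
  intro a b hab
  have h2 : (a : G)⁻¹ * b ∈ Subgroup.centralizer (M : Set G) := QuotientGroup.eq.1 hab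
  have h3 : (a : G)⁻¹ * b ∈ M ⊓ Subgroup.centralizer (M : Set G) :=
    ⟨M.mul_mem (M.inv_mem a.2) b.2, h2⟩
  rw [hdis, Subgroup.mem_bot, inv_mul_eq_one] at h3
  exact Subtype.ext h3

theorem card_le_of_radical_trivial {G : Type*} [Group G] [Finite G]
    (hG : ∀ H : Subgroup G, H.Normal → IsSolvable H → H = ⊥) {m : ℕ}
    (hm : ∀ x ∈ Xset G, Nat.card {h : G // IsConj x h} ≤ m) :
    Nat.card G ≤ m.factorial ^ (m.factorial + 1) := by
  have key : ∀ p : ℕ, ∃ C : Subgroup G, C.Normal ∧ C.index ≤ m.factorial ∧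
      ∀ M, MinNormal M → M ≤ C → p.Prime → ¬ p ∣ Nat.card M := by
    intro p
    by_cases hp : p.Prime
    · obtain ⟨C, h1, h2, h3⟩ := exists_one_prime hG hm p ⟨hp⟩
      exact ⟨C, h1, h2, fun M hM hMC _ => h3 M hM hMC⟩
    · exact ⟨⊤, inferInstance, by simpa using Nat.one_le_iff_ne_zero.2 (Nat.factorial_ne_zero m),
        fun _ _ _ h => absurd h hp⟩
  choose C hCn hCi hC using key
  let D : Subgroup G := ⨅ i : Fin (m.factorial + 1), C i
  have hDn : D.Normal := Subgroup.normal_iInf_normal fun i => hCn i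
  have hDi : D.index ≤ m.factorial ^ (m.factorial + 1) := by
    refine (Subgroup.index_iInf_le _).trans ?_
    refine (Finset.prod_le_pow_card Finset.univ (fun i : Fin (m.factorial + 1) => (C i).index) m.factorial fun i _ => hCi i).trans ?_
    simp
  have hD : D = ⊥ := by
    by_contra hne
    obtain ⟨M, hM, hMD⟩ := exists_minNormal D hDn hne
    have h1 : Nat.card M ≠ 1 := fun h => hM.ne_bot (Subgroup.card_eq_one.1 h)
    have hle : (Nat.card M).minFac ≤ m.factorial :=
      (Nat.minFac_le Nat.card_pos).trans (card_minNormal_le hG hm hM)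
    exact hC (Nat.card M).minFac M hM
      (hMD.trans (iInf_le (fun i : Fin (m.factorial + 1) => C i)
        ⟨(Nat.card M).minFac, Nat.lt_succ_of_le hle⟩))
      (Nat.minFac_prime h1) (Nat.minFac_dvd _)
  rwa [hD, Subgroup.index_bot] at hDi

/-- Elements of `Xset` lift along quotient maps. -/
theorem Xset_lift {G : Type*} [Group G] [Finite G] (R : Subgroup G) [R.Normal] {z : G ⧸ R}
    (hz : z ∈ Xset (G ⧸ R)) : ∃ w ∈ Xset G, (QuotientGroup.mk w : G ⧸ R) = z := by
  obtain ⟨p, hp, P', x', y', rfl, hx', hz'⟩ := hz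
  obtain ⟨P, rfl⟩ := Sylow.mapSurjective_surjective (QuotientGroup.mk'_surjective R) p P'
  obtain ⟨a, ha, rfl⟩ := hx'
  obtain ⟨y, rfl⟩ := QuotientGroup.mk_surjective y'
  have hb' : ∃ q ∈ P, (QuotientGroup.mk q : G ⧸ R) = QuotientGroup.mk (y⁻¹ * a * y) := by
    have := ((P.mapSurjective (QuotientGroup.mk'_surjective R)) : Subgroup (G ⧸ R)).mul_mem
      (⟨a, ha, rfl⟩ : QuotientGroup.mk' R a ∈ (P : Subgroup G).map (QuotientGroup.mk' R)) hz'
    obtain ⟨q, hq, he⟩ := this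
    refine ⟨q, hq, ?_⟩
    change QuotientGroup.mk' R q = _
    rw [he]
    simp [mul_assoc]
  obtain ⟨q, hq, hqb⟩ := hb'
  set b := y⁻¹ * a * y with hb
  set H : Subgroup G := (P : Subgroup G) ⊔ R with hH
  have hbH : b ∈ H := by
    have : q⁻¹ * b ∈ R := QuotientGroup.eq.1 hqb
    have h2 := Subgroup.mul_mem_sup (S := (P : Subgroup G)) (T := R) hq this
    simpa using h2
  have hPH : (P : Subgroup G) ≤ H := le_sup_left
  let PH : Sylow p H := P.subtype hPH
  have hbp : IsPGroup p (Subgroup.zpowers (⟨b, hbH⟩ : H)) := by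
    obtain ⟨k, hk⟩ := P.2 ⟨a, ha⟩
    have hk' : a ^ p ^ k = 1 := by simpa using congrArg Subtype.val hk
    rw [IsPGroup.iff_card, Nat.card_zpowers]
    have : orderOf (⟨b, hbH⟩ : H) ∣ p ^ k := by
      apply orderOf_dvd_of_pow_eq_one
      apply Subtype.ext
      have : b ^ p ^ k = 1 := by
        have e : b = y⁻¹ * a * (y⁻¹)⁻¹ := by simp [hb]
        rw [e, conj_pow, hk']; simp
      simpa using this
    obtain ⟨j, _, hj⟩ := (Nat.dvd_prime_pow hp.out).1 this
    exact ⟨j, hj⟩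
  obtain ⟨S, hS⟩ := hbp.exists_le_sylow
  obtain ⟨g, hg⟩ := MulAction.exists_smul_eq H S PH
  have hgb : (g : G) * b * (g : G)⁻¹ ∈ P := by
    have h1 : g * ⟨b, hbH⟩ * g⁻¹ ∈ PH := by
      rw [← hg]
      have := Subgroup.smul_mem_pointwise_smul (⟨b, hbH⟩ : H) (MulAut.conj g) (S : Subgroup H)
        (hS (Subgroup.mem_zpowers _))
      rw [MulAut.smul_def, MulAut.conj_apply] at this
      exact this
    exact h1
  obtain ⟨c, hc, n, hn, hcn⟩ := Subgroup.mem_sup_of_normal_right.1 g.2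
  have hnb : n * b * n⁻¹ ∈ (P : Subgroup G) := by
    have := P.mul_mem (P.mul_mem (P.inv_mem hc) hgb) hc
    rw [← hcn] at this
    convert this using 1
    group
  refine ⟨a⁻¹ * (y * n⁻¹)⁻¹ * a * (y * n⁻¹), ⟨p, hp, P, a, y * n⁻¹, rfl, ha, ?_⟩, ?_⟩
  · have := P.mul_mem (P.inv_mem ha) hnb
    convert this using 1
    rw [hb]; group
  · have : (QuotientGroup.mk n : G ⧸ R) = 1 := (QuotientGroup.eq_one_iff n).2 hn
    simp [this]


/-- If `G` is a finite group with `|x^G| ≤ m` for all `x ∈ Xset G` and `R` is the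
soluble radical of `G` (the largest soluble normal subgroup), then the index of `R`
(that is, `|G/R|`) is `m`-bounded. -/
theorem soluble_radical_index_bounded :
    ∃ f : ℕ → ℕ, ∀ (G : Type) (_ : Group G) (_ : Finite G) (m : ℕ), 0 < m →
      (∀ x ∈ Xset G, Nat.card {h : G // IsConj x h} ≤ m) →
      ∀ R : Subgroup G,
        IsGreatest {H : Subgroup G | H.Normal ∧ IsSolvable H} R →
        R.index ≤ f m := by
  refine ⟨fun m => m.factorial ^ (m.factorial + 1), ?_⟩
  intro G _ _ m _ hm R hR
  have hRn : R.Normal := hR.1.1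
  have hRs : Group.IsSolvable R := hR.1.2

  rw [Subgroup.index_eq_card]
  refine card_le_of_radical_trivial (G := G ⧸ R) ?_ ?_
  · intro H hHn hHs
    have hHs' : Group.IsSolvable H := hHs
    have hle : H.comap (QuotientGroup.mk' R) ≤ R := by
      refine hR.2 ⟨inferInstance, ?_⟩
      have hRle : R ≤ H.comap (QuotientGroup.mk' R) := by
        intro r hr
        rw [Subgroup.mem_comap, QuotientGroup.mk'_apply, (QuotientGroup.eq_one_iff r).2 hr]
        exact H.one_mem
      refine Group.isSolvable_of_ker_le_range (Subgroup.inclusion hRle)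
        ((QuotientGroup.mk' R).subgroupComap H) ?_
      intro g hg
      have h1 : (QuotientGroup.mk' R) (g : G) = 1 := congrArg Subtype.val hg
      exact ⟨⟨g, (QuotientGroup.eq_one_iff _).1 h1⟩, rfl⟩
    rw [eq_bot_iff]
    intro q hq
    obtain ⟨g, rfl⟩ := QuotientGroup.mk_surjective q
    exact (QuotientGroup.eq_one_iff g).2 (hle hq)
  · intro z hz
    obtain ⟨w, hw, rfl⟩ := Xset_lift R hz
    refine le_trans ?_ (hm w hw)
    let φ : {h : G // IsConj w h} → {h : G ⧸ R // IsConj (QuotientGroup.mk w : G ⧸ R) h} :=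
      fun h => ⟨QuotientGroup.mk' R h.1, (QuotientGroup.mk' R).map_isConj h.2⟩
    refine Nat.card_le_card_of_surjective φ ?_
    rintro ⟨h, hh⟩
    obtain ⟨c, hc⟩ := isConj_iff.1 hh
    obtain ⟨g, rfl⟩ := QuotientGroup.mk_surjective c
    exact ⟨⟨g * w * g⁻¹, isConj_iff.2 ⟨g, rfl⟩⟩, Subtype.ext hc⟩
end

section
/- Let m be a positive integer and G a finite group in which |x^G| ≤ m whenever x is a commutator of prime power order. Then the second derived subgroup G'' has order bounded by a function of m only. -/
section Helpers
open Subgroup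
open scoped commutatorElement



/-- Basic counting: the order of a subgroup is at most that of its image times the kernel. -/
theorem card_le_card_map_mul {G : Type} [Group G] [Finite G] (K L : Subgroup G) [L.Normal] :
    Nat.card K ≤ Nat.card (K.map (QuotientGroup.mk' L)) * Nat.card L := by
  rw [← Subgroup.relIndex_ker, QuotientGroup.ker_mk']
  calc Nat.card K = (⊥ : Subgroup G).relIndex K := (relIndex_bot_left K).symm
    _ = ((⊥ : Subgroup G).relIndex (L ⊓ K)) * (L.relIndex K) := by
        rw [mul_comm, ← inf_relIndex_right L K, mul_comm]
        exact (relIndex_mul_relIndex _ _ _ bot_le inf_le_right).symm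
    _ = Nat.card (L ⊓ K : Subgroup G) * (L.relIndex K) := by rw [relIndex_bot_left]
    _ ≤ Nat.card L * L.relIndex K := by
        gcongr
        exact Subgroup.card_le_of_le inf_le_left
    _ = _ := mul_comm _ _

theorem index_pos' {G : Type} [Group G] [Finite G] (K : Subgroup G) : 0 < K.index :=
  Nat.pos_of_ne_zero index_ne_zero_of_finite

theorem index_le_of_le' {G : Type} [Group G] [Finite G] {K L : Subgroup G} (h : K ≤ L) :
    L.index ≤ K.index := Subgroup.index_antitone h

theorem index_map_le' {G G' : Type} [Group G] [Group G'] [Finite G] (K : Subgroup G)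
    {f : G →* G'} (hf : Function.Surjective f) : (K.map f).index ≤ K.index :=
  Nat.le_of_dvd (index_pos' K) (index_map_dvd _ hf)

theorem relIndex_le_index' {G : Type} [Group G] [Finite G] (K H : Subgroup G) :
    K.relIndex H ≤ K.index := by
  rw [← relIndex_top_right]
  exact relIndex_le_of_le_right le_top (by rw [relIndex_top_right]; exact (index_pos' K).ne')

/-- Schur's theorem, with an explicit bound. -/
theorem schur_bound : ∃ f : ℕ → ℕ, ∀ (G : Type) [Group G] [Finite G] (n : ℕ),
    (center G).index ≤ n → Nat.card (commutator G) ≤ f n := by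
  refine ⟨fun n => n ^ (n * (n * n) + 1), fun G _ _ n hn => ?_⟩
  have h1 : Nat.card (commutatorSet G) ≤ n * n := by
    have hs : Function.Surjective (fun q : (G ⧸ center G) × (G ⧸ center G) =>
        (⟨⁅q.1.out, q.2.out⁆, ⟨_, _, rfl⟩⟩ : commutatorSet G)) := by
      rintro ⟨_, a, b, rfl⟩
      refine ⟨(QuotientGroup.mk a, QuotientGroup.mk b), ?_⟩
      obtain ⟨z, hz⟩ := QuotientGroup.mk_out_eq_mul (center G) a
      obtain ⟨w, hw⟩ := QuotientGroup.mk_out_eq_mul (center G) b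
      ext
      have hz' := fun g => mem_center_iff.1 z.2 g
      have hw' := fun g => mem_center_iff.1 w.2 g
      simp only [hz, hw, commutatorElement_def, mul_inv_rev]
      have e1 : a * (z : G) * (b * (w : G)) = (w : G) * (a * b) * z := by
        rw [← mul_assoc, hw' , mul_assoc a, ← hz' b]; group
      have e2 : (z : G)⁻¹ * a⁻¹ * ((w : G)⁻¹ * b⁻¹) = (z:G)⁻¹ * (a⁻¹ * b⁻¹) * (w:G)⁻¹ := by
        have : a⁻¹ * (w : G)⁻¹ * b⁻¹ = a⁻¹ * b⁻¹ * (w:G)⁻¹ := by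
          rw [mul_assoc, mul_assoc, ← mul_inv_rev, ← mul_inv_rev (w:G), hw']
        simp only [mul_assoc] at this ⊢
        rw [this]
      calc a * (z : G) * (b * (w : G)) * ((z : G)⁻¹ * a⁻¹) * ((w : G)⁻¹ * b⁻¹)
          = (a * (z : G) * (b * (w : G))) * ((z : G)⁻¹ * a⁻¹ * ((w : G)⁻¹ * b⁻¹)) := by group
        _ = (w : G) * (a * b * (a⁻¹ * b⁻¹)) * (w:G)⁻¹ := by rw [e1, e2]; group
        _ = a * b * a⁻¹ * b⁻¹ := by rw [← hw']; group
    calc Nat.card (commutatorSet G) ≤ Nat.card ((G ⧸ center G) × (G ⧸ center G)) :=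
          Nat.card_le_card_of_surjective _ hs
      _ = (center G).index * (center G).index := by rw [Nat.card_prod]; rfl
      _ ≤ n * n := Nat.mul_le_mul hn hn
  have h2 := card_commutator_dvd_index_center_pow G
  have h0 := index_pos' (center G)
  refine (Nat.le_of_dvd (by positivity) h2).trans ?_
  have hn0 : 0 < n := lt_of_lt_of_le h0 hn
  calc _ ≤ n ^ ((center G).index * Nat.card (commutatorSet G) + 1) := Nat.pow_le_pow_left hn _
    _ ≤ _ := Nat.pow_le_pow_right hn0 (by gcongr)

/-- Index of the centralizer of a finite set. -/
theorem index_centralizer_le {G : Type} [Group G] [Finite G] (S : Set G) (m k : ℕ) (hm : 0 < m)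
    (hS : S.ncard ≤ k) (h : ∀ s ∈ S, (centralizer {s}).index ≤ m) :
    (centralizer S).index ≤ m ^ k := by
  classical
  have : Fintype S := Fintype.ofFinite _
  have e : (⨅ s : S, centralizer {(s : G)}) ≤ centralizer S := by
    intro g hg
    rw [mem_iInf] at hg
    rw [mem_centralizer_iff]
    intro s hs
    exact mem_centralizer_iff.1 (hg ⟨s, hs⟩) s rfl
  calc (centralizer S).index ≤ _ := index_le_of_le' e
    _ ≤ ∏ s : S, (centralizer {(s : G)}).index := index_iInf_le _
    _ ≤ ∏ s : S, m := Finset.prod_le_prod' fun s _ => h s s.2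
    _ = m ^ S.ncard := by
        rw [Finset.prod_const, Finset.card_univ, ← Nat.card_coe_set_eq, Nat.card_eq_fintype_card]
    _ ≤ m ^ k := Nat.pow_le_pow_right hm hS

theorem index_normalCore_le {G : Type} [Group G] [Finite G] (K : Subgroup G) (n : ℕ)
    (h : K.index ≤ n) : K.normalCore.index ≤ n.factorial := by
  rw [normalCore_eq_ker, index_ker]
  calc _ ≤ Nat.card (Equiv.Perm (G ⧸ K)) := Nat.card_le_card_of_injective _ Subtype.val_injective
    _ = (Nat.card (G ⧸ K)).factorial := Nat.card_perm
    _ ≤ _ := Nat.factorial_le h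

theorem ncard_conj {G : Type} [Group G] [Finite G] (x : G) :
    (conjugatesOf x).ncard = (centralizer {x}).index := by
  have : Finite (ConjAct G) := ‹Finite G›
  have h1 := (centralizer {x}).index_mul_card
  have h2 := (MulAction.stabilizer (ConjAct G) x).index_mul_card
  rw [nat_card_centralizer_nat_card_stabilizer] at h1
  have h3 : (centralizer {x}).index = (MulAction.stabilizer (ConjAct G) x).index :=
    Nat.eq_of_mul_eq_mul_right Nat.card_pos (h1.trans h2.symm)
  rw [h3, MulAction.index_stabilizer]
  congr 1
  ext y
  rw [ConjAct.mem_orbit_conjAct, isConj_comm]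
  rfl

theorem card_isConj {G : Type} [Group G] [Finite G] (x : G) :
    Nat.card {h : G // IsConj x h} = (centralizer {x}).index := by
  rw [← ncard_conj, ← Nat.card_coe_set_eq]
  rfl

theorem index_centralizer_mul_le {G : Type} [Group G] [Finite G] (x y : G) :
    (centralizer {x * y}).index ≤ (centralizer {x}).index * (centralizer {y}).index := by
  refine le_trans (index_le_of_le' ?_) (index_inf_le (H := centralizer {x}) (K := centralizer {y}))
  intro g hg
  have h1 := mem_centralizer_iff.1 hg.1 x rfl
  have h2 := mem_centralizer_iff.1 hg.2 y rfl
  rw [mem_centralizer_iff]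
  rintro _ rfl
  rw [mul_assoc, h2, ← mul_assoc, h1, mul_assoc]

theorem index_centralizer_inv {G : Type} [Group G] (x : G) :
    (centralizer {x⁻¹}).index = (centralizer {x}).index := by
  congr 1
  ext g
  rw [mem_centralizer_singleton_iff, mem_centralizer_singleton_iff]
  constructor
  · intro h
    have := congrArg (fun z => x * z * x) h
    simpa [mul_assoc] using this.symm
  · intro h
    have := congrArg (fun z => x⁻¹ * z * x⁻¹) h
    simpa [mul_assoc] using this.symm

theorem index_centralizer_conj {G : Type} [Group G] [Finite G] (x g : G) :
    (centralizer {g * x * g⁻¹}).index = (centralizer {x}).index := by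
  rw [← ncard_conj, ← ncard_conj]
  congr 1
  exact (IsConj.conjugatesOf_eq (isConj_iff.2 ⟨g, rfl⟩)).symm

/-- images under surjective homomorphisms have no larger centralizer index -/
theorem index_centralizer_map_le {G G' : Type} [Group G] [Group G'] [Finite G] (f : G →* G')
    (hf : Function.Surjective f) (x : G) :
    (centralizer {f x}).index ≤ (centralizer {x}).index := by
  have : Finite G' := Finite.of_surjective f hf
  refine le_trans (index_le_of_le' ?_) (index_map_le' (centralizer {x}) hf)
  rintro _ ⟨g, hg, rfl⟩
  rw [mem_centralizer_singleton_iff]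
  rw [SetLike.mem_coe, mem_centralizer_singleton_iff] at hg
  rw [← map_mul, ← map_mul, hg]

theorem index_centralizer_subtype_le {G : Type} [Group G] [Finite G] (K : Subgroup G) (x : K) :
    (centralizer {x}).index ≤ (centralizer {(x : G)}).index := by
  refine le_trans (index_le_of_le' ?_) (relIndex_le_index' (centralizer {(x : G)}) K)
  intro g hg
  rw [mem_subgroupOf, mem_centralizer_singleton_iff] at hg
  rw [mem_centralizer_singleton_iff]
  exact Subtype.ext hg

/-- A generating set may be replaced, modulo a normal subgroup of bounded index,
by a bounded subset. -/
theorem exists_small_subset {G : Type} [Group G] [Finite G] (X : Set G) (N : Subgroup G)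
    [N.Normal] : ∃ X0 : Set G, X0 ⊆ X ∧ X0.ncard ≤ N.index ∧ closure X ≤ closure X0 ⊔ N := by
  classical
  let q : G → G ⧸ N := QuotientGroup.mk
  have hc : ∀ z : (q '' X), ∃ x ∈ X, q x = z := fun z => z.2
  choose s hs hq using hc
  refine ⟨Set.range s, ?_, ?_, ?_⟩
  · rintro _ ⟨z, rfl⟩; exact hs z
  · rw [← Set.image_univ]
    refine (Set.ncard_image_le (Set.toFinite _)).trans ?_
    rw [Set.ncard_univ, index_eq_card]
    exact Nat.card_le_card_of_injective _ Subtype.val_injective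
  · rw [closure_le]
    intro x hx
    have h1 : q (s ⟨q x, x, hx, rfl⟩) = q x := hq ⟨q x, x, hx, rfl⟩
    have h2 : (s ⟨q x, x, hx, rfl⟩)⁻¹ * x ∈ N := QuotientGroup.eq.1 h1
    have : x = s ⟨q x, x, hx, rfl⟩ * ((s ⟨q x, x, hx, rfl⟩)⁻¹ * x) := by group
    rw [this]
    exact mul_mem (mem_sup_left (subset_closure ⟨_, rfl⟩)) (mem_sup_right h2)

/-- The normal subgroup of all elements that centralize `H` modulo `L`. -/
def cmod {G : Type} [Group G] (H L : Subgroup G) [L.Normal] : Subgroup G :=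
  (centralizer ((H.map (QuotientGroup.mk' L) : Subgroup (G ⧸ L)) : Set (G ⧸ L))).comap
    (QuotientGroup.mk' L)

theorem mem_cmod {G : Type} [Group G] {H L : Subgroup G} [L.Normal] {g : G} :
    g ∈ cmod H L ↔ ∀ h ∈ H, ⁅h, g⁆ ∈ L := by
  unfold cmod
  rw [mem_comap, mem_centralizer_iff]
  constructor
  · intro h x hx
    have := h _ ⟨x, hx, rfl⟩
    rw [← QuotientGroup.eq_one_iff]
    have h2 : (QuotientGroup.mk' L) ⁅x, g⁆ = 1 := by
      rw [map_commutatorElement, commutatorElement_eq_one_iff_mul_comm]; exact this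
    exact h2
  · rintro h _ ⟨x, hx, rfl⟩
    rw [← commutatorElement_eq_one_iff_mul_comm, ← map_commutatorElement]
    exact (QuotientGroup.eq_one_iff _).2 (h x hx)

instance cmod_normal {G : Type} [Group G] (H L : Subgroup G) [L.Normal] [H.Normal] :
    (cmod H L).Normal := by
  unfold cmod
  have : (H.map (QuotientGroup.mk' L)).Normal :=
    Subgroup.Normal.map inferInstance _ (QuotientGroup.mk'_surjective L)
  infer_instance

theorem cmod_mono {G : Type} [Group G] {H L L' : Subgroup G} [L.Normal] [L'.Normal] (h : L ≤ L') :
    cmod H L ≤ cmod H L' := fun _ hg => mem_cmod.2 fun x hx => h (mem_cmod.1 hg x hx)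

/-- closure of a conjugation invariant set is normal -/
theorem closure_normal' {G : Type} [Group G] (X : Set G)
    (hX : ∀ x ∈ X, ∀ g : G, g * x * g⁻¹ ∈ X) : (closure X).Normal := by
  refine ⟨fun n hn g => ?_⟩
  induction hn using closure_induction with
  | mem x hx => exact subset_closure (hX x hx g)
  | one => simp
  | mul x y _ _ hx hy =>
    have : g * (x * y) * g⁻¹ = (g * x * g⁻¹) * (g * y * g⁻¹) := by group
    rw [this]; exact mul_mem hx hy
  | inv x _ hx =>
    have : g * x⁻¹ * g⁻¹ = (g * x * g⁻¹)⁻¹ := by group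
    rw [this]; exact inv_mem hx

/-- product of boundedly many bounded normal subgroups -/
theorem card_sup_le {G : Type} [Group G] [Finite G] (L M : Subgroup G) [L.Normal] [M.Normal] :
    Nat.card (L ⊔ M : Subgroup G) ≤ Nat.card L * Nat.card M := by
  have h : ((L ⊔ M : Subgroup G) : Set G) ⊆ (fun p : G × G => p.1 * p.2) '' ((L : Set G) ×ˢ (M : Set G)) := by
    intro x hx
    rw [mul_normal] at hx
    obtain ⟨a, ha, b, hb, rfl⟩ := hx
    exact ⟨(a, b), ⟨ha, hb⟩, rfl⟩
  calc Nat.card (L ⊔ M : Subgroup G) = ((L ⊔ M : Subgroup G) : Set G).ncard := rfl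
    _ ≤ _ := Set.ncard_le_ncard h (Set.toFinite _)
    _ ≤ _ := Set.ncard_image_le (Set.toFinite _)
    _ = _ := by rw [Set.ncard_prod]; rfl

/-- Joining finitely many bounded normal subgroups indexed by a finset. -/
theorem exists_normal_sup {G : Type} [Group G] [Finite G] {ι : Type} (s : Finset ι) (b k : ℕ)
    (hb : 0 < b) (hk : s.card ≤ k) (P : ι → Subgroup G → Prop)
    (h : ∀ i ∈ s, ∃ L : Subgroup G, L.Normal ∧ Nat.card L ≤ b ∧ P i L) :
    ∃ L : Subgroup G, L.Normal ∧ Nat.card L ≤ b ^ k ∧ ∀ i ∈ s, ∃ L' ≤ L, L'.Normal ∧ P i L' := by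
  classical
  suffices H : ∃ L : Subgroup G, L.Normal ∧ Nat.card L ≤ b ^ s.card ∧
      ∀ i ∈ s, ∃ L' ≤ L, L'.Normal ∧ P i L' by
    obtain ⟨L, h1, h2, h3⟩ := H
    exact ⟨L, h1, h2.trans (Nat.pow_le_pow_right hb hk), h3⟩
  clear hk
  induction s using Finset.induction_on with
  | empty => exact ⟨⊥, inferInstance, by simp, by simp⟩
  | insert a s ha ih =>
    obtain ⟨L, h1, h2, h3⟩ := ih (fun i hi => h i (Finset.mem_insert_of_mem hi))
    obtain ⟨M, g1, g2, g3⟩ := h a (Finset.mem_insert_self _ _)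
    refine ⟨L ⊔ M, inferInstance, ?_, ?_⟩
    · rw [Finset.card_insert_of_notMem ha, pow_succ]
      exact (card_sup_le L M).trans (Nat.mul_le_mul h2 g2)
    · intro i hi
      rcases Finset.mem_insert.1 hi with rfl | hi
      · exact ⟨M, le_sup_right, g1, g3⟩
      · obtain ⟨L', q1, q2, q3⟩ := h3 i hi
        exact ⟨L', q1.trans le_sup_left, q2, q3⟩

/-- Intersecting finitely many normal subgroups of bounded index indexed by a finset. -/
theorem exists_normal_inf {G : Type} [Group G] [Finite G] {ι : Type} (s : Finset ι) (b k : ℕ)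
    (hb : 0 < b) (hk : s.card ≤ k) (f : ι → Subgroup G)
    (h : ∀ i ∈ s, (f i).Normal ∧ (f i).index ≤ b) :
    ∃ U : Subgroup G, U.Normal ∧ U.index ≤ b ^ k ∧ ∀ i ∈ s, U ≤ f i := by
  classical
  suffices H : ∃ U : Subgroup G, U.Normal ∧ U.index ≤ b ^ s.card ∧ ∀ i ∈ s, U ≤ f i by
    obtain ⟨L, h1, h2, h3⟩ := H
    exact ⟨L, h1, h2.trans (Nat.pow_le_pow_right hb hk), h3⟩
  clear hk
  induction s using Finset.induction_on with
  | empty => exact ⟨⊤, inferInstance, by simp, by simp⟩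
  | insert a s ha ih =>
    obtain ⟨L, h1, h2, h3⟩ := ih (fun i hi => h i (Finset.mem_insert_of_mem hi))
    obtain ⟨g1, g2⟩ := h a (Finset.mem_insert_self _ _)
    refine ⟨L ⊓ f a, inferInstance, ?_, ?_⟩
    · rw [Finset.card_insert_of_notMem ha, pow_succ]
      exact index_inf_le.trans (Nat.mul_le_mul h2 g2)
    · intro i hi
      rcases Finset.mem_insert.1 hi with rfl | hi
      · exact inf_le_right
      · exact inf_le_left.trans (h3 i hi)



/-- abelian case of the bound for `[H, T]` -/
theorem card_commutator_abelian {G : Type} [Group G] [Finite G] (X S : Set G) (N m : ℕ)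
    (hN : 0 < N)
    (hS : ∀ s ∈ S, ∀ g : G, g * s * g⁻¹ ∈ S) (hSm : S.ncard ≤ m)
    (hab : ∀ s ∈ closure S, ∀ t ∈ closure S, s * t = t * s)
    (hXS : ∀ x ∈ X, ∀ s ∈ S, ⁅x, s⁆ ^ N = 1) :
    Nat.card (⁅closure X, closure S⁆ : Subgroup G) ≤ N ^ (m * m) := by
  have hTn : (closure S).Normal := closure_normal' S hS
  have hconj : ∀ (g t : G), t ∈ closure S → g * t * g⁻¹ ∈ closure S :=
    fun g t ht => hTn.conj_mem t ht g
  have hcm : ∀ (g t : G), t ∈ closure S → ⁅g, t⁆ ∈ closure S := fun g t ht => by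
    rw [commutatorElement_def]; exact mul_mem (hconj g t ht) (inv_mem ht)
  -- t ↦ ⁅h, t⁆ is multiplicative
  have hmul : ∀ (h s t : G), s ∈ closure S → t ∈ closure S → ⁅h, s * t⁆ = ⁅h, s⁆ * ⁅h, t⁆ := by
    intro h s t hs ht
    have e : ⁅h, s * t⁆ = ⁅h, s⁆ * (s * ⁅h, t⁆ * s⁻¹) := by
      simp only [commutatorElement_def]; group
    rw [e, hab s hs _ (hcm h t ht)]; group
  have hinv : ∀ (h s : G), s ∈ closure S → ⁅h, s⁻¹⁆ = ⁅h, s⁆⁻¹ := by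
    intro h s hs
    have := hmul h s s⁻¹ hs (inv_mem hs)
    rw [mul_inv_cancel, commutatorElement_one_right] at this
    exact (eq_inv_of_mul_eq_one_right this.symm)
  have hpow : ∀ s ∈ closure S, ∀ t ∈ closure S, s ^ N = 1 → t ^ N = 1 → (s * t) ^ N = 1 := by
    intro s hs t ht h1 h2
    have : Commute s t := hab s hs t ht
    rw [this.mul_pow, h1, h2, one_mul]
  have hX1 : ∀ x ∈ X, ∀ t ∈ closure S, ⁅x, t⁆ ^ N = 1 := by
    intro x hx t ht
    induction ht using closure_induction with
    | mem s hs => exact hXS x hx s hs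
    | one => simp
    | mul s t hs ht h1 h2 =>
      rw [hmul x s t hs ht]; exact hpow _ (hcm x s hs) _ (hcm x t ht) h1 h2
    | inv s hs h1 => rw [hinv x s hs, inv_pow, h1, inv_one]
  have hH1 : ∀ h ∈ closure X, ∀ t ∈ closure S, ⁅h, t⁆ ^ N = 1 := by
    intro h hh
    induction hh using closure_induction with
    | mem x hx => exact hX1 x hx
    | one => simp
    | mul x y _ _ h1 h2 =>
      intro t ht
      have e : ⁅x * y, t⁆ = (x * ⁅y, t⁆ * x⁻¹) * ⁅x, t⁆ := by
        simp only [commutatorElement_def]; group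
      rw [e]
      refine hpow _ (hconj _ _ (hcm y t ht)) _ (hcm x t ht) ?_ (h1 t ht)
      rw [conj_pow, h2 t ht]; simp
    | inv x _ h1 =>
      intro t ht
      have e : ⁅x⁻¹, t⁆ = ⁅x, x⁻¹ * t * x⁆⁻¹ := by
        simp only [commutatorElement_def]; group
      rw [e, inv_pow, h1, inv_one]
      have := hconj x⁻¹ t ht
      rwa [inv_inv] at this
  let D : Set G := {z | ∃ h ∈ closure X, ∃ s ∈ S, z = ⁅h, s⁆}
  have hD : D ⊆ (fun p : G × G => p.1 * p.2⁻¹) '' (S ×ˢ S) := by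
    rintro _ ⟨h, _, s, hs, rfl⟩
    exact ⟨(h * s * h⁻¹, s), ⟨hS s hs h, hs⟩, by simp [commutatorElement_def]⟩
  have hDc : D.ncard ≤ m * m := by
    refine (Set.ncard_le_ncard hD (Set.toFinite _)).trans
      ((Set.ncard_image_le (Set.toFinite _)).trans ?_)
    rw [Set.ncard_prod]; exact Nat.mul_le_mul hSm hSm
  have hDS : closure D ≤ closure S := by
    rw [closure_le]; rintro _ ⟨h, _, s, hs, rfl⟩; exact hcm h s (subset_closure hs)
  have hle : (⁅closure X, closure S⁆ : Subgroup G) ≤ closure D := by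
    rw [commutator_le]
    intro h hh t ht
    induction ht using closure_induction with
    | mem s hs => exact subset_closure ⟨h, hh, s, hs, rfl⟩
    | one => simp
    | mul s t hs ht h1 h2 => rw [hmul h s t hs ht]; exact mul_mem h1 h2
    | inv s hs h1 => rw [hinv h s hs]; exact inv_mem h1
  refine (Subgroup.card_le_of_le hle).trans ?_
  have hexp : ∀ z ∈ closure D, z ^ N = 1 := by
    intro z hz
    induction hz using closure_induction with
    | mem s hs => obtain ⟨h, hh, s, hs, rfl⟩ := hs; exact hH1 h hh s (subset_closure hs)
    | one => simp
    | mul s t hs ht h1 h2 => exact hpow _ (hDS hs) _ (hDS ht) h1 h2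
    | inv s hs h1 => rw [inv_pow, h1, inv_one]
  let _ : CommGroup (closure D) :=
    { (inferInstance : Group (closure D)) with
      mul_comm := fun a b => Subtype.ext (hab _ (hDS a.2) _ (hDS b.2)) }
  have hr : Group.rank (closure D) ≤ m * m := by
    exact (Subgroup.rank_closure_finite_le_nat_card D).trans hDc
  have := card_dvd_exponent_pow_rank' (closure D) (n := N) (fun g => Subtype.ext (hexp g g.2))
  exact (Nat.le_of_dvd (by positivity) this).trans (Nat.pow_le_pow_right hN hr)

theorem card_comm_closure : ∃ f : ℕ → ℕ, ∀ (G : Type) [Group G] [Finite G] (S : Set G) (n : ℕ),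
    (centralizer S).index ≤ n → Nat.card (⁅closure S, closure S⁆ : Subgroup G) ≤ f n := by
  obtain ⟨f, hf⟩ := schur_bound
  refine ⟨f, fun G _ _ S n hn => ?_⟩
  rw [← map_subtype_commutator]
  refine (Nat.le_of_dvd Nat.card_pos (card_map_dvd _ _)).trans (hf _ n (le_trans ?_ hn))
  refine le_trans (index_le_of_le' ?_) (relIndex_le_index' (centralizer S) (closure S))
  intro g hg
  rw [mem_subgroupOf, ← centralizer_closure, mem_centralizer_iff] at hg
  rw [mem_center_iff]
  intro h
  exact Subtype.ext (hg h h.2)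

/-- Lemma A: `[H, x]` lies in a normal subgroup of bounded order. -/
theorem lemA : ∃ f : ℕ → ℕ, ∀ (G : Type) [Group G] [Finite G] (X : Set G) (m : ℕ), 0 < m →
    (∀ x ∈ X, ∀ g : G, g * x * g⁻¹ ∈ X) → (∀ x ∈ X, (centralizer {x}).index ≤ m) →
    ∀ x ∈ X, ∃ L : Subgroup G, L.Normal ∧ Nat.card L ≤ f m ∧ ∀ h ∈ closure X, ⁅h, x⁆ ∈ L := by
  obtain ⟨f, hf⟩ := card_comm_closure
  refine ⟨fun m => ((f (m ^ 2)).factorial) ^ (m * m) * f (m ^ m), ?_⟩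
  intro G _ _ X m hm hX hXm x hx
  set S : Set G := conjugatesOf x with hSdef
  have hSX : S ⊆ X := by
    intro y hy
    obtain ⟨g, rfl⟩ := isConj_iff.1 hy
    exact hX x hx g
  have hSc : S.ncard ≤ m := by rw [hSdef, ncard_conj]; exact hXm x hx
  have hS : ∀ s ∈ S, ∀ g : G, g * s * g⁻¹ ∈ S := by
    intro s hs g
    exact IsConj.trans hs (isConj_iff.2 ⟨g, rfl⟩)
  have hTn := closure_normal' S hS
  have hHn := closure_normal' X hX
  have hT := hf G S (m ^ m) (index_centralizer_le S m m hm hSc fun s hs => hXm s (hSX hs))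
  have hpow : ∀ a ∈ X, ∀ b ∈ X, ⁅a, b⁆ ^ ((f (m ^ 2)).factorial) = 1 := by
    intro a ha b hb
    have h1 := hf G {a, b} (m ^ 2) (index_centralizer_le {a, b} m 2 hm ((Set.ncard_insert_le a {b}).trans (by simp)) (by
      rintro s (rfl | rfl)
      · exact hXm _ ha
      · exact hXm _ hb))
    have h2 : ⁅a, b⁆ ∈ (⁅closure {a, b}, closure {a, b}⁆ : Subgroup G) :=
      commutator_mem_commutator (subset_closure (by simp)) (subset_closure (by simp))
    have h3 : orderOf ⁅a, b⁆ ≤ f (m ^ 2) := by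
      refine (Nat.le_of_dvd Nat.card_pos ?_).trans h1
      rw [← Subgroup.orderOf_mk _ h2]
      exact orderOf_dvd_natCard _
    exact orderOf_dvd_iff_pow_eq_one.1 (Nat.dvd_factorial (orderOf_pos _) h3)
  refine ⟨⁅closure X, closure S⁆, inferInstance, ?_, fun h hh =>
    commutator_mem_commutator hh (subset_closure mem_conjugatesOf_self)⟩
  set q := QuotientGroup.mk' (⁅closure S, closure S⁆ : Subgroup G) with hq
  refine (card_le_card_map_mul _ (⁅closure S, closure S⁆ : Subgroup G)).trans
    (Nat.mul_le_mul ?_ hT)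
  rw [map_commutator, MonoidHom.map_closure, MonoidHom.map_closure]
  refine card_commutator_abelian _ _ _ m (Nat.factorial_pos _) ?_ ?_ ?_ ?_
  · rintro _ ⟨s, hs, rfl⟩ g
    obtain ⟨g, rfl⟩ := QuotientGroup.mk'_surjective _ g
    exact ⟨_, hS s hs g, by simp⟩
  · exact (Set.ncard_image_le (Set.toFinite _)).trans hSc
  · rw [← MonoidHom.map_closure]
    rintro _ ⟨s, hs, rfl⟩ _ ⟨t, ht, rfl⟩
    rw [← commutatorElement_eq_one_iff_mul_comm, ← map_commutatorElement]
    exact (QuotientGroup.eq_one_iff _).2 (commutator_mem_commutator hs ht)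
  · rintro _ ⟨a, ha, rfl⟩ _ ⟨b, hb, rfl⟩
    rw [← map_commutatorElement, ← map_pow, hpow a ha b (hSX hb), map_one]

/-- Lemma B: the maximality argument. -/
theorem lemB : ∃ f : ℕ → ℕ, ∀ (G : Type) [Group G] [Finite G] (X : Set G) (m : ℕ), 0 < m →
    (∀ x ∈ X, ∀ g : G, g * x * g⁻¹ ∈ X) → (∀ x ∈ X, (centralizer {x}).index ≤ m) →
    ∀ Y : Set G, Y ⊆ X → Y.Nonempty → ∃ a ∈ Y, ∃ U L : Subgroup G, U.Normal ∧ L.Normal ∧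
      U.index ≤ f m ∧ Nat.card L ≤ f m ∧
      ∀ u ∈ U, u * a ∈ Y → ∀ h ∈ closure X, ⁅h, u⁆ ∈ L := by
  obtain ⟨f, hf⟩ := lemA
  refine ⟨fun m => max (f m) (m ^ m.factorial).factorial, ?_⟩
  intro G _ _ X m hm hX hXm Y hYX hYne
  let O : G → Set G := fun a => {z | ∃ h ∈ closure X, z = h * a * h⁻¹}
  obtain ⟨a, haY, hmax⟩ := Set.exists_max_image Y (fun a => (O a).ncard) (Set.toFinite _) hYne
  obtain ⟨L, hLn, hLc, hL⟩ := hf G X m hm hX hXm a (hYX haY)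
  have hNi := index_normalCore_le (centralizer {a}) m (hXm a (hYX haY))
  obtain ⟨X0, hX0X, hX0c, hX0⟩ := exists_small_subset X (centralizer {a}).normalCore
  refine ⟨a, haY, (centralizer X0).normalCore, L, inferInstance, hLn, ?_, hLc.trans (le_max_left _ _), ?_⟩
  · exact (index_normalCore_le _ _ (index_centralizer_le X0 m _ hm (hX0c.trans hNi)
      fun s hs => hXm s (hX0X hs))).trans (le_max_right _ _)
  intro u hu hua h hh
  have hX0' : closure X0 ≤ closure X := closure_mono hX0X
  have hcomm : ∀ b ∈ closure X0, b * u = u * b := by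
    have := normalCore_le _ hu
    rw [← centralizer_closure, mem_centralizer_iff] at this
    exact this
  -- representation of conjugates of a
  have hrep : ∀ h ∈ closure X, ∃ b ∈ closure X0, h * a * h⁻¹ = b * a * b⁻¹ := by
    intro h hh
    have h1 := hX0 hh
    rw [← SetLike.mem_coe, mul_normal] at h1
    obtain ⟨b, hb, n, hn, rfl⟩ := h1
    refine ⟨b, hb, ?_⟩
    have := mem_centralizer_singleton_iff.1 (normalCore_le _ hn)
    have e : n * a * n⁻¹ = a := by rw [this]; group
    calc b * n * a * (b * n)⁻¹ = b * (n * a * n⁻¹) * b⁻¹ := by group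
      _ = _ := by rw [e]
  have hsub : (fun z => u * z) '' (O a) ⊆ O (u * a) := by
    rintro _ ⟨_, ⟨h, hh, rfl⟩, rfl⟩
    obtain ⟨b, hb, e⟩ := hrep h hh
    refine ⟨b, hX0' hb, ?_⟩
    simp only [e]
    rw [← mul_assoc b u a, hcomm b hb]; group
  have hcard : (O (u * a)).ncard ≤ ((fun z => u * z) '' (O a)).ncard := by
    rw [Set.ncard_image_of_injective _ (mul_right_injective u)]
    exact hmax _ hua
  have heq := Set.eq_of_subset_of_ncard_le hsub hcard (Set.toFinite _)
  have hmem : h * (u * a) * h⁻¹ ∈ O (u * a) := ⟨h, hh, rfl⟩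
  rw [← heq] at hmem
  obtain ⟨_, ⟨k, hk, rfl⟩, e⟩ := hmem
  simp only at e
  have e2 : ⁅h, u⁆ = u * (⁅k, a⁆ * ⁅h, a⁆⁻¹) * u⁻¹ := by
    have e3 : h * u * h⁻¹ = u * (k * a * k⁻¹) * (h * a * h⁻¹)⁻¹ := by rw [e]; group
    simp only [commutatorElement_def]
    rw [e3]; group
  rw [e2]
  exact hLn.conj_mem _ (mul_mem (hL k hk) (inv_mem (hL h hh))) u

/-- Lemma C -/
theorem lemC : ∃ f : ℕ → ℕ, ∀ (G : Type) [Group G] [Finite G] (X : Set G) (m : ℕ), 0 < m →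
    (∀ x ∈ X, ∀ g : G, g * x * g⁻¹ ∈ X) → (∀ x ∈ X, (centralizer {x}).index ≤ m) →
    ∀ V : Subgroup G, (∀ d ∈ V, ∀ e : G, ⁅d, e⁆ ∈ X) → ∃ U L : Subgroup G, U.Normal ∧ L.Normal ∧
      U.index ≤ f m ∧ Nat.card L ≤ f m ∧
      ∀ v ∈ V, v ∈ U → ∀ w ∈ U, ∀ h ∈ closure X, ⁅h, ⁅v, w⁆⁆ ∈ L := by
  obtain ⟨f, hf⟩ := lemB
  refine ⟨f, ?_⟩
  intro G _ _ X m hm hX hXm V hV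
  have hHn := closure_normal' X hX
  obtain ⟨a, ⟨d, hd, e, rfl⟩, U, L, hUn, hLn, hU, hL, h⟩ := hf G X m hm hX hXm
    {z | ∃ d ∈ V, ∃ e : G, z = ⁅d, e⁆} (by rintro _ ⟨d, hd, e, rfl⟩; exact hV d hd e)
    ⟨1, 1, one_mem _, 1, by simp⟩
  refine ⟨U, L, hUn, hLn, hU, hL, ?_⟩
  have hC : ∀ u ∈ U, (∃ d' ∈ V, ∃ e', u * ⁅d, e⁆ = ⁅d', e'⁆) → u ∈ cmod (closure X) L :=
    fun u hu hh => mem_cmod.2 (h u hu hh)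
  have hCn := cmod_normal (closure X) L
  have hcU : ∀ v ∈ U, ∀ g, ⁅v, g⁆ ∈ U := fun v hv g => by
    have e : ⁅v, g⁆ = v * (g * v⁻¹ * g⁻¹) := by simp only [commutatorElement_def]; group
    rw [e]; exact mul_mem hv (hUn.conj_mem _ (inv_mem hv) g)
  have hcU' : ∀ v ∈ U, ∀ g, ⁅g, v⁆ ∈ U := fun v hv g => by
    rw [commutatorElement_def]; exact mul_mem (hUn.conj_mem _ hv g) (inv_mem hv)
  have s1 : ∀ v ∈ V, v ∈ U → d * ⁅v, e⁆ * d⁻¹ ∈ cmod (closure X) L := by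
    intro v hv hvU
    refine hC _ (hUn.conj_mem _ (hcU v hvU e) d) ⟨d * v, mul_mem hd hv, e, ?_⟩
    simp only [commutatorElement_def]; group
  have s2 : ∀ v ∈ V, v ∈ U → ∀ w ∈ U, ⁅d * v, w⁆ ∈ cmod (closure X) L := by
    intro v hv hvU w hw
    have t1 := hC ((d * ⁅v, e⁆ * d⁻¹) * (⁅d, e⁆ * (e * ⁅d * v, w⁆ * e⁻¹) * ⁅d, e⁆⁻¹))
      (mul_mem (hUn.conj_mem _ (hcU v hvU e) d)
        (hUn.conj_mem _ (hUn.conj_mem _ (hcU' w hw _) e) _))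
      ⟨d * v, mul_mem hd hv, e * w, by simp only [commutatorElement_def]; group⟩
    have t2 := (mul_mem_cancel_left (s1 v hv hvU)).1 t1
    rw [← hCn.mem_comm_iff, ← mul_assoc, inv_mul_cancel, one_mul] at t2
    rw [hCn.mem_comm_iff, ← mul_assoc, inv_mul_cancel, one_mul] at t2
    exact t2
  intro v hv hvU w hw
  have t1 := s2 v hv hvU w hw
  have t2 := s2 1 (one_mem _) (one_mem _) w hw
  rw [mul_one] at t2
  have e1 : ⁅d * v, w⁆ = (d * ⁅v, w⁆ * d⁻¹) * ⁅d, w⁆ := by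
    simp only [commutatorElement_def]; group
  rw [e1, mul_mem_cancel_right t2, hCn.mem_comm_iff, ← mul_assoc, inv_mul_cancel, one_mul] at t1
  exact mem_cmod.1 t1



theorem lemFin : ∃ f : ℕ → ℕ, ∀ (G : Type) [Group G] [Finite G] (H L : Subgroup G) [L.Normal]
    (n l : ℕ), (cmod H L).relIndex H ≤ n → Nat.card L ≤ l →
    Nat.card (⁅H, H⁆ : Subgroup G) ≤ f n * l := by
  obtain ⟨f, hf⟩ := schur_bound
  refine ⟨f, fun G _ _ H L _ n l hn hl => ?_⟩
  refine (card_le_card_map_mul _ L).trans (Nat.mul_le_mul ?_ hl)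
  rw [map_commutator, ← map_subtype_commutator]
  refine (Nat.le_of_dvd Nat.card_pos (card_map_dvd _ _)).trans (hf _ n (le_trans ?_ hn))
  have hs := MonoidHom.subgroupMap_surjective (QuotientGroup.mk' L) H
  refine le_trans (index_le_of_le' ?_) (index_map_le' ((cmod H L).subgroupOf H) hs)
  rintro _ ⟨g, hg, rfl⟩
  rw [mem_center_iff]
  intro z
  obtain ⟨h, rfl⟩ := hs z
  have h1 := mem_cmod.1 (mem_subgroupOf.1 hg) h h.2
  apply Subtype.ext
  have h2 : (QuotientGroup.mk' L) ⁅(h : G), (g : G)⁆ = 1 := (QuotientGroup.eq_one_iff _).2 h1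
  rw [map_commutatorElement, commutatorElement_eq_one_iff_mul_comm] at h2
  exact h2

/-- If all commutators have boundedly many conjugates then `G''` is bounded. -/
theorem lemDS : ∃ f : ℕ → ℕ, ∀ (G : Type) [Group G] [Finite G] (m : ℕ), 0 < m →
    (∀ a b : G, (centralizer {⁅a, b⁆}).index ≤ m) →
    Nat.card (⁅commutator G, commutator G⁆ : Subgroup G) ≤ f m := by
  classical
  obtain ⟨fB, hfB⟩ := lemB
  obtain ⟨fC, hfC⟩ := lemC
  obtain ⟨s, hs⟩ := schur_bound
  obtain ⟨fF, hfF⟩ := lemFin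
  refine ⟨fun m => fF (s (fC m * fB m ^ fC m)) * (fC m * fB m ^ fC m), ?_⟩
  intro G _ _ m hm hc
  set X : Set G := commutatorSet G with hXdef
  have hX : ∀ x ∈ X, ∀ g : G, g * x * g⁻¹ ∈ X := by
    rintro _ ⟨a, b, rfl⟩ g
    exact ⟨g * a * g⁻¹, g * b * g⁻¹, by simp only [commutatorElement_def]; group⟩
  have hXm : ∀ x ∈ X, (centralizer {x}).index ≤ m := by
    rintro _ ⟨a, b, rfl⟩; exact hc a b
  have hcl : closure X = commutator G := (commutator_eq_closure G).symm
  obtain ⟨U0, L0, hU0n, hL0n, hU0, hL0, h0⟩ := hfC G X m hm hX hXm ⊤ (fun d _ e => ⟨d, e, rfl⟩)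
  have hB : ∀ t : G, ∃ U L : Subgroup G, U.Normal ∧ L.Normal ∧ U.index ≤ fB m ∧
      Nat.card L ≤ fB m ∧ ∀ v ∈ U, ∀ h ∈ commutator G, ⁅h, ⁅v, t⁆⁆ ∈ L := by
    intro t
    obtain ⟨a, ⟨d, rfl⟩, U, L, hUn, hLn, hU, hL, h⟩ := hfB G X m hm hX hXm
      {z | ∃ d : G, z = ⁅d, t⁆} (by rintro _ ⟨d, rfl⟩; exact ⟨d, t, rfl⟩) ⟨_, 1, rfl⟩
    refine ⟨U, L, hUn, hLn, hU, hL, fun v hv => ?_⟩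
    rw [← mem_cmod]
    have hCn := cmod_normal (commutator G) L
    have t1 : d * ⁅v, t⁆ * d⁻¹ ∈ cmod (commutator G) L := by
      rw [mem_cmod, ← hcl]
      refine h _ (hUn.conj_mem _ ?_ d) ⟨d * v, by simp only [commutatorElement_def]; group⟩
      have e : ⁅v, t⁆ = v * (t * v⁻¹ * t⁻¹) := by simp only [commutatorElement_def]; group
      rw [e]; exact mul_mem hv (hUn.conj_mem _ (inv_mem hv) t)
    rw [hCn.mem_comm_iff, ← mul_assoc, inv_mul_cancel, one_mul] at t1
    exact t1
  choose UU LL hUUn hLLn hUU hLL hUL using hB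
  have : Fintype (G ⧸ U0) := Fintype.ofFinite _
  have hcard : (Finset.univ : Finset (G ⧸ U0)).card ≤ fC m := by
    rw [Finset.card_univ, ← Nat.card_eq_fintype_card]; exact hU0
  have hpos : 0 < fB m := lt_of_lt_of_le (index_pos' (UU 1)) (hUU 1)
  obtain ⟨L1, hL1n, hL1, hL1'⟩ := exists_normal_sup (Finset.univ : Finset (G ⧸ U0)) (fB m) (fC m)
    hpos hcard (fun q L => L = LL q.out) (fun q _ => ⟨LL q.out, hLLn _, hLL _, rfl⟩)
  obtain ⟨U1, hU1n, hU1, hU1'⟩ := exists_normal_inf (Finset.univ : Finset (G ⧸ U0)) (fB m) (fC m)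
    hpos hcard (fun q => UU q.out) (fun q _ => ⟨hUUn _, hUU _⟩)
  have hLc : Nat.card (L0 ⊔ L1 : Subgroup G) ≤ fC m * fB m ^ fC m :=
    (card_sup_le L0 L1).trans (Nat.mul_le_mul hL0 hL1)
  have hUc : (U0 ⊓ U1).index ≤ fC m * fB m ^ fC m :=
    index_inf_le.trans (Nat.mul_le_mul hU0 hU1)
  refine hfF G (commutator G) (L0 ⊔ L1) _ _ ?_ hLc
  have hCn := cmod_normal (commutator G) (L0 ⊔ L1)
  set C := cmod (commutator G) (L0 ⊔ L1) with hC
  have key : ∀ u ∈ U0 ⊓ U1, ∀ g : G, ⁅u, g⁆ ∈ C := by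
    intro u hu g
    set t := (QuotientGroup.mk g : G ⧸ U0).out with ht
    have hw : t⁻¹ * g ∈ U0 := QuotientGroup.eq.1 (Quotient.out_eq' _)
    have e : ⁅u, g⁆ = ⁅u, t⁆ * (t * ⁅u, t⁻¹ * g⁆ * t⁻¹) := by
      simp only [commutatorElement_def]; group
    rw [e]
    refine mul_mem ?_ (hCn.conj_mem _ ?_ t)
    · obtain ⟨L', hL', hn', e'⟩ := hL1' (QuotientGroup.mk g) (Finset.mem_univ _)
      rw [hC, mem_cmod]
      intro h hh
      have := hUL t u (hU1' _ (Finset.mem_univ _) hu.2) h hh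
      rw [ht, ← e'] at this
      exact le_sup_right (a := L0) (hL' this)
    · rw [hC, mem_cmod]
      intro h hh
      rw [← hcl] at hh
      exact le_sup_left (b := L1) (h0 u trivial hu.1 _ hw h hh)
  have h1 : (center (G ⧸ C)).index ≤ fC m * fB m ^ fC m := by
    refine le_trans (index_le_of_le' ?_)
      ((index_map_le' (U0 ⊓ U1) (QuotientGroup.mk'_surjective C)).trans hUc)
    rintro _ ⟨u, hu, rfl⟩
    rw [mem_center_iff]
    intro g
    obtain ⟨g, rfl⟩ := QuotientGroup.mk'_surjective C g
    have h2 : (QuotientGroup.mk' C) ⁅u, g⁆ = 1 := (QuotientGroup.eq_one_iff _).2 (key u hu g)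
    rw [map_commutatorElement, commutatorElement_eq_one_iff_mul_comm] at h2
    exact h2.symm
  have h2 := hs (G ⧸ C) _ h1
  have e : (commutator G).map (QuotientGroup.mk' C) = commutator (G ⧸ C) := by
    rw [commutator_def, commutator_def, map_commutator,
      map_top_of_surjective _ (QuotientGroup.mk'_surjective C)]
  have e2 := relIndex_ker (K := commutator G) (QuotientGroup.mk' C)
  rw [QuotientGroup.ker_mk', e] at e2
  rw [e2]
  exact h2



def TP {G : Type} [Group G] (p : ℕ) (d e : G) : Prop :=
  ∃ P : Subgroup G, IsPGroup p P ∧ d ∈ P ∧ e * d * e⁻¹ ∈ P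

def HYP (G : Type) [Group G] (μ : ℕ → ℕ) : Prop :=
  ∀ p : ℕ, p.Prime → ∀ d e : G, TP p d e → (centralizer {⁅d, e⁆}).index ≤ μ p

def XS (G : Type) [Group G] : Set G :=
  {x | ∃ p : ℕ, p.Prime ∧ ∃ d e : G, TP p d e ∧ x = ⁅d, e⁆}

theorem TP.map {G G' : Type} [Group G] [Group G'] {p : ℕ} {d e : G} (h : TP p d e) (f : G →* G') :
    TP p (f d) (f e) := by
  obtain ⟨P, hP, hd, he⟩ := h
  refine ⟨P.map f, hP.map f, ⟨d, hd, rfl⟩, ⟨_, he, by simp⟩⟩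

theorem TP.of_normal {G : Type} [Group G] {p : ℕ} {P : Subgroup G} (hn : P.Normal)
    (hP : IsPGroup p P) {d : G} (hd : d ∈ P) (e : G) : TP p d e :=
  ⟨P, hP, hd, hn.conj_mem d hd e⟩

theorem XS_conj {G : Type} [Group G] : ∀ x ∈ XS G, ∀ g : G, g * x * g⁻¹ ∈ XS G := by
  rintro x ⟨p, hp, d, e, h, rfl⟩ g
  have := h.map (MulAut.conj g).toMonoidHom
  refine ⟨p, hp, _, _, this, ?_⟩
  simp [commutatorElement_def, mul_assoc]

theorem HYP.XS_le {G : Type} [Group G] {m : ℕ} (h : HYP G (fun _ => m)) :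
    ∀ x ∈ XS G, (centralizer {x}).index ≤ m := by
  rintro x ⟨p, hp, d, e, h', rfl⟩
  exact h p hp d e h'

theorem HYP.subgroup {G : Type} [Group G] [Finite G] {μ : ℕ → ℕ} (h : HYP G μ) (K : Subgroup G) :
    HYP K μ := by
  intro p hp d e hde
  have := h p hp _ _ (hde.map K.subtype)
  refine le_trans (index_centralizer_subtype_le K ⁅d, e⁆) ?_
  exact this

theorem TP.lift {G G' : Type} [Group G] [Group G'] [Finite G] {p : ℕ} (hp : p.Prime)
    (f : G →* G') (hf : Function.Surjective f) {d' e' : G'} (h : TP p d' e') :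
    ∃ d e : G, TP p d e ∧ f d = d' ∧ f e = e' := by
  have : Fact p.Prime := ⟨hp⟩
  have : Finite G' := Finite.of_surjective f hf
  obtain ⟨P', hP', hd', he'⟩ := h
  obtain ⟨S, hS⟩ := hP'.exists_le_sylow
  obtain ⟨P, rfl⟩ := Sylow.mapSurjective_surjective hf p S
  obtain ⟨d, hd, rfl⟩ : ∃ d ∈ (P : Subgroup G), f d = d' := hS hd'
  obtain ⟨e, rfl⟩ := hf e'
  set Q : Subgroup G := ((P : Subgroup G).map f).comap f with hQ
  have hPQ : (P : Subgroup G) ≤ Q := le_comap_map _ _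
  have hxQ : e * d * e⁻¹ ∈ Q := by
    rw [hQ, mem_comap]
    have := hS he'
    simpa using this
  have hz : IsPGroup p (zpowers (⟨e * d * e⁻¹, hxQ⟩ : Q)) := by
    obtain ⟨k, hk⟩ := P.2 ⟨d, hd⟩
    have hk' : d ^ p ^ k = 1 := by simpa [Subtype.ext_iff] using hk
    apply IsPGroup.of_card_dvd_pow (n := k)
    rw [Nat.card_zpowers]
    apply orderOf_dvd_of_pow_eq_one
    ext
    simp [conj_pow, hk']
  obtain ⟨T, hT⟩ := hz.exists_le_sylow
  obtain ⟨q, hq⟩ := MulAction.exists_smul_eq Q T (P.subtype hPQ)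
  have h1 : (q : G) * (e * d * e⁻¹) * (q : G)⁻¹ ∈ (P : Subgroup G) := by
    have h2 : q * ⟨e * d * e⁻¹, hxQ⟩ * q⁻¹ ∈ ((q • T : Sylow p Q) : Subgroup Q) := by
      rw [Sylow.coe_subgroup_smul]
      have := smul_mem_pointwise_smul (⟨e * d * e⁻¹, hxQ⟩ : Q) (MulAut.conj q) (T : Subgroup Q)
        (hT (mem_zpowers _))
      simpa using this
    rw [hq] at h2
    exact h2
  obtain ⟨t, ht, hft⟩ : ∃ t ∈ (P : Subgroup G), f t = f q := q.2
  refine ⟨d, t⁻¹ * q * e, ⟨P, P.2, hd, ?_⟩, rfl, by simp [hft]⟩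
  have := mul_mem (mul_mem (inv_mem ht) h1) ht
  have e1 : t⁻¹ * ↑q * e * d * (t⁻¹ * ↑q * e)⁻¹ = t⁻¹ * (↑q * (e * d * e⁻¹) * (↑q)⁻¹) * t := by group
  rw [e1]
  exact this

theorem HYP.quot {G : Type} [Group G] [Finite G] {μ : ℕ → ℕ} (h : HYP G μ) (N : Subgroup G)
    [N.Normal] : HYP (G ⧸ N) μ := by
  intro p hp d' e' hde
  obtain ⟨d, e, h1, rfl, rfl⟩ := hde.lift hp _ (QuotientGroup.mk'_surjective N)
  rw [← map_commutatorElement]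
  exact (index_centralizer_map_le _ (QuotientGroup.mk'_surjective N) _).trans (h p hp d e h1)

theorem commutator_trivial_of_XS {G : Type} [Group G] [Finite G] (h : ∀ x ∈ XS G, x = 1) :
    commutator G = ⊥ := by
  by_contra hne
  have hc : Nat.card (commutator G) ≠ 1 := fun hc => hne (card_eq_one.1 hc)
  obtain ⟨p, hp, hdvd⟩ := Nat.exists_prime_and_dvd hc
  have : Fact p.Prime := ⟨hp⟩
  obtain ⟨P⟩ : Nonempty (Sylow p G) := inferInstance
  have hP : normalizer (P : Set G) ≤ centralizer (P : Set G) := by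
    intro g hg
    rw [mem_centralizer_iff]
    intro d hd
    have := h ⁅d, g⁆ ⟨p, hp, d, g, ⟨P, P.2, hd, ?_⟩, rfl⟩
    · rwa [commutatorElement_eq_one_iff_mul_comm] at this
    · exact (mem_normalizer_iff.1 hg d).1 hd
  have hcomm : ∀ a b : P, a * b = b * a := by
    intro a b
    ext
    exact ((mem_centralizer_iff.1 (hP (le_normalizer b.2)) a a.2))
  have hker : commutator G ≤ (MonoidHom.transferSylow P hP).ker := by
    rw [commutator_def, commutator_le]
    intro a _ b _
    rw [MonoidHom.mem_ker, map_commutatorElement, commutatorElement_eq_one_iff_mul_comm]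
    exact hcomm _ _
  exact MonoidHom.not_dvd_card_ker_transferSylow P hP (hdvd.trans (card_dvd_of_le hker))

theorem closure_XS {G : Type} [Group G] [Finite G] : closure (XS G) = commutator G := by
  apply le_antisymm
  · rw [closure_le]
    rintro x ⟨p, hp, d, e, -, rfl⟩
    exact commutator_mem_commutator trivial trivial
  · have := closure_normal' (XS G) XS_conj
    have h1 : commutator (G ⧸ closure (XS G)) = ⊥ := by
      apply commutator_trivial_of_XS
      rintro x ⟨p, hp, d', e', hde, rfl⟩
      obtain ⟨d, e, h1, rfl, rfl⟩ := hde.lift hp _ (QuotientGroup.mk'_surjective _)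
      rw [← map_commutatorElement]
      exact (QuotientGroup.eq_one_iff _).2 (subset_closure ⟨p, hp, d, e, h1, rfl⟩)
    have e1 : (commutator G).map (QuotientGroup.mk' (closure (XS G))) = ⊥ := by
      rw [← h1, commutator_def, commutator_def, map_commutator,
        map_top_of_surjective _ (QuotientGroup.mk'_surjective _)]
    rwa [Subgroup.map_eq_bot_iff, QuotientGroup.ker_mk'] at e1

theorem big_prime {G : Type} [Group G] [Finite G] {m : ℕ} (h : HYP G (fun _ => m)) {p : ℕ}
    (hp : p.Prime) (hpm : m < p) {P : Subgroup G} (hP : IsPGroup p P) :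
    commutator G ≤ centralizer (P : Set G) := by
  have : Fact p.Prime := ⟨hp⟩
  rw [← closure_XS, closure_le]
  intro x hx
  have h1 : (centralizer {x}).relIndex P ≤ m :=
    (relIndex_le_index' _ _).trans (h.XS_le x hx)
  obtain ⟨n, hn⟩ := hP.index ((centralizer {x}).subgroupOf P)
  have hn' : (centralizer {x}).relIndex P = p ^ n := hn
  have h2 : n = 0 := by
    by_contra h0
    have := Nat.le_self_pow h0 p
    omega
  rw [h2, pow_zero, relIndex_eq_one] at hn'
  rw [SetLike.mem_coe, mem_centralizer_iff]
  intro y hy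
  have := mem_centralizer_iff.1 (hn' hy) x rfl
  exact this.symm



theorem lemG {G : Type} [Group G] [Finite G] {m p : ℕ} (hp : p.Prime)
    (h : HYP G (fun _ => m)) (hc : IsPGroup p (commutator G)) (g k : G) :
    (centralizer {⁅g, k⁆}).index ≤ m * m := by
  have : Fact p.Prime := ⟨hp⟩
  obtain ⟨P, hP⟩ := hc.exists_le_sylow
  have hPn : (P : Subgroup G).Normal := Normal.of_commutator_le G hP
  obtain ⟨A, hA⟩ := exists_right_complement'_of_coprime P.card_coprime_index
  have hdis := hA.disjoint
  have hfac : ∀ g : G, ∃ x ∈ (P : Subgroup G), ∃ a ∈ A, g = x * a := by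
    intro g
    obtain ⟨⟨x, a⟩, h1, -⟩ := (isComplement'_def.1 hA).existsUnique g
    exact ⟨x, x.2, a, a.2, h1.symm⟩
  obtain ⟨x, hx, a, ha, rfl⟩ := hfac g
  obtain ⟨y, hy, b, hb, rfl⟩ := hfac k
  have hab : ⁅a, b⁆ = 1 := by
    apply hdis.eq_bot.le (x := ⁅a, b⁆)
    refine ⟨hP (commutator_mem_commutator trivial trivial), ?_⟩
    rw [commutatorElement_def]
    exact A.mul_mem (A.mul_mem (A.mul_mem ha hb) (A.inv_mem ha)) (A.inv_mem hb)
  rw [commutatorElement_eq_one_iff_mul_comm] at hab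
  have hab2 : a⁻¹ * b = b * a⁻¹ := by
    rw [inv_mul_eq_iff_eq_mul, ← mul_assoc, hab, mul_inv_cancel_right]
  have e1 : ⁅x * a, y * b⁆ = (x * ⁅y, a⁆⁻¹ * x⁻¹) * ⁅x, y * b⁆ := by
    have e2 : (x * ⁅y, a⁆⁻¹ * x⁻¹) * ⁅x, y * b⁆ = x * a * y * (a⁻¹ * b) * x⁻¹ * b⁻¹ * y⁻¹ := by
      simp only [commutatorElement_def]
      group
    rw [e2, hab2]
    simp only [commutatorElement_def]
    group
  rw [e1]
  refine (index_centralizer_mul_le _ _).trans (Nat.mul_le_mul ?_ ?_)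
  · rw [index_centralizer_conj, index_centralizer_inv]
    exact h p hp y a (TP.of_normal hPn P.2 hy a)
  · exact h p hp x _ (TP.of_normal hPn P.2 hx _)

theorem exists_pcompl {G : Type} [Group G] [Finite G] (H : Subgroup G) (hH : H.Normal)
    (hnil : Group.IsNilpotent H) {p : ℕ} (hp : p.Prime) :
    ∃ Q : Subgroup G, Q ≤ H ∧ Q.Normal ∧ ¬ p ∣ Nat.card Q ∧ ∀ h ∈ H, ∃ k : ℕ, h ^ p ^ k ∈ Q := by
  have : Fact p.Prime := ⟨hp⟩
  by_cases hdvd : p ∣ Nat.card H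
  swap
  · exact ⟨H, le_rfl, hH, hdvd, fun h hh => ⟨0, by simpa using hh⟩⟩
  have hmem : p ∈ (Nat.card H).primeFactors := by
    rw [Nat.mem_primeFactors]
    exact ⟨hp, hdvd, Nat.card_pos.ne'⟩
  obtain ⟨φ⟩ := ((Group.isNilpotent_of_finite_tfae (G := H)).out 0 4).1 hnil
  obtain ⟨P⟩ : Nonempty (Sylow p H) := inferInstance
  let π : H →* P :=
    ((Pi.evalMonoidHom (fun P : Sylow p H => P) P).comp
      (Pi.evalMonoidHom (fun p : (Nat.card H).primeFactors => ∀ P : Sylow p H, P) ⟨p, hmem⟩)).comp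
      φ.symm.toMonoidHom
  have hπ : Function.Surjective π := by
    intro y
    obtain ⟨z, hz⟩ := Function.surjective_eval (β := fun P : Sylow p H => P) P y
    obtain ⟨w, hw⟩ := Function.surjective_eval
      (β := fun p : (Nat.card H).primeFactors => ∀ P : Sylow p H, P) ⟨p, hmem⟩ z
    refine ⟨φ w, ?_⟩
    rw [← hz, ← hw]
    simp [π]
  have hcard : Nat.card π.ker * Nat.card P = Nat.card H := by
    rw [← card_mul_index π.ker, index_ker, MonoidHom.range_eq_top.2 hπ, card_top]
  have hcard2 : Nat.card π.ker = (P : Subgroup H).index := by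
    have h1 := card_mul_index (P : Subgroup H)
    have h2 : 0 < Nat.card P := Nat.card_pos
    rw [← h1, mul_comm] at hcard
    exact Nat.eq_of_mul_eq_mul_left h2 hcard
  have hnd : ¬ p ∣ Nat.card π.ker := by
    rw [hcard2]
    exact P.not_dvd_index
  have hiff : ∀ h : H, h ∈ π.ker ↔ ¬ p ∣ orderOf h := by
    intro h
    constructor
    · intro hh hd
      apply hnd
      refine hd.trans ?_
      have := orderOf_dvd_natCard (⟨h, hh⟩ : π.ker)
      rwa [Subgroup.orderOf_mk] at this
    · intro hh
      rw [MonoidHom.mem_ker]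
      by_contra hne
      exact hh ((P.2.dvd_orderOf hne).trans (orderOf_map_dvd π h))
  refine ⟨π.ker.map H.subtype, map_subtype_le _, ⟨?_⟩, ?_, ?_⟩
  · rintro _ ⟨h, hh, rfl⟩ g
    refine ⟨⟨g * h * g⁻¹, hH.conj_mem _ h.2 g⟩, ?_, rfl⟩
    rw [SetLike.mem_coe, hiff] at hh ⊢
    have e : orderOf (⟨g * h * g⁻¹, hH.conj_mem _ h.2 g⟩ : H) = orderOf h := by
      rw [Subgroup.orderOf_mk]
      have := orderOf_injective (MulAut.conj g).toMonoidHom (MulAut.conj g).injective (h : G)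
      rw [Subgroup.orderOf_coe] at this
      simpa using this
    rw [e]
    exact hh
  · rwa [card_map_of_injective H.subtype_injective]
  · intro h hh
    obtain ⟨k, hk⟩ := P.2 (π ⟨h, hh⟩)
    refine ⟨k, ⟨⟨h, hh⟩ ^ p ^ k, ?_, rfl⟩⟩
    rw [SetLike.mem_coe, MonoidHom.mem_ker, map_pow, hk]

theorem map_commutator_mk {G : Type} [Group G] (N : Subgroup G) [N.Normal] :
    (commutator G).map (QuotientGroup.mk' N) = commutator (G ⧸ N) := by
  rw [commutator_def, commutator_def, map_commutator,
    map_top_of_surjective _ (QuotientGroup.mk'_surjective N)]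

theorem lemF : ∃ f : ℕ → ℕ, ∀ (G : Type) [Group G] [Finite G] (m : ℕ), 0 < m →
    HYP G (fun _ => m) → Group.IsNilpotent (commutator G) →
    Nat.card (⁅commutator G, commutator G⁆ : Subgroup G) ≤ f m := by
  obtain ⟨fD, hD⟩ := lemDS
  refine ⟨fun m => ∏ p : {p : Fin (m + 1) // p.1.Prime}, fD (m * m), fun G _ _ m hm h hnil => ?_⟩
  have hQ := fun (p : ℕ) (hp : p.Prime) => exists_pcompl (commutator G) inferInstance hnil hp
  choose Q hQle hQn hQc hQk using hQ
  have hpg : ∀ (p : ℕ) (hp : p.Prime), have := hQn p hp; IsPGroup p (commutator (G ⧸ Q p hp)) := by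
    intro p hp _
    rintro ⟨x, hx⟩
    rw [← map_commutator_mk] at hx
    obtain ⟨g, hg, rfl⟩ := hx
    obtain ⟨k, hk⟩ := hQk p hp g hg
    refine ⟨k, ?_⟩
    ext
    rw [SubgroupClass.coe_pow, ← map_pow]
    exact (QuotientGroup.eq_one_iff _).2 hk
  set D : Subgroup G := ⨅ p : {p : Fin (m + 1) // p.1.Prime}, Q p.1.1 p.2 with hDdef
  have hDH : D ⊓ ⁅commutator G, commutator G⁆ = ⊥ := by
    by_contra hne
    have hc : Nat.card (D ⊓ ⁅commutator G, commutator G⁆ : Subgroup G) ≠ 1 :=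
      fun hc => hne (card_eq_one.1 hc)
    obtain ⟨p, hp, hdvd⟩ := Nat.exists_prime_and_dvd hc
    have := hQn p hp
    apply hQc p hp
    refine hdvd.trans (card_dvd_of_le ?_)
    by_cases hpm : p ≤ m
    · exact inf_le_left.trans (iInf_le (fun p : {p : Fin (m + 1) // p.1.Prime} => Q p.1.1 p.2)
        ⟨⟨p, by omega⟩, hp⟩)
    · refine inf_le_right.trans ?_
      have h1 := big_prime (h.quot (Q p hp)) hp (by omega) (hpg p hp)
      rw [← commutator_eq_bot_iff_le_centralizer, ← map_commutator_mk, ← map_commutator,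
        Subgroup.map_eq_bot_iff, QuotientGroup.ker_mk'] at h1
      exact h1
  have h1 : D.relIndex ⁅commutator G, commutator G⁆ =
      Nat.card (⁅commutator G, commutator G⁆ : Subgroup G) := by
    rw [← inf_relIndex_right, hDH, relIndex_bot_left]
  rw [← h1, hDdef]
  refine (relIndex_iInf_le _).trans (Finset.prod_le_prod' fun p _ => ?_)
  have := hQn p.1.1 p.2
  have e2 := relIndex_ker (K := ⁅commutator G, commutator G⁆) (QuotientGroup.mk' (Q p.1.1 p.2))
  rw [QuotientGroup.ker_mk'] at e2
  rw [e2, map_commutator, map_commutator_mk]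
  exact hD _ _ (Nat.mul_pos hm hm) fun a b => lemG p.2 (h.quot _) (hpg _ p.2) a b



theorem index_centralizer_normal {G : Type} [Group G] [Finite G] (M : Subgroup G) (hM : M.Normal)
    (k : ℕ) (hk : Nat.card M ≤ k) : (centralizer (M : Set G)).index ≤ k ^ k := by
  have h0 : 0 < Nat.card M := Nat.card_pos
  refine index_centralizer_le (M : Set G) k k (by omega) ?_ ?_
  · rw [← Nat.card_coe_set_eq]
    exact hk
  · intro x hx
    rw [← ncard_conj]
    refine le_trans ?_ hk
    rw [← SetLike.coe_sort_coe, Nat.card_coe_set_eq]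
    refine Set.ncard_le_ncard ?_ (Set.toFinite _)
    intro y hy
    obtain ⟨g, rfl⟩ := isConj_iff.1 (show IsConj x y from hy)
    exact hM.conj_mem x hx g

def NoP (G : Type) [Group G] : Prop :=
  ∀ p : ℕ, p.Prime → ∀ A : Subgroup G, A.Normal → IsPGroup p A → A = ⊥

theorem NoP.subgroup {G : Type} [Group G] [Finite G] (h : NoP G) (N : Subgroup G) (hN : N.Normal) :
    NoP N := by
  intro p hp A hA hpA
  set S : Subgroup N := sSup {B : Subgroup N | B.Normal ∧ IsPGroup p B} with hS
  have hSp : IsPGroup p S := Sylow.sSup_of_normal _ (fun B hB => hB.2) (fun B hB => hB.1)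
  have hSc : S.Characteristic := by
    rw [characteristic_iff_map_le]
    intro φ
    rw [map_le_iff_le_comap]
    refine sSup_le fun B hB => ?_
    rw [← map_le_iff_le_comap]
    refine le_sSup ⟨?_, hB.2.map _⟩
    exact hB.1.map _ φ.surjective
  have h1 := h p hp (S.map N.subtype) inferInstance (hSp.map _)
  rw [map_eq_bot_iff_of_injective _ N.subtype_injective] at h1
  rw [← le_bot_iff, ← h1]
  exact le_sSup ⟨hA, hpA⟩

theorem sylow_map_normal {G : Type} [Group G] [Finite G] (A : Subgroup G) (hA : A.Normal)
    (hnil : Group.IsNilpotent A) {p : ℕ} (hp : p.Prime) (P : Sylow p A) :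
    ((P : Subgroup A).map A.subtype).Normal := by
  have : Fact p.Prime := ⟨hp⟩
  have h1 : (P : Subgroup A).Normal := inferInstance
  have h2 := P.characteristic_of_normal h1
  infer_instance

theorem NoP.abelian {G : Type} [Group G] [Finite G] (h : NoP G) (A : Subgroup G) (hA : A.Normal)
    (hab : ⁅A, A⁆ = ⊥) : A = ⊥ := by
  by_contra hne
  have hc : Nat.card A ≠ 1 := fun hc => hne (card_eq_one.1 hc)
  obtain ⟨p, hp, hdvd⟩ := Nat.exists_prime_and_dvd hc
  have : Fact p.Prime := ⟨hp⟩
  obtain ⟨P⟩ : Nonempty (Sylow p A) := inferInstance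
  have hcomm : ∀ a b : A, a * b = b * a := by
    intro a b
    rw [commutator_eq_bot_iff_le_centralizer] at hab
    ext
    exact (mem_centralizer_iff.1 (hab b.2) a a.2)
  have hnil : Group.IsNilpotent A := by
    let _ : CommGroup A := { (inferInstance : Group A) with mul_comm := hcomm }
    infer_instance
  have h1 := h p hp _ (sylow_map_normal A hA hnil hp P) (P.2.map _)
  rw [map_eq_bot_iff_of_injective _ A.subtype_injective] at h1
  exact P.ne_bot_of_dvd_card hdvd h1

theorem comm_comm_of_XS {G : Type} [Group G] [Finite G]
    (h1 : ∀ x ∈ XS G, ∀ w ∈ commutator G, x * w = w * x) :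
    ⁅commutator G, commutator G⁆ = ⊥ := by
  rw [commutator_eq_bot_iff_le_centralizer]
  conv_lhs => rw [← closure_XS]
  rw [closure_le]
  intro x hx
  rw [SetLike.mem_coe, mem_centralizer_iff]
  intro w hw
  exact (h1 x hx w hw).symm

theorem NoP.exists_XS {G : Type} [Group G] [Finite G] (h : NoP G) (hne : (⊤ : Subgroup G) ≠ ⊥) :
    ∃ x ∈ XS G, ∃ w ∈ commutator G, x * w ≠ w * x := by
  by_contra hcon
  push Not at hcon
  have h1 := h.abelian _ inferInstance (comm_comm_of_XS hcon)
  exact hne (h.abelian ⊤ inferInstance h1)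

theorem commutator_subtype_le {G : Type} [Group G] (M : Subgroup G) {w : M}
    (hw : w ∈ commutator M) : (w : G) ∈ commutator G := by
  have h1 : (commutator M).map M.subtype ≤ commutator G := by
    rw [commutator_def, commutator_def, map_commutator]
    exact commutator_mono le_top le_top
  exact h1 ⟨w, hw, rfl⟩

theorem two_mul_index {G : Type} [Group G] [Finite G] (N : Subgroup G) (hN : N.Normal) (x w : G)
    (hx : ∀ n ∈ N, n * x = x * n) (hw : ∀ n ∈ N, n * w = w * n)
    (hxw : ∀ n ∈ N, w * x = n * (x * w) → n = 1)
    (hne : x * w ≠ w * x) (y : N) :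
    2 * (centralizer {y}).index ≤ (centralizer {x * (y : G)}).index := by
  set C := centralizer {x * (y : G)} with hC
  have h1 : (centralizer {y}).index ≤ C.relIndex N := by
    refine index_le_of_le' ?_
    intro n hn
    rw [mem_subgroupOf, hC, mem_centralizer_singleton_iff] at hn
    rw [mem_centralizer_singleton_iff]
    ext
    have h2 := hx n n.2
    rw [← mul_assoc, h2, mul_assoc, mul_assoc] at hn
    exact mul_left_cancel hn
  have h2 : C.relIndex (C ⊔ N) * (C ⊔ N).index = C.index := relIndex_mul_index le_sup_left
  have h3 : C.relIndex N ≤ C.relIndex (C ⊔ N) :=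
    relIndex_le_of_le_right le_sup_right (index_ne_zero_of_finite (H := C.subgroupOf (C ⊔ N)))
  have h4 : 2 ≤ (C ⊔ N).index := by
    have h5 := index_pos' (C ⊔ N)
    have h6 : (C ⊔ N).index ≠ 1 := by
      rw [Ne, index_eq_one]
      intro htop
      have hwm : w ∈ C ⊔ N := by rw [htop]; trivial
      rw [← SetLike.mem_coe, mul_normal C N] at hwm
      obtain ⟨c, hc, n, hn, hcn⟩ := hwm
      have hcn : c * n = w := hcn
      have hc' : c = w * n⁻¹ := by rw [← hcn]; group
      rw [SetLike.mem_coe, hC, mem_centralizer_singleton_iff, hc'] at hc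
      have hnx := hx n⁻¹ (inv_mem hn)
      have hyw := hw (n⁻¹ * y * n) (mul_mem (mul_mem (inv_mem hn) y.2) hn)
      apply hne
      have hxn := hx (n⁻¹ * y * n) (mul_mem (mul_mem (inv_mem hn) y.2) hn)
      have hxy := hx y y.2
      have h9 : w * x * (n⁻¹ * y * n) = x * y * w := by
        calc w * x * (n⁻¹ * y * n) = w * (x * n⁻¹) * y * n := by group
          _ = (w * n⁻¹ * (x * y)) * n := by rw [← hnx]; group
          _ = x * y * w := by rw [hc]; group
      have hzN : n⁻¹ * y * n ∈ N := mul_mem (mul_mem (inv_mem hn) y.2) hn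
      set z := n⁻¹ * y * n with hz
      have h10 : w * x * z = y * (x * w) := by rw [h9, ← hxy, mul_assoc]
      have h11 : w * x = y * z⁻¹ * (x * w) := by
        have : z⁻¹ * (x * w) = (x * w) * z⁻¹ := by
          have e1 : z * (x * w) = x * w * z := by
            rw [← mul_assoc, hxn, mul_assoc, hyw, mul_assoc]
          rw [inv_mul_eq_iff_eq_mul, ← mul_assoc, e1, mul_inv_cancel_right]
        rw [mul_assoc, this, ← mul_assoc, ← h10, mul_inv_cancel_right]
      have h12 := hxw _ (mul_mem y.2 (inv_mem hzN)) h11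
      rw [h12, one_mul] at h11
      exact h11.symm
    omega
  calc 2 * (centralizer {y}).index ≤ (C ⊔ N).index * C.relIndex (C ⊔ N) :=
        Nat.mul_le_mul h4 (h1.trans h3)
    _ = C.index := by rw [mul_comm, h2]

theorem TP_mul {G : Type} [Group G] {p : ℕ} {M N : Subgroup G}
    (hc : ∀ a ∈ M, ∀ b ∈ N, a * b = b * a) {d e : M} {d' e' : N} (h : TP p d e) (h' : TP p d' e') :
    TP p ((d : G) * d') ((e : G) * e') ∧
      ⁅(d : G) * d', (e : G) * e'⁆ = ((⁅d, e⁆ : M) : G) * ((⁅d', e'⁆ : N) : G) := by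
  obtain ⟨P, hP, h1, h2⟩ := h
  obtain ⟨P', hP', h1', h2'⟩ := h'
  have hcc : ∀ (a : M) (b : N), (a : G) * b = b * a := fun a b => hc a a.2 b b.2
  have hcc' : ∀ (a : M) (b : N) (g : G), (a : G) * (b * g) = b * (a * g) := fun a b g => by
    rw [← mul_assoc, hcc, mul_assoc]
  have hi : (e' : G)⁻¹ = ((e'⁻¹ : N) : G) := rfl
  have hi2 : (d' : G)⁻¹ = ((d'⁻¹ : N) : G) := rfl
  have hj : (e : G)⁻¹ = ((e⁻¹ : M) : G) := rfl
  have hj2 : (d : G)⁻¹ = ((d⁻¹ : M) : G) := rfl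
  refine ⟨⟨P.map M.subtype ⊔ P'.map N.subtype, ?_, ?_, ?_⟩, ?_⟩
  · refine IsPGroup.to_sup_of_normal_left' (hP.map _) (hP'.map _) ?_
    rintro _ ⟨b, hb, rfl⟩
    apply centralizer_le_normalizer
    rw [mem_centralizer_iff]
    rintro _ ⟨a, ha, rfl⟩
    exact hcc a b
  · exact mul_mem (mem_sup_left ⟨d, h1, rfl⟩) (mem_sup_right ⟨d', h1', rfl⟩)
  · have e1 : (e : G) * (e' : G) * ((d : G) * (d' : G)) * ((e : G) * (e' : G))⁻¹ =
        ((e * d * e⁻¹ : M) : G) * ((e' * d' * e'⁻¹ : N) : G) := by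
      push_cast
      rw [mul_inv_rev, hi, hj]
      simp only [mul_assoc]
      rw [← hcc e⁻¹ e'⁻¹, ← hcc' d e', ← hcc' e⁻¹ d', ← hcc' e⁻¹ e']
    rw [e1]
    exact mul_mem (mem_sup_left ⟨_, h2, rfl⟩) (mem_sup_right ⟨_, h2', rfl⟩)
  · simp only [commutatorElement_def]
    push_cast
    rw [mul_inv_rev, mul_inv_rev, hi, hj, hi2, hj2]
    simp only [mul_assoc]
    rw [← hcc e⁻¹ e'⁻¹, ← hcc' e d', ← hcc' d⁻¹ d'⁻¹]
    rw [← hcc' d⁻¹ e', ← hcc' d⁻¹ d',  ← hcc' e⁻¹ d'⁻¹, ← hcc' e⁻¹ e', ← hcc' e⁻¹ d']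

theorem lemD_step : ∃ f : ℕ → ℕ, ∀ (G : Type) [Group G] [Finite G] (m : ℕ), 0 < m →
    ∀ μ : ℕ → ℕ, HYP G μ → (∀ p, μ p ≤ m) → NoP G → (⊤ : Subgroup G) ≠ ⊥ →
    ∃ p : ℕ, p ≤ m ∧ 1 ≤ μ p ∧ ∃ N : Subgroup G, N.Normal ∧ N.index ≤ f m ∧
      HYP N (Function.update μ p (μ p / 2)) := by
  obtain ⟨f, hf⟩ := lemA
  refine ⟨fun m => f m ^ f m, fun G _ _ m hm μ hμ hμm hno hne => ?_⟩
  have hm' : HYP G (fun _ => m) := fun p hp d e h => (hμ p hp d e h).trans (hμm p)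
  obtain ⟨x, hx, w, hw, hxw⟩ := hno.exists_XS hne
  obtain ⟨M, hMn, hMc, hML⟩ := hf G (XS G) m hm XS_conj hm'.XS_le x hx
  have hMne : (⊤ : Subgroup M) ≠ ⊥ := by
    intro h0
    have h1 : ⁅w, x⁆ ∈ M := hML w (by rw [closure_XS]; exact hw)
    have h2 : (⟨⁅w, x⁆, h1⟩ : M) ∈ (⊥ : Subgroup M) := by rw [← h0]; trivial
    rw [mem_bot, Subtype.ext_iff] at h2
    have h3 : ⁅w, x⁆ = 1 := h2
    rw [commutatorElement_eq_one_iff_mul_comm] at h3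
    exact hxw h3.symm
  obtain ⟨x₁, ⟨p, hp, d, e, hde, rfl⟩, w₁, hw₁, hne₁⟩ := (hno.subgroup M hMn).exists_XS hMne
  have hne₁' : ((⁅d, e⁆ : M) : G) * w₁ ≠ w₁ * ((⁅d, e⁆ : M) : G) := fun h => hne₁ (Subtype.ext h)
  have hpm : p ≤ m := by
    by_contra hpm
    obtain ⟨P, hP, h1, h2⟩ := hde
    have h3 := big_prime hm' hp (by omega) (hP.map M.subtype) (commutator_subtype_le M hw₁)
    have h4 : ⁅d, e⁆ ∈ P := by
      have : ⁅d, e⁆ = d * (e * d * e⁻¹)⁻¹ := by simp only [commutatorElement_def]; group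
      rw [this]
      exact P.mul_mem h1 (P.inv_mem h2)
    exact hne₁' (mem_centralizer_iff.1 h3 _ ⟨_, h4, rfl⟩)
  set N : Subgroup G := centralizer (M : Set G) with hN
  have hNn : N.Normal := inferInstance
  have hc : ∀ a ∈ M, ∀ b ∈ N, a * b = b * a := fun a ha b hb => mem_centralizer_iff.1 hb a ha
  have hMN : M ⊓ N = ⊥ := by
    apply hno.abelian _ inferInstance
    rw [commutator_eq_bot_iff_le_centralizer]
    intro a ha
    rw [mem_centralizer_iff]
    intro b hb
    exact hc b hb.1 a ha.2
  refine ⟨p, hpm, ?_, N, hNn, index_centralizer_normal M hMn _ hMc, ?_⟩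
  · exact le_trans (index_pos' _) (hμ p hp _ _ (hde.map M.subtype))
  · intro q hq d' e' hde'
    by_cases hqp : q = p
    · subst hqp
      rw [Function.update_self]
      obtain ⟨h1, h2⟩ := TP_mul hc hde hde'
      have h3 := hμ q hp _ _ h1
      rw [h2] at h3
      have h4 := two_mul_index N hNn ((⁅d, e⁆ : M) : G) w₁
        (fun n hn => (hc _ (⁅d, e⁆ : M).2 n hn).symm) (fun n hn => (hc _ w₁.2 n hn).symm)
        ?_ hne₁' ⁅d', e'⁆
      · omega
      · intro n hn h5
        have h6 : n ∈ M := by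
          have : n = w₁ * ((⁅d, e⁆ : M) : G) * (((⁅d, e⁆ : M) : G) * w₁)⁻¹ := by
            rw [h5, mul_inv_cancel_right]
          rw [this]
          exact M.mul_mem (M.mul_mem w₁.2 (⁅d, e⁆ : M).2)
            (M.inv_mem (M.mul_mem (⁅d, e⁆ : M).2 w₁.2))
        exact hMN.le ⟨h6, hn⟩
    · rw [Function.update_of_ne hqp]
      exact hμ.subgroup N q hq d' e' hde'

theorem lemD_aux : ∃ r : ℕ → ℕ → ℕ, ∀ m : ℕ, 0 < m → ∀ (s : ℕ) (G : Type) [Group G] [Finite G]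
    (μ : ℕ → ℕ), HYP G μ → (∀ p, μ p ≤ m) → ∑ p ∈ Finset.range (m + 1), μ p ≤ s → NoP G →
    Nat.card G ≤ r m s := by
  obtain ⟨f, hf⟩ := lemD_step
  refine ⟨fun m s => (f m + 1) ^ s, fun m hm s => ?_⟩
  induction s with
  | zero =>
    intro G _ _ μ hμ hm' hs hno
    by_cases hne : (⊤ : Subgroup G) = ⊥
    · rw [← card_top, hne, card_bot]; simp
    · obtain ⟨p, hp, h1, -⟩ := hf G m hm μ hμ hm' hno hne
      have := Finset.single_le_sum (f := μ) (fun i _ => Nat.zero_le _)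
        (Finset.mem_range.2 (show p < m + 1 by omega))
      omega
  | succ s ih =>
    intro G _ _ μ hμ hm' hs hno
    by_cases hne : (⊤ : Subgroup G) = ⊥
    · rw [← card_top, hne, card_bot]; exact Nat.one_le_pow _ _ (by omega)
    · obtain ⟨p, hp, h1, N, hN, hNi, hNH⟩ := hf G m hm μ hμ hm' hno hne
      have hmem := Finset.mem_range.2 (show p < m + 1 by omega)
      have h2 := ih N (Function.update μ p (μ p / 2)) hNH ?_ ?_ (hno.subgroup N hN)
      · change _ ≤ (f m + 1) ^ (s + 1)
        rw [← card_mul_index N, pow_succ]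
        exact Nat.mul_le_mul h2 (by omega)
      · intro q
        by_cases hq : q = p
        · subst hq
          rw [Function.update_self]
          have := hm' q
          omega
        · rw [Function.update_of_ne hq]
          exact hm' q
      · refine Nat.le_of_lt_succ (lt_of_lt_of_le ?_ hs)
        refine Finset.sum_lt_sum (fun q _ => ?_) ⟨p, hmem, ?_⟩
        · by_cases hq : q = p
          · subst hq
            rw [Function.update_self]
            omega
          · rw [Function.update_of_ne hq]
        · rw [Function.update_self]
          omega

theorem lemD : ∃ r : ℕ → ℕ, ∀ (G : Type) [Group G] [Finite G] (m : ℕ), 0 < m →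
    HYP G (fun _ => m) → ∃ R : Subgroup G, R.Normal ∧ Group.IsSolvable R ∧ R.index ≤ r m := by
  obtain ⟨r, hr⟩ := lemD_aux
  refine ⟨fun m => r m (∑ p ∈ Finset.range (m + 1), m), fun G _ _ m hm h => ?_⟩
  obtain ⟨R, hR⟩ := (Set.toFinite {R : Subgroup G | R.Normal ∧ Group.IsSolvable R}).exists_maximal
    ⟨⊥, inferInstance, inferInstance⟩
  have hRn : R.Normal := hR.prop.1
  have hRs : Group.IsSolvable R := hR.prop.2
  refine ⟨R, hRn, hRs, ?_⟩
  refine hr m hm _ (G ⧸ R) (fun _ => m) (h.quot R) (fun _ => le_rfl) le_rfl ?_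
  intro p hp A hA hpA
  have : Fact p.Prime := ⟨hp⟩
  have hnil : Group.IsNilpotent A := hpA.isNilpotent
  have hle : R ≤ A.comap (QuotientGroup.mk' R) := by
    intro g hg
    have h1 : QuotientGroup.mk' R g = 1 := (QuotientGroup.eq_one_iff g).2 hg
    rw [mem_comap, h1]
    exact A.one_mem
  have hsol : Group.IsSolvable (A.comap (QuotientGroup.mk' R)) := by
    refine Group.isSolvable_of_ker_le_range (G' := R) (G'' := A) (inclusion hle)
      ((QuotientGroup.mk' R).subgroupComap A) ?_
    intro g hg
    have : (g : G) ∈ R := by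
      rw [MonoidHom.mem_ker, Subtype.ext_iff] at hg
      exact (QuotientGroup.eq_one_iff _).1 hg
    exact ⟨⟨g, this⟩, rfl⟩
  have h1 := hR.le_of_ge (y := A.comap (QuotientGroup.mk' R)) ⟨inferInstance, hsol⟩ hle
  rw [← le_bot_iff]
  intro a ha
  obtain ⟨g, rfl⟩ := QuotientGroup.mk'_surjective R a
  exact (QuotientGroup.eq_one_iff _).2 (h1 ha)



theorem lemH1 : ∃ f : ℕ → ℕ, ∀ (G : Type) [Group G] [Finite G] (m : ℕ), 0 < m →
    HYP G (fun _ => m) → ∃ K L : Subgroup G, K.Normal ∧ L.Normal ∧ Group.IsSolvable K ∧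
      K.index ≤ f m ∧ Nat.card L ≤ f m ∧ K ≤ centralizer (L : Set G) ∧
      ∀ p : ℕ, p.Prime → ∀ A : Subgroup G, A.Normal → IsPGroup p A → A ≤ K →
        ∀ v ∈ A, ∀ w ∈ K, ∀ h ∈ commutator G, ⁅h, ⁅v, w⁆⁆ ∈ L := by
  obtain ⟨r, hr⟩ := lemD
  obtain ⟨c, hc⟩ := lemC
  refine ⟨fun m => r m * ((c m + 1) ^ (m + 1)) *
    ((c m + 1) ^ (m + 1)) ^ ((c m + 1) ^ (m + 1)) + (c m + 1) ^ (m + 1),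
    fun G _ _ m hm h => ?_⟩
  obtain ⟨R, hRn, hRs, hRi⟩ := hr G m hm h
  have hC : ∀ p : ℕ, p.Prime → ∃ U L : Subgroup G, U.Normal ∧ L.Normal ∧
      U.index ≤ c m + 1 ∧ Nat.card L ≤ c m + 1 ∧ ∀ A : Subgroup G, A.Normal → IsPGroup p A →
        ∀ v ∈ A, v ∈ U → ∀ w ∈ U, ∀ h ∈ commutator G, ⁅h, ⁅v, w⁆⁆ ∈ L := by
    intro p hp
    set V : Subgroup G := sSup {B : Subgroup G | B.Normal ∧ IsPGroup p B} with hV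
    have hVp : IsPGroup p V := Sylow.sSup_of_normal _ (fun B hB => hB.2) (fun B hB => hB.1)
    have hVn : V.Normal := by
      refine ⟨fun v hv g => ?_⟩
      have h1 : V ≤ V.comap (MulAut.conj g).toMonoidHom := by
        refine sSup_le fun B hB => ?_
        intro b hb
        rw [mem_comap]
        exact (le_sSup hB : B ≤ V) (hB.1.conj_mem b hb g)
      exact h1 hv
    obtain ⟨U, L, h1, h2, h3, h4, h5⟩ := hc G (XS G) m hm XS_conj h.XS_le V
      (fun d hd e => ⟨p, hp, d, e, TP.of_normal hVn hVp hd e, rfl⟩)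
    refine ⟨U, L, h1, h2, by omega, by omega, fun A hA hAp v hv hvU w hw k hk => ?_⟩
    rw [closure_XS] at h5
    exact h5 v ((le_sSup ⟨hA, hAp⟩ : A ≤ V) hv) hvU w hw k hk
  choose! U L hUn hLn hUi hLc hUL using hC
  set s : Finset ℕ := (Finset.range (m + 1)).filter Nat.Prime with hs
  have hsc : s.card ≤ m + 1 := (Finset.card_filter_le _ _).trans (by simp)
  have hmem : ∀ p ∈ s, p.Prime := fun p hp => (Finset.mem_filter.1 hp).2
  obtain ⟨U0, hU0n, hU0i, hU0⟩ := exists_normal_inf s (c m + 1) (m + 1) (by omega) hsc U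
    (fun p hp => ⟨hUn p (hmem p hp), hUi p (hmem p hp)⟩)
  obtain ⟨L0, hL0n, hL0c, hL0⟩ := exists_normal_sup s (c m + 1) (m + 1) (by omega) hsc
    (fun p B => B = L p) (fun p hp => ⟨L p, hLn p (hmem p hp), hLc p (hmem p hp), rfl⟩)
  have hcn : (centralizer (L0 : Set G)).Normal := inferInstance
  refine ⟨R ⊓ U0 ⊓ centralizer (L0 : Set G), L0, inferInstance, hL0n, ?_, ?_, ?_, inf_le_right, ?_⟩
  · have hle : R ⊓ U0 ⊓ centralizer (L0 : Set G) ≤ R := inf_le_left.trans inf_le_left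
    exact Group.isSolvable_of_isSolvable_injective (inclusion_injective hle)
  · refine le_trans ?_ (Nat.le_add_right _ _)
    refine index_inf_le.trans (Nat.mul_le_mul ?_ (index_centralizer_normal L0 hL0n _ hL0c))
    exact index_inf_le.trans (Nat.mul_le_mul hRi hU0i)
  · exact hL0c.trans (Nat.le_add_left _ _)
  · intro p hp A hAn hAp hAK v hv w hw k hk
    by_cases hpm : p ≤ m
    · have hps : p ∈ s := Finset.mem_filter.2 ⟨Finset.mem_range.2 (by omega), hp⟩
      obtain ⟨L', hL', -, rfl⟩ := hL0 p hps
      exact hL' (hUL p hp A hAn hAp v hv (hU0 p hps (hAK hv).1.2) w (hU0 p hps hw.1.2) k hk)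
    · have h1 := big_prime h hp (by omega) hAp hk
      have h2 : ⁅v, w⁆ ∈ A := by
        have : ⁅v, w⁆ = v * (w * v * w⁻¹)⁻¹ := by simp only [commutatorElement_def]; group
        rw [this]
        exact A.mul_mem hv (A.inv_mem (hAn.conj_mem v hv w))
      have h3 := mem_centralizer_iff.1 h1 _ h2
      rw [commutatorElement_eq_one_iff_mul_comm.2 h3.symm]
      exact L0.one_mem

theorem eq_top_of_sylow {N : Type} [Group N] [Finite N] (T : Subgroup N)
    (h : ∀ p : ℕ, p.Prime → ∃ P : Sylow p N, (P : Subgroup N) ≤ T) : T = ⊤ := by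
  rw [← index_eq_one]
  by_contra hne
  obtain ⟨p, hp, hdvd⟩ := Nat.exists_prime_and_dvd hne
  have : Fact p.Prime := ⟨hp⟩
  obtain ⟨P, hP⟩ := h p hp
  exact P.not_dvd_index (hdvd.trans (index_dvd_of_le hP))

theorem lemH2 {G : Type} [Group G] [Finite G] (K C : Subgroup G) (hC : C.Normal)
    (h : ∀ p : ℕ, p.Prime → ∀ A : Subgroup G, A.Normal → IsPGroup p A → A ≤ K →
        ∀ v ∈ A, ∀ w ∈ K, ⁅v, w⁆ ∈ C) (N : Subgroup G) (hN : N.Normal)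
    (hnil : Group.IsNilpotent N) (hNK : N ≤ K) : ⁅N, K⁆ ≤ C := by
  have h1 : (cmod K C).subgroupOf N = ⊤ := by
    apply eq_top_of_sylow
    intro p hp
    have : Fact p.Prime := ⟨hp⟩
    obtain ⟨P⟩ : Nonempty (Sylow p N) := inferInstance
    refine ⟨P, fun x hx => ?_⟩
    rw [mem_subgroupOf, mem_cmod]
    intro w hw
    rw [← commutatorElement_inv]
    exact C.inv_mem (h p hp _ (sylow_map_normal N hN hnil hp P) (P.2.map _)
      ((map_subtype_le _).trans hNK) x ⟨x, hx, rfl⟩ w hw)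
  rw [commutator_le]
  intro n hn w hw
  have h2 : (⟨n, hn⟩ : N) ∈ (cmod K C).subgroupOf N := by rw [h1]; trivial
  rw [mem_subgroupOf, mem_cmod] at h2
  rw [← commutatorElement_inv]
  exact C.inv_mem (h2 w hw)

theorem lemH3 {G : Type} [Group G] [Finite G] (K L H : Subgroup G) (hK : K.Normal) (hL : L.Normal)
    (hH : H.Normal) (hKL : K ≤ centralizer (L : Set G))
    (h : ∀ N : Subgroup G, N.Normal → Group.IsNilpotent N → N ≤ K → ⁅N, K⁆ ≤ cmod H L) (n : ℕ) :
    ∀ B : Subgroup G, B.Normal → B ≤ K → B ≤ H → (fun B : Subgroup G => ⁅B, B⁆)^[n] B = ⊥ →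
      Group.IsNilpotent B := by
  induction n with
  | zero =>
    intro B _ _ _ hB
    have hB : B = ⊥ := hB
    subst hB
    infer_instance
  | succ n ih =>
    intro B hBn hBK hBH hB
    rw [Function.iterate_succ_apply] at hB
    have hle : ⁅B, B⁆ ≤ B := commutator_le_left B B
    have h1 := ih ⁅B, B⁆ inferInstance (hle.trans hBK) (hle.trans hBH) hB
    have h2 := h ⁅B, B⁆ inferInstance h1 (hle.trans hBK)
    refine (isNilpotent_iff_lowerCentralSeries B).2 ⟨4, ?_⟩
    have h3 : B.lowerCentralSeries 2 ≤ cmod H L := (commutator_mono le_rfl hBK).trans h2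
    have h4 : B.lowerCentralSeries 3 ≤ L := by
      rw [Subgroup.lowerCentralSeries_succ, commutator_le]
      intro a ha b hb
      rw [← commutatorElement_inv]
      exact L.inv_mem (mem_cmod.1 (h3 ha) b (hBH hb))
    rw [Subgroup.lowerCentralSeries_succ, commutator_comm, commutator_eq_bot_iff_le_centralizer]
    exact (hBK.trans hKL).trans (centralizer_le h4)

theorem iterate_derived {G : Type} [Group G] (K : Subgroup G) (n : ℕ) :
    (fun B : Subgroup G => ⁅B, B⁆)^[n] K = (derivedSeries K n).map K.subtype := by
  induction n with
  | zero => simp [← MonoidHom.range_eq_map]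
  | succ n ih => rw [Function.iterate_succ_apply', ih, derivedSeries_succ, map_commutator]

theorem comm_le_sup {G : Type} [Group G] (C A B S T : Subgroup G) [C.Normal] (hA : A ≤ S ⊔ C)
    (hB : B ≤ T ⊔ C) : ⁅A, B⁆ ≤ ⁅S, T⁆ ⊔ C := by
  rw [← QuotientGroup.ker_mk' C, ← Subgroup.map_le_map_iff] at hA hB ⊢
  rw [map_commutator, map_commutator]
  exact commutator_mono hA hB

theorem main_HYP : ∃ f : ℕ → ℕ, ∀ (G : Type) [Group G] [Finite G] (m : ℕ), 0 < m →
    HYP G (fun _ => m) → Nat.card (⁅commutator G, commutator G⁆ : Subgroup G) ≤ f m := by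
  obtain ⟨f1, h1⟩ := lemH1
  obtain ⟨fA, hA⟩ := lemA
  obtain ⟨fF, hF⟩ := lemF
  refine ⟨fun m => fF m * (f1 m * (fA m + 1) ^ f1 m), fun G _ _ m hm h => ?_⟩
  obtain ⟨K, L, hKn, hLn, hKs, hKi, hLc, hKL, hpK⟩ := h1 G m hm h
  have hN : ∀ N : Subgroup G, N.Normal → Group.IsNilpotent N → N ≤ K →
      ⁅N, K⁆ ≤ cmod (commutator G) L := by
    intro N hN hnil hNK
    refine lemH2 K _ inferInstance (fun p hp A hAn hAp hAK v hv w hw => ?_) N hN hnil hNK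
    rw [mem_cmod]
    exact hpK p hp A hAn hAp hAK v hv w hw
  obtain ⟨n, hn⟩ := hKs.solvable
  have hKit : (fun B : Subgroup G => ⁅B, B⁆)^[n] ⁅K, K⁆ = ⊥ := by
    change (fun B : Subgroup G => ⁅B, B⁆)^[n] ((fun B : Subgroup G => ⁅B, B⁆) K) = ⊥
    rw [← Function.iterate_succ_apply, Function.iterate_succ_apply', iterate_derived, hn, Subgroup.map_bot,
      commutator_bot_left]
  have hKnil := lemH3 K L (commutator G) hKn hLn inferInstance hKL hN n ⁅K, K⁆ inferInstance
    (commutator_le_left K K) (commutator_mono le_top le_top) hKit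
  have hKK := hN _ inferInstance hKnil (commutator_le_left K K)
  obtain ⟨X0, hX0, hX0c, hX0K⟩ := exists_small_subset (XS G) K
  rw [closure_XS] at hX0K
  have hfin : X0.Finite := Set.toFinite _
  obtain ⟨L1, hL1n, hL1c, hL1⟩ := exists_normal_sup hfin.toFinset (fA m + 1) (f1 m) (by omega)
    (by rw [← Set.ncard_eq_toFinset_card X0 hfin]; exact hX0c.trans hKi)
    (fun x B => ∀ k ∈ commutator G, ⁅k, x⁆ ∈ B) (by
      intro x hx
      obtain ⟨B, hB1, hB2, hB3⟩ := hA G (XS G) m hm XS_conj h.XS_le x (hX0 (hfin.mem_toFinset.1 hx))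
      rw [closure_XS] at hB3
      exact ⟨B, hB1, by omega, hB3⟩)
  have hL2n : (L ⊔ L1).Normal := inferInstance
  set C := cmod (commutator G) (L ⊔ L1) with hC
  have hCn : C.Normal := inferInstance
  have hX0C : closure X0 ≤ C := by
    rw [closure_le]
    intro x hx
    rw [SetLike.mem_coe, hC, mem_cmod]
    intro k hk
    obtain ⟨B, hB, -, hB'⟩ := hL1 x (hfin.mem_toFinset.2 hx)
    exact le_sup_right (a := L) (hB (hB' k hk))
  have hKC : ⁅⁅K, K⁆, K⁆ ≤ C := hKK.trans (cmod_mono le_sup_left)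
  have hHC : commutator G ≤ K ⊔ C := by
    rw [sup_comm]
    exact hX0K.trans (sup_le_sup_right hX0C K)
  have g2 := comm_le_sup C _ _ _ _ (comm_le_sup C _ _ _ _ hHC hHC) hHC
  have g3 : (commutator G).lowerCentralSeries 2 ≤ C := g2.trans (sup_le hKC le_rfl)
  have g4 : (commutator G).lowerCentralSeries 3 ≤ L ⊔ L1 := by
    rw [Subgroup.lowerCentralSeries_succ, commutator_le]
    intro a ha b hb
    rw [← commutatorElement_inv]
    exact (L ⊔ L1).inv_mem (mem_cmod.1 (g3 ha) b hb)
  have hnil : Group.IsNilpotent (commutator (G ⧸ (L ⊔ L1))) := by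
    refine (isNilpotent_iff_lowerCentralSeries _).2 ⟨3, ?_⟩
    rw [← map_commutator_mk, ← map_lowerCentralSeries, Subgroup.map_eq_bot_iff,
      QuotientGroup.ker_mk']
    exact g4
  have hfin2 := hF _ m hm (h.quot (L ⊔ L1)) hnil
  refine (card_le_card_map_mul _ (L ⊔ L1)).trans (Nat.mul_le_mul ?_ ?_)
  · rw [map_commutator, map_commutator_mk]
    exact hfin2
  · exact (card_sup_le L L1).trans (Nat.mul_le_mul hLc hL1c)

theorem HYP_of {G : Type} [Group G] [Finite G] (m : ℕ) (hm : 0 < m)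
    (h : ∀ x : G, (∃ a b : G, x = a⁻¹ * b⁻¹ * a * b) → IsPrimePow (orderOf x) →
        Nat.card {h : G // IsConj x h} ≤ m) : HYP G (fun _ => m) := by
  rintro p hp d e ⟨P, hP, hd, he⟩
  have : Fact p.Prime := ⟨hp⟩
  have h1 : ⁅d, e⁆ ∈ P := by
    have : ⁅d, e⁆ = d * (e * d * e⁻¹)⁻¹ := by simp only [commutatorElement_def]; group
    rw [this]
    exact P.mul_mem hd (P.inv_mem he)
  obtain ⟨k, hk⟩ := IsPGroup.iff_orderOf.1 hP ⟨_, h1⟩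
  rw [Subgroup.orderOf_mk] at hk
  rw [← card_isConj]
  by_cases hk0 : k = 0
  · rw [hk0, pow_zero, orderOf_eq_one_iff] at hk
    rw [hk, card_isConj]
    have : centralizer {(1 : G)} = ⊤ := by
      rw [eq_top_iff]
      intro g _
      rw [mem_centralizer_singleton_iff]
      simp
    rw [this, index_top]
    exact hm
  · refine h _ ⟨d⁻¹, e⁻¹, by simp [commutatorElement_def]⟩ ?_
    rw [hk]
    exact hp.isPrimePow.pow hk0


end Helpers

/-- Main theorem: if `G` is a finite group in which `|x^G| ≤ m` whenever `x` is a
commutator of prime power order, then `G''` has `m`-bounded order. -/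
theorem second_derived_bounded :
    ∃ f : ℕ → ℕ, ∀ (G : Type) (_ : Group G) (_ : Finite G) (m : ℕ), 0 < m →
      (∀ x : G, (∃ a b : G, x = a⁻¹ * b⁻¹ * a * b) → IsPrimePow (orderOf x) →
        Nat.card {h : G // IsConj x h} ≤ m) →
      Nat.card (derivedSeries G 2) ≤ f m := by
  obtain ⟨f, hf⟩ := main_HYP
  refine ⟨f, fun G _ _ m hm h => ?_⟩
  rw [derivedSeries_succ, derivedSeries_one]
  exact hf G m hm (HYP_of m hm h)
end
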